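/- Let k be any field of characteristic 2, let n ≥ 4, and let G = Q_{2^n} be the generalized quaternion group of order 2^n. Suppose M_0, M_1, M_2, M_3 are finite-dimensional kG-modules such that M_0 is the trivial module k and, for each i = 0, 1, 2, there is a short exact sequence 0 → M_{i+1} → P_i → M_i → 0 of kG-modules with P_i finite-dimensional projective. Then the M_i are pairwise not stably isomorphic endotrivial modules, and there exists a finite-dimensional endotrivial kG-module L such that: (i) L ⊗ L is stably isomorphic to k; (ii) L is not stably isomorphic to any M_i; and (iii) every endotrivial kG-module is stably isomorphic to M_i or to M_i ⊗ L for some i ∈ {0,1,2,3}. In particular, the group of endotrivial modules of Q_{2^n} (the Picard group of StMod(kQ_{2^n})) is isomorphic to C_2 ⊕ C_4. -/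

import Mathlib

open CategoryTheory CategoryTheory.Limits MonoidalCategory

/-- A representation `M` of `G` over `k` is *endotrivial* if it is finite-dimensional over `k`
and its `k`-linear endomorphism module, with the conjugation `G`-action, is isomorphic to the
direct sum of the trivial representation `k` and a projective. -/
def IsEndotrivial {k G : Type} [Field k] [Group G] (M : Rep k G) : Prop :=
  FiniteDimensional k M.V ∧
    ∃ P : Rep k G, Projective P ∧
      Nonempty (Rep.of (M.ρ.linHom M.ρ) ≅ Rep.trivial k G k ⊞ P)

/-- Two representations are *stably isomorphic* if they become isomorphic after adding
projective summands. -/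
def IsStablyIso {k G : Type} [Field k] [Group G] (M N : Rep k G) : Prop :=
  ∃ P Q : Rep k G, Projective P ∧ Projective Q ∧ Nonempty (M ⊞ P ≅ N ⊞ Q)

/-!
Write `q = 2 ^ (n - 2)` and let `z` be the central involution of `G`. A finite-dimensional module
is projective as soon as its restriction to `⟨z⟩` is (Chouinard), and projectivity over `⟨z⟩`
means that the homology of the differential `z - 1` vanishes. Hence `M` is endotrivial exactly
when this homology is one-dimensional, and two endotrivial modules are stably isomorphic exactly
when some morphism between them is nonzero on homology.

Restrict to the cyclic subgroup `⟨θ⟩`, whose group algebra is `k[X] / X ^ (2q)` with `X = θ - 1`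
and `z - 1 = X ^ q`. The homology generator of an endotrivial module can be killed either by `X`
or only modulo homology, and taking a syzygy exchanges these two parities; so it suffices to
classify the even modules. Splitting off projective summands, one may assume that the norm
element of `G` acts as zero. If `m₀` is a generator with `X m₀ = 0`, then `τ` fixes `m₀` up to
a boundary, and a case analysis on that boundary produces one of four canonical homology classes:
an invariant one, the one coming from `Ω² k`, or a class realizing a morphism from the module
`L` of dimension `2q + 1` or from its twist by the automorphism `τ ↦ θ⁻¹ τ`. An invariant
bilinear form on `L` shows `L ⊗ L ≃ k`, and then the twist of `L` is forced to be `Ω² k ⊗ L`.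
-/

namespace EndotrivialQuaternion

/-! ### Commutative algebras with a unipotent generator and an inverting involution -/

/-- The integers `q = 2 ^ (r + 2)`, for which `QuaternionGroup q`, of order `4q`, is a generalized
quaternion group of order at least `16`. -/
class IsQuaternionParameter (q : ℕ) : Prop where
  exists_eq_two_pow : ∃ r, q = 2 ^ (r + 2)

section Parameter

variable (q : ℕ) [hq : IsQuaternionParameter q]
include hq

theorem four_le : 4 ≤ q := by
  obtain ⟨r, rfl⟩ := hq.exists_eq_two_pow
  have := Nat.one_le_two_pow (n := r)
  rw [pow_add]
  omega

theorem add_pow_parameter {A : Type*} [CommRing A] [CharP A 2] (a b : A) :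
    (a + b) ^ q = a ^ q + b ^ q := by
  obtain ⟨r, rfl⟩ := hq.exists_eq_two_pow
  exact add_pow_char_pow a b 2 _

theorem two_mul_half_parameter : 2 * (q / 2) = q := by
  obtain ⟨r, rfl⟩ := hq.exists_eq_two_pow
  rw [pow_succ]
  omega

theorem add_pow_half_parameter {A : Type*} [CommRing A] [CharP A 2] (a b : A) :
    (a + b) ^ (q / 2) = a ^ (q / 2) + b ^ (q / 2) := by
  obtain ⟨r, rfl⟩ := hq.exists_eq_two_pow
  rw [show 2 ^ (r + 2) / 2 = 2 ^ (r + 1) by rw [pow_succ _ (r + 1)]; omega]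
  exact add_pow_char_pow a b 2 _

end Parameter

/-- The structure on a commutative ring `A` carried by the group algebra of the cyclic subgroup
`⟨θ⟩` of order `2q` in `Q_{4q}`: the generator `θ`, its inverse `θ'`, and the involution `conj`
of `A` induced by conjugation with `τ`. -/
structure InvertedCyclic (A : Type*) [CommRing A] (q : ℕ) where
  θ : A
  θ' : A
  conj : A →+* A
  θ_mul_θ' : θ * θ' = 1
  θ_pow : θ ^ (2 * q) = 1
  conj_θ : conj θ = θ'

namespace InvertedCyclic

variable {A : Type*} [CommRing A] {q : ℕ} (D : InvertedCyclic A q)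

/-- The nilpotent element `X = θ - 1`, written `θ + 1` because `2 = 0`. -/
def X : A := D.θ + 1

/-- The conjugate `θ⁻¹ - 1` of `X`. -/
def X' : A := D.θ' + 1

/-- The norm element `∑ i < 2q, θ ^ i` of `⟨θ⟩`, which in characteristic two is `X ^ (2q - 1)`. -/
def norm : A := D.X ^ (2 * q - 1)

theorem conj_θ' : D.conj D.θ' = D.θ := by
  have h : D.θ' * D.conj D.θ' = 1 := by
    simpa [D.conj_θ] using congrArg D.conj D.θ_mul_θ'
  linear_combination D.θ * h - D.conj D.θ' * D.θ_mul_θ'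

theorem conj_X : D.conj D.X = D.X' := by simp [X, X', D.conj_θ]

theorem conj_X' : D.conj D.X' = D.X := by simp [X, X', D.conj_θ']

theorem X'_eq_θ'_mul_X : D.X' = D.θ' * D.X := by
  unfold X X'
  linear_combination -D.θ_mul_θ'

theorem X_eq_θ_mul_X' : D.X = D.θ * D.X' := by
  unfold X X'
  linear_combination -D.θ_mul_θ'

section

variable [hq : IsQuaternionParameter q]
include hq

theorem X_mul_X_pow : D.X * D.X ^ (q - 1) = D.X ^ q := by
  have := four_le q
  rw [← pow_succ']; congr 1; omega

theorem X_mul_X_pow_mul_X_pow : D.X * D.X ^ (q - 1) * D.X ^ (q - 1) = D.norm := by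
  have := four_le q
  rw [← pow_succ', ← pow_add, norm]; congr 1; omega

end

variable [CharP A 2]

theorem θ_eq : D.θ = D.X + 1 := by
  unfold X
  linear_combination -(CharTwo.two_eq_zero (R := A))

theorem θ'_eq : D.θ' = D.X' + 1 := by
  unfold X'
  linear_combination -(CharTwo.two_eq_zero (R := A))

theorem X_add_X' : D.X + D.X' = D.X * D.X' := by
  have := CharTwo.two_eq_zero (R := A); have := D.θ_mul_θ'; have := D.θ_eq; have := D.θ'_eq
  grind

variable [hq : IsQuaternionParameter q]
include hq

theorem θ_pow_q : D.θ ^ q = 1 + D.X ^ q := by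
  rw [X, add_pow_parameter, one_pow]
  linear_combination -(CharTwo.two_eq_zero (R := A))

theorem X_pow_two_mul_q : D.X ^ (2 * q) = 0 := by
  have h := D.θ_pow
  rw [mul_comm, pow_mul, D.θ_pow_q, CharTwo.add_sq, one_pow, ← pow_mul, mul_comm] at h
  linear_combination h

theorem θ'_pow_q : D.θ' ^ q = 1 + D.X ^ q := by
  have h : D.θ ^ q * D.θ' ^ q = 1 := by rw [← mul_pow, D.θ_mul_θ', one_pow]
  have hnil := D.X_pow_two_mul_q
  rw [D.θ_pow_q] at h
  have := CharTwo.two_eq_zero (R := A)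
  rw [mul_comm 2 q, pow_mul] at hnil
  grind

theorem X'_pow_q : D.X' ^ q = D.X ^ q := by
  have hnil := D.X_pow_two_mul_q
  rw [mul_comm 2 q, pow_mul] at hnil
  rw [D.X'_eq_θ'_mul_X, mul_pow, D.θ'_pow_q]
  linear_combination hnil

theorem X_sq_mul_X_pow_mul_X_pow : D.X ^ 2 * D.X ^ (q - 1) * D.X ^ (q - 1) = 0 := by
  have := four_le q
  rw [← D.X_pow_two_mul_q, ← pow_add, ← pow_add]; congr 1; omega

theorem X_mul_norm : D.X * D.norm = 0 := by
  have := four_le q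
  rw [norm, ← pow_succ', ← D.X_pow_two_mul_q]; congr 1; omega

theorem conj_X_pow : D.conj (D.X ^ (q - 1)) = D.θ * D.X ^ (q - 1) + D.norm := by
  have := four_le q
  have h : D.θ' * D.conj (D.X ^ (q - 1)) = D.θ' ^ q * D.X ^ (q - 1) := by
    rw [map_pow, conj_X, X'_eq_θ'_mul_X, mul_pow, ← mul_assoc, ← pow_succ']; congr 2; omega
  rw [D.θ'_pow_q, ← D.X_mul_X_pow] at h
  rw [← D.X_mul_X_pow_mul_X_pow]
  have := D.θ_mul_θ'; have := D.X_sq_mul_X_pow_mul_X_pow; have := D.θ_eq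
  grind

theorem conj_norm : D.conj D.norm = D.norm := by
  rw [← D.X_mul_X_pow_mul_X_pow, map_mul, map_mul, D.conj_X_pow, D.conj_X, D.X'_eq_θ'_mul_X,
    ← D.X_mul_X_pow_mul_X_pow]
  have := D.θ_mul_θ'; have := D.X_sq_mul_X_pow_mul_X_pow; have := D.θ_eq
  grind

theorem X_mul_X'_pow_q : (D.X * D.X') ^ q = 0 := by
  rw [mul_pow, D.X'_pow_q, ← pow_add, ← two_mul, D.X_pow_two_mul_q]

theorem X_mul_X'_pow_mul_X : (D.X * D.X') ^ (q - 1) * D.X = D.norm := by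
  have := four_le q
  have hθ' : D.θ' * D.norm = D.norm := by
    rw [D.θ'_eq, D.X'_eq_θ'_mul_X]
    linear_combination D.θ' * D.X_mul_norm
  have hpow : ∀ j, D.θ' ^ j * D.norm = D.norm := by
    intro j
    induction j with
    | zero => simp
    | succ j ih => rw [pow_succ, mul_assoc, hθ', ih]
  rw [← hpow (q - 1), D.X'_eq_θ'_mul_X, mul_pow, mul_pow, norm,
    show 2 * q - 1 = (q - 1) + (q - 1) + 1 by omega]
  ring

end InvertedCyclic

/-! ### Modules over the ring -/

theorem add_self_eq_zero (A : Type*) [CommRing A] [CharP A 2] {M : Type*} [AddCommGroup M]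
    [Module A M] (m : M) : m + m = 0 := by
  rw [← two_smul A m, CharTwo.two_eq_zero, zero_smul]

namespace InvertedCyclic

variable {A : Type*} [CommRing A] {q : ℕ} (D : InvertedCyclic A q)
  {M : Type*} [AddCommGroup M] [Module A M]

/-- The semilinear operators that make an `A`-module a module over the quaternion group: `S` plays
the role of `τ`, whose square is `θ ^ q`. -/
def IsTauOperator (S : M →ₛₗ[D.conj] M) : Prop :=
  ∀ m, S (S m) = D.θ ^ q • m

/-- The norm element `(1 + τ) ∑ θ ^ i` of the quaternion group annihilates the module. -/
def NormVanishes (S : M →ₛₗ[D.conj] M) : Prop :=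
  ∀ m, S (D.norm • m) = D.norm • m

/-- The operator `θ⁻¹ τ`, which is `τ` composed with an outer automorphism of the quaternion
group. -/
def twist (S : M →ₛₗ[D.conj] M) : M →ₛₗ[D.conj] M := D.θ' • S

/-- The class attached to `S v + v = X • w`: a Toda bracket in the homology
of `X ^ q`. -/
def secondaryClass (S : M →ₛₗ[D.conj] M) (v w : M) : M :=
  S w + D.θ • w + (D.θ * D.X ^ (q - 1)) • v

theorem exists_pow_smul_eq {i j : ℕ} (h : i ≤ j) (y : M) : ∃ z : M, D.X ^ j • y = D.X ^ i • z :=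
  ⟨D.X ^ (j - i) • y, by rw [← mul_smul, ← pow_add, Nat.add_sub_cancel' h]⟩

theorem exists_pow_smul_eq_X_smul {j : ℕ} (h : 1 ≤ j) (y : M) : ∃ z : M, D.X ^ j • y = D.X • z := by
  simpa using D.exists_pow_smul_eq h y

theorem pow_smul_eq_zero_of_le {i j : ℕ} (h : i ≤ j) {y : M} (hy : D.X ^ i • y = 0) :
    D.X ^ j • y = 0 := by
  rw [← Nat.sub_add_cancel h, pow_add, mul_smul, hy, smul_zero]

theorem pow_smul_eq_zero {j : ℕ} (h : 1 ≤ j) {y : M} (hy : D.X • y = 0) : D.X ^ j • y = 0 :=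
  D.pow_smul_eq_zero_of_le h (by rwa [pow_one])

theorem IsTauOperator.twist {D : InvertedCyclic A q} {S : M →ₛₗ[D.conj] M}
    (hS : D.IsTauOperator S) : D.IsTauOperator (D.twist S) := by
  intro m
  rw [InvertedCyclic.twist, LinearMap.smul_apply, LinearMap.smul_apply, map_smulₛₗ, hS,
    D.conj_θ', ← mul_smul, mul_comm D.θ', D.θ_mul_θ', one_smul]

variable [CharP A 2] {D} [hq : IsQuaternionParameter q] {S : M →ₛₗ[D.conj] M}
include hq

theorem IsTauOperator.apply_apply (hS : D.IsTauOperator S) (m : M) :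
    S (S m) = (1 + D.X ^ q) • m := by
  rw [hS, D.θ_pow_q]

theorem NormVanishes.norm_smul_apply (hN : D.NormVanishes S) (m : M) :
    D.norm • S m = D.norm • m := by
  rw [← hN m, map_smulₛₗ, D.conj_norm]

theorem IsTauOperator.secondaryClass_identities (hS : D.IsTauOperator S) {m₀ s v w : M} {a : A}
    (ha : D.conj a = a) (hXm₀ : D.X • m₀ = 0) (hSm₀ : a • S m₀ = a • (m₀ + s))
    (hs : s = D.norm • v) (hv : S v + v = a • m₀ + D.X • w) :
    D.X • (D.secondaryClass S v w + (a * D.X ^ (2 * q - 2)) • v) = 0 ∧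
      S (D.secondaryClass S v w + (a * D.X ^ (2 * q - 2)) • v) +
        (D.secondaryClass S v w + (a * D.X ^ (2 * q - 2)) • v) =
      (1 + a) • s + (a * D.norm) • w := by
  have hq4 := four_le q
  have hSv := congrArg S hv
  simp only [map_add, map_smulₛₗ, hS.apply_apply, ha, hSm₀, D.conj_X] at hSv
  have := CharTwo.two_eq_zero (R := A)
  have hnil := D.X_sq_mul_X_pow_mul_X_pow
  have hinv := D.θ_mul_θ'
  have hθ := D.θ_eq
  have hX' := D.X'_eq_θ'_mul_X
  have hm₀ : D.X ^ (q - 1) • m₀ = 0 := D.pow_smul_eq_zero (by omega) hXm₀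
  have hsq : D.X ^ (2 * q - 2) = D.X ^ (q - 1) * D.X ^ (q - 1) := by
    rw [← pow_add]; congr 1; omega
  simp only [secondaryClass, map_add, map_smulₛₗ, hS.apply_apply, map_mul, D.conj_θ, ha,
    D.conj_X_pow, hsq, ← D.X_mul_X_pow_mul_X_pow, ← D.X_mul_X_pow] at hs hSv ⊢
  generalize D.X ^ (q - 1) = Y at *
  generalize D.X = X at *
  generalize D.X' = X' at *
  generalize D.θ = θ at *
  generalize D.θ' = θ' at *
  generalize S m₀ = Sm₀ at *
  generalize S w = Sw at *
  generalize S v = Sv at *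
  clear hS
  constructor
  · linear_combination (norm := (match_scalars <;> grind)) θ • hSv - θ • hv + (θ * a) • hs
  · linear_combination (norm := (match_scalars <;> grind))
      (θ' * (θ * Y + X * Y * Y) + a * (θ * Y + X * Y * Y) * (θ * Y + X * Y * Y) + 1) • hv
        - hSv + hs + (a * (θ' * (θ + X * Y) + a * (θ * Y + X * Y * Y) * (θ + X * Y))) • hm₀

end InvertedCyclic

namespace InvertedCyclic

section Acyclic

variable {A : Type*} [CommRing A] {q : ℕ} (D : InvertedCyclic A q)

/-- The homology of `X ^ q = θ ^ q - 1` on the `A`-module `M` vanishes. -/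
def IsAcyclic (M : Type*) [AddCommGroup M] [Module A M] : Prop :=
  ∀ m : M, D.X ^ q • m = 0 → ∃ y, m = D.X ^ q • y

variable {D} {M : Type*} [AddCommGroup M] [Module A M] [hq : IsQuaternionParameter q]
include hq

theorem IsAcyclic.exists_eq_norm_smul (h : D.IsAcyclic M) {m : M} (hm : D.X • m = 0) :
    ∃ y, m = D.norm • y := by
  have hq4 := four_le q
  obtain ⟨m₁, rfl⟩ := h m (D.pow_smul_eq_zero (by omega) hm)
  obtain ⟨m₂, hm₂⟩ := h (D.X • m₁) (by rw [smul_comm]; exact hm)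
  have hdiff : D.X ^ q • (m₁ - D.X ^ (q - 1) • m₂) = 0 := by
    apply D.pow_smul_eq_zero (by omega)
    rw [smul_sub, hm₂, ← mul_smul, D.X_mul_X_pow, sub_self]
  refine ⟨m₂, ?_⟩
  rw [smul_sub, sub_eq_zero] at hdiff
  rw [hdiff, ← mul_smul, ← pow_add, norm]
  congr 2; omega

theorem IsAcyclic.exists_eq_X_smul (h : D.IsAcyclic M) {m : M} (hm : D.norm • m = 0) :
    ∃ y, m = D.X • y := by
  have hq4 := four_le q
  obtain ⟨m₁, hm₁⟩ := h (D.X ^ (q - 1) • m) (by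
    rw [← mul_smul, ← pow_add, show q + (q - 1) = 2 * q - 1 by omega, ← norm, hm])
  obtain ⟨m₂, hm₂⟩ := h (m - D.X • m₁) (by
    apply D.pow_smul_eq_zero_of_le (i := q - 1) (by omega)
    rw [smul_sub, hm₁, ← mul_smul (D.X ^ (q - 1)), ← pow_succ, Nat.sub_add_cancel (by omega),
      sub_self])
  obtain ⟨z, hz⟩ := D.exists_pow_smul_eq_X_smul (show 1 ≤ q by omega) m₂
  exact ⟨m₁ + z, by rw [smul_add, ← hz, ← hm₂, add_sub_cancel]⟩

variable [CharP A 2] {S : M →ₛₗ[D.conj] M}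

theorem IsAcyclic.norm_smul_eq_zero (h : D.IsAcyclic M) (hS : D.IsTauOperator S)
    (hN : D.NormVanishes S) (v : M) : D.norm • v = 0 := by
  obtain ⟨w, hw⟩ := h.exists_eq_X_smul (m := S v + v) (by
    rw [smul_add, hN.norm_smul_apply, add_self_eq_zero A])
  obtain ⟨hX, hSκ⟩ := hS.secondaryClass_identities (m₀ := 0) (a := 0) (v := v) (w := w)
    (map_zero _) (smul_zero _) (by simp) rfl (by simpa using hw)
  obtain ⟨y, hy⟩ := h.exists_eq_norm_smul hX
  rw [hy, hN, add_self_eq_zero A] at hSκ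
  simpa using hSκ.symm

theorem IsAcyclic.eq_zero (h : D.IsAcyclic M) (hS : D.IsTauOperator S)
    (hN : D.NormVanishes S) (v : M) : v = 0 := by
  have hX : ∀ v : M, D.X • v = 0 → v = 0 := by
    intro v hv
    obtain ⟨y, rfl⟩ := h.exists_eq_norm_smul hv
    exact h.norm_smul_eq_zero hS hN y
  have hXpow : ∀ j, D.X ^ j • v = 0 → v = 0 := by
    intro j
    induction j with
    | zero => simp
    | succ j ih => exact fun hj => ih (hX _ (by rwa [← mul_smul, ← pow_succ']))
  exact hXpow (2 * q) (by rw [D.X_pow_two_mul_q, zero_smul])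

end Acyclic

section EvenGenerator

variable (k : Type*) {A : Type*} [Field k] [CommRing A] [Algebra k A] {q : ℕ}
  (D : InvertedCyclic A q) {M : Type*} [AddCommGroup M] [Module A M]

/-- The element `m₀`, annihilated by `X`, generates the homology of `X ^ q` as a `k`-line. -/
structure IsEvenGenerator (m₀ : M) : Prop where
  X_smul : D.X • m₀ = 0
  ne_pow_smul : ∀ y, m₀ ≠ D.X ^ q • y
  exists_eq : ∀ m, D.X ^ q • m = 0 → ∃ (c : k) (y : M), m = algebraMap k A c • m₀ + D.X ^ q • y

variable {k D} [hq : IsQuaternionParameter q] {m₀ : M} (h : D.IsEvenGenerator k m₀)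
include hq h

namespace IsEvenGenerator

theorem ne_X_smul (y : M) : m₀ ≠ D.X • y := by
  intro hy
  have hq4 := four_le q
  obtain ⟨c, z, hz⟩ := h.exists_eq y (by
    apply D.pow_smul_eq_zero_of_le (i := 2) (by omega)
    rw [pow_two, mul_smul, ← hy, h.X_smul])
  apply h.ne_pow_smul (D.X • z)
  rw [hy]
  conv_lhs => rw [hz, smul_add, smul_comm, h.X_smul, smul_zero, zero_add, smul_comm]

theorem eq_zero_of_smul_eq_X_smul {c : k} {y : M} (hc : algebraMap k A c • m₀ = D.X • y) :
    c = 0 := by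
  by_contra hne
  apply h.ne_X_smul (algebraMap k A c⁻¹ • y)
  rw [smul_comm, ← hc, ← mul_smul, ← map_mul, inv_mul_cancel₀ hne, map_one, one_smul]

theorem exists_eq_add_norm_smul {m : M} (hm : D.X • m = 0) :
    ∃ (c : k) (y : M), m = algebraMap k A c • m₀ + D.norm • y := by
  have hq4 := four_le q
  obtain ⟨c, m₁, rfl⟩ := h.exists_eq m (D.pow_smul_eq_zero (by omega) hm)
  rw [smul_add, smul_comm, h.X_smul, smul_zero, zero_add, smul_comm] at hm
  obtain ⟨c', m₂, hm₂⟩ := h.exists_eq (D.X • m₁) hm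
  have hc'm₀ : algebraMap k A c' • m₀ = D.X • (m₁ - D.X ^ (q - 1) • m₂) := by
    rw [smul_sub, hm₂, ← mul_smul D.X, D.X_mul_X_pow, add_sub_cancel_right]
  rw [h.eq_zero_of_smul_eq_X_smul hc'm₀, map_zero, zero_smul] at hc'm₀
  have hdiff : D.X ^ q • (m₁ - D.X ^ (q - 1) • m₂) = 0 :=
    D.pow_smul_eq_zero (by omega) hc'm₀.symm
  refine ⟨c, m₂, ?_⟩
  rw [smul_sub, sub_eq_zero] at hdiff
  rw [hdiff, ← mul_smul (D.X ^ q), ← pow_add, norm]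
  congr 3; omega

theorem exists_eq_add_X_smul {m : M} (hm : D.norm • m = 0) :
    ∃ (c : k) (y : M), m = algebraMap k A c • m₀ + D.X • y := by
  have hq4 := four_le q
  obtain ⟨c, m₁, hm₁⟩ := h.exists_eq (D.X ^ (q - 1) • m) (by
    rw [← mul_smul, ← pow_add, show q + (q - 1) = 2 * q - 1 by omega, ← norm, hm])
  obtain ⟨z₁, hz₁⟩ := D.exists_pow_smul_eq_X_smul (show 1 ≤ q by omega) m₁
  obtain ⟨z₂, hz₂⟩ := D.exists_pow_smul_eq_X_smul (show 1 ≤ q - 1 by omega) m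
  have hc : c = 0 := h.eq_zero_of_smul_eq_X_smul (y := z₂ - z₁) (by
    rw [smul_sub, ← hz₁, ← hz₂, hm₁, add_sub_cancel_right])
  rw [hc, map_zero, zero_smul, zero_add] at hm₁
  obtain ⟨c₂, m₂, hm₂⟩ := h.exists_eq (m - D.X • m₁) (by
    apply D.pow_smul_eq_zero_of_le (i := q - 1) (by omega)
    rw [smul_sub, hm₁, ← mul_smul (D.X ^ (q - 1)), ← pow_succ, Nat.sub_add_cancel (by omega),
      sub_self])
  obtain ⟨z, hz⟩ := D.exists_pow_smul_eq_X_smul (show 1 ≤ q by omega) m₂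
  exact ⟨c₂, m₁ + z, by rw [smul_add, ← hz, sub_eq_iff_eq_add.mp hm₂]; abel⟩

end IsEvenGenerator

end EvenGenerator

/-- Elements of `A` with the properties of the structure constants of the exotic endotrivial
module `A × k`, on which `τ` acts by `(x, 0) ↦ (conj x * c', augmentation x)`. -/
structure ExoticElements {A : Type*} [CommRing A] {q : ℕ} (D : InvertedCyclic A q) where
  c : A
  c' : A
  α : A
  β : A
  γ : A
  conj_c' : D.conj c' = c
  conj_α : D.conj α = α
  c_mul_c' : c * c' = 1 + D.X ^ q + D.norm
  c_add_θ_mul_c' : c + D.θ * c' = α * D.X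
  c'_add_one : c' + 1 = D.X * D.X' * γ
  α_eq : α = 1 + D.X * β

/-- There is a nonzero homology class of the form `secondaryClass S v w`; this detects the second
syzygy of the trivial module. -/
def HasSecondaryClass {A : Type*} [CommRing A] {q : ℕ} (D : InvertedCyclic A q) {M : Type*}
    [AddCommGroup M] [Module A M] (S : M →ₛₗ[D.conj] M) : Prop :=
  ∃ v w, S v + v = D.X • w ∧ ∀ y, D.secondaryClass S v w ≠ D.X ^ q • y

namespace ExoticElements

variable {A : Type*} [CommRing A] {q : ℕ} {D : InvertedCyclic A q} (Q : D.ExoticElements)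
  {M : Type*} [AddCommGroup M] [Module A M]

/-- There is a nonzero homology class of the form `S v + c' • v` with `c'` an exotic structure
constant; this detects the exotic endotrivial module. -/
def HasExoticClass (S : M →ₛₗ[D.conj] M) : Prop :=
  ∃ v, D.X • (S v + Q.c' • v) = 0 ∧ ∀ y, S v + Q.c' • v ≠ D.X ^ q • y

theorem α_smul {m : M} (hm : D.X • m = 0) : Q.α • m = m := by
  rw [Q.α_eq, add_smul, one_smul, mul_comm, mul_smul, hm, smul_zero, add_zero]

variable [CharP A 2]

theorem c_smul {m : M} (hm : D.X • m = 0) : Q.c • m = m := by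
  have hc1 := congrArg D.conj Q.c'_add_one
  simp only [map_add, map_one, map_mul, Q.conj_c', D.conj_X, D.conj_X'] at hc1
  have hc : Q.c = 1 + (D.X' * D.conj Q.γ) * D.X := by
    linear_combination hc1 - CharTwo.two_eq_zero (R := A)
  rw [hc, add_smul, mul_smul, hm, smul_zero, one_smul, add_zero]

variable [hq : IsQuaternionParameter q] {S : M →ₛₗ[D.conj] M}
include hq

theorem apply_add_c_smul (hS : D.IsTauOperator S) (y : M) :
    S (S y + Q.c' • y) + Q.c • (S y + Q.c' • y) = D.norm • y := by
  rw [map_add, map_smulₛₗ, hS.apply_apply, Q.conj_c']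
  have := Q.c_mul_c'
  have := CharTwo.two_eq_zero (R := A)
  generalize D.norm = U at *
  generalize D.X ^ q = V at *
  match_scalars <;> grind

end ExoticElements

section ExoticClass

variable {k A : Type*} [Field k] [CommRing A] [Algebra k A] [CharP A 2] {q : ℕ}
  [hq : IsQuaternionParameter q] {D : InvertedCyclic A q}
  {M : Type*} [AddCommGroup M] [Module A M] {S : M →ₛₗ[D.conj] M} {m₀ : M}
include hq

theorem ExoticElements.exists_apply_add_c'_smul (Q : D.ExoticElements) (hS : D.IsTauOperator S)
    (hm₀ : D.X • m₀ = 0) {v w : M} (hv : S m₀ = m₀ + D.norm • v)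
    (hw : S v + v = m₀ + (D.X * D.X) • w) :
    ∃ v', D.X • (S v' + Q.c' • v') = 0 ∧ D.norm • v' = D.norm • v := by
  have := CharTwo.two_eq_zero (R := A)
  have hθ := D.θ_eq
  have hX' := D.X'_eq_θ'_mul_X
  have hinv := D.θ_mul_θ'
  have hcθ := Q.c_add_θ_mul_c'
  have hc'1 := Q.c'_add_one
  have hα := Q.α_smul hm₀
  obtain ⟨w₂, hw₂⟩ : ∃ w₂, w₂ = D.θ • w + Q.γ • v := ⟨_, rfl⟩
  have hSv : S v + Q.c' • v = m₀ + (D.X * D.X') • w₂ := by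
    rw [hw₂]
    linear_combination (norm := (match_scalars <;> grind)) hw
  have hSw₂ : (D.X * D.X') • (S w₂ + Q.c • w₂) = 0 := by
    have hnorm := Q.apply_add_c_smul hS v
    rw [hSv, map_add, map_smulₛₗ, hv, smul_add, Q.c_smul hm₀, map_mul, D.conj_X,
      D.conj_X'] at hnorm
    linear_combination (norm := (match_scalars <;> grind)) hnorm
  refine ⟨Q.α • v + D.X • w₂, ?_, ?_⟩
  · rw [map_add, map_smulₛₗ, map_smulₛₗ, D.conj_X, Q.conj_α]
    linear_combination (norm := (match_scalars <;> grind))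
      (D.X * Q.α) • hSv + D.X • hα + hSw₂ + hm₀
  · have hnorm := D.X_mul_norm
    have hα' := Q.α_eq
    match_scalars <;> grind

theorem IsEvenGenerator.apply_add_c'_smul_ne (h : D.IsEvenGenerator k m₀) (Q : D.ExoticElements)
    (hS : D.IsTauOperator S) (hN : D.NormVanishes S) {v : M}
    (hX : D.X • (S v + Q.c' • v) = 0) (hv : D.norm • v ≠ 0) (y : M) :
    S v + Q.c' • v ≠ D.X ^ q • y := by
  intro hy
  have hq4 := four_le q
  obtain ⟨l, z, hz⟩ := h.exists_eq_add_norm_smul hX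
  have hl : l = 0 := by
    obtain ⟨y₁, hy₁⟩ := D.exists_pow_smul_eq_X_smul (show 1 ≤ q by omega) y
    obtain ⟨z₁, hz₁⟩ := D.exists_pow_smul_eq_X_smul (show 1 ≤ 2 * q - 1 by omega) z
    apply h.eq_zero_of_smul_eq_X_smul (y := y₁ - z₁)
    rw [smul_sub, ← hy₁, ← hz₁, ← hy, hz, norm, add_sub_cancel_right]
  have hnorm := Q.apply_add_c_smul hS v
  rw [Q.c_smul hX, hz, hl, map_zero, zero_smul, zero_add, hN, add_self_eq_zero A] at hnorm
  exact hv hnorm.symm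

theorem IsEvenGenerator.hasExoticClass (h : D.IsEvenGenerator k m₀) (Q : D.ExoticElements)
    (hS : D.IsTauOperator S) (hN : D.NormVanishes S) {v w : M} (hv : S m₀ = m₀ + D.norm • v)
    (hv₀ : D.norm • v ≠ 0) (hw : S v + v = m₀ + (D.X * D.X) • w) : Q.HasExoticClass S := by
  obtain ⟨v', hX, hv'⟩ := Q.exists_apply_add_c'_smul hS h.X_smul hv hw
  exact ⟨v', hX, h.apply_add_c'_smul_ne Q hS hN hX (by rwa [hv'])⟩

end ExoticClass

section Classification

variable {k A : Type*} [Field k] [CommRing A] [Algebra k A] {q : ℕ} {D : InvertedCyclic A q}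
  {M : Type*} [AddCommGroup M] [Module A M] {S : M →ₛₗ[D.conj] M} {m₀ : M}

theorem eq_zero_of_algebraMap_smul_eq_zero {c : k} (hc : c ≠ 0) {m : M}
    (h : algebraMap k A c • m = 0) : m = 0 := by
  rw [← one_smul A m, ← map_one (algebraMap k A), ← inv_mul_cancel₀ hc, map_mul, mul_smul, h,
    smul_zero]

theorem apply_eq_of_eq_add_add_X_smul
    (hconj : ∀ c : k, D.conj (algebraMap k A c) = algebraMap k A c) {μ ν : k} {v w w₁ : M}
    (hv : S m₀ = m₀ + D.norm • v)
    (hw₁ : w = algebraMap k A μ • v + algebraMap k A ν • m₀ + D.X • w₁) :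
    S w = algebraMap k A μ • S v + algebraMap k A ν • (m₀ + D.norm • v) + D.X' • S w₁ := by
  rw [hw₁, map_add, map_add, map_smulₛₗ, map_smulₛₗ, map_smulₛₗ, hconj, hconj, hv, D.conj_X]

variable [CharP A 2] [hq : IsQuaternionParameter q]
include hq

theorem IsEvenGenerator.two_eq_zero (h : D.IsEvenGenerator k m₀) : (2 : k) = 0 :=
  h.eq_zero_of_smul_eq_X_smul (y := 0) (by
    rw [map_ofNat, CharTwo.two_eq_zero, zero_smul, smul_zero])

theorem IsEvenGenerator.exists_eq_add_add_X_smul (h : D.IsEvenGenerator k m₀) {a l : k} {v w : M}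
    (ha : a ≠ 0) (hl : algebraMap k A l • D.norm • v =
      (1 + algebraMap k A a) • D.norm • v + (algebraMap k A a * D.norm) • w) :
    ∃ (μ ν : k) (w₁ : M), a * μ = l + 1 + a ∧
      w = algebraMap k A μ • v + algebraMap k A ν • m₀ + D.X • w₁ := by
  obtain ⟨μ, hμ⟩ : ∃ μ : k, a * μ = l + 1 + a := ⟨(l + 1 + a) / a, by field_simp⟩
  have hμA := congrArg (algebraMap k A) hμ
  simp only [map_mul, map_add, map_one] at hμA
  have hnorm : D.norm • (w - algebraMap k A μ • v) = 0 := by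
    apply eq_zero_of_algebraMap_smul_eq_zero (A := A) ha
    have := CharTwo.two_eq_zero (R := A)
    generalize D.norm = U at *
    linear_combination (norm := (match_scalars <;> grind)) -hl
  obtain ⟨ν, w₁, hw₁⟩ := h.exists_eq_add_X_smul hnorm
  exact ⟨μ, ν, w₁, hμ, by rw [sub_eq_iff_eq_add.mp hw₁]; abel⟩

section

variable (hconj : ∀ c : k, D.conj (algebraMap k A c) = algebraMap k A c)
  (h : D.IsEvenGenerator k m₀) (hS : D.IsTauOperator S) (hN : D.NormVanishes S)
include hconj h hS hN

theorem IsEvenGenerator.exists_apply_eq_add_norm_smul : ∃ v, S m₀ = m₀ + D.norm • v := by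
  have hq4 := four_le q
  obtain ⟨c, y, hy⟩ := h.exists_eq_add_norm_smul (m := S m₀) (by
    rw [← D.conj_X', ← map_smulₛₗ, D.X'_eq_θ'_mul_X, mul_smul, h.X_smul, smul_zero, map_zero])
  have hSS := congrArg S hy
  rw [hS.apply_apply, map_add, hN, map_smulₛₗ, hconj, hy, add_smul,
    D.pow_smul_eq_zero (by omega) h.X_smul, one_smul, add_zero] at hSS
  obtain ⟨z, hz⟩ := D.exists_pow_smul_eq_X_smul (show 1 ≤ 2 * q - 1 by omega) y
  rw [norm, hz] at hSS
  have hc2 : c * c - 1 = 0 := by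
    apply h.eq_zero_of_smul_eq_X_smul (y := -(algebraMap k A c • z + z))
    rw [map_sub, map_mul, map_one]
    linear_combination (norm := module) -hSS
  have hc : c = 1 := by
    have : (c - 1) ^ 2 = 0 := by linear_combination hc2 + (1 - c) * h.two_eq_zero
    exact sub_eq_zero.mp (pow_eq_zero_iff two_ne_zero |>.mp this)
  exact ⟨y, by rw [hy, hc, map_one, one_smul]⟩

variable {a : k} {v w : M} (hv : S m₀ = m₀ + D.norm • v)
  (hw : S v + v = algebraMap k A a • m₀ + D.X • w)
include hv hw

theorem IsEvenGenerator.exists_secondaryClass_eq : ∃ (l : k) (y : M),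
    D.secondaryClass S v w + (algebraMap k A a * D.X ^ (2 * q - 2)) • v =
      algebraMap k A l • m₀ + D.norm • y ∧
    algebraMap k A l • D.norm • v =
      (1 + algebraMap k A a) • D.norm • v + (algebraMap k A a * D.norm) • w := by
  obtain ⟨hX, hSκ⟩ := hS.secondaryClass_identities (hconj a) h.X_smul (by rw [hv]) rfl hw
  obtain ⟨l, y, hy⟩ := h.exists_eq_add_norm_smul hX
  refine ⟨l, y, hy, ?_⟩
  rw [← hSκ, hy, map_add, hN, map_smulₛₗ, hconj, hv]
  have := CharTwo.two_eq_zero (R := A)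
  match_scalars <;> grind

theorem IsEvenGenerator.hasSecondaryClass (hv₀ : D.norm • v ≠ 0) (ha : a = 0) :
    D.HasSecondaryClass S := by
  have hq4 := four_le q
  obtain ⟨l, y, hy, hl⟩ := h.exists_secondaryClass_eq hconj hS hN hv hw
  simp only [ha, map_zero, zero_smul, zero_mul, zero_add, add_zero, one_smul] at hw hy hl
  refine ⟨v, w, hw, fun z hz => hv₀ ?_⟩
  rw [hz] at hy
  obtain ⟨y₁, hy₁⟩ := D.exists_pow_smul_eq_X_smul (show 1 ≤ 2 * q - 1 by omega) y
  obtain ⟨z₁, hz₁⟩ := D.exists_pow_smul_eq_X_smul (show 1 ≤ q by omega) z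
  have hl₀ : l = 0 := h.eq_zero_of_smul_eq_X_smul (y := z₁ - y₁) (by
    rw [smul_sub, ← hz₁, ← hy₁, hy, norm, add_sub_cancel_right])
  rw [← hl, hl₀, map_zero, zero_smul]

end

theorem IsEvenGenerator.eq_mul_of_eq_add (h : D.IsEvenGenerator k m₀) {a l μ ν : k}
    {v w w₁ y : M} (hw : S v + v = algebraMap k A a • m₀ + D.X • w)
    (hy : D.secondaryClass S v w + (algebraMap k A a * D.X ^ (2 * q - 2)) • v =
      algebraMap k A l • m₀ + D.norm • y)
    (hw₁ : w = algebraMap k A μ • v + algebraMap k A ν • m₀ + D.X • w₁)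
    (hSw : S w = algebraMap k A μ • S v + algebraMap k A ν • (m₀ + D.norm • v) + D.X' • S w₁) :
    l = μ * a := by
  have hq4 := four_le q
  have := CharTwo.two_eq_zero (R := A)
  have hθ := D.θ_eq
  have hX' := D.X'_eq_θ'_mul_X
  have hinv := D.θ_mul_θ'
  obtain ⟨v₁, hv₁⟩ := D.exists_pow_smul_eq (show 2 ≤ q - 1 by omega) v
  obtain ⟨v₂, hv₂⟩ := D.exists_pow_smul_eq (show 2 ≤ 2 * q - 2 by omega) v
  obtain ⟨v₃, hv₃⟩ := D.exists_pow_smul_eq (show 2 ≤ 2 * q - 1 by omega) v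
  obtain ⟨y₁, hy₁⟩ := D.exists_pow_smul_eq (show 2 ≤ 2 * q - 1 by omega) y
  rw [secondaryClass, mul_smul D.θ, mul_smul (algebraMap k A a), norm, hv₁, hv₂, hy₁] at hy
  rw [norm, hv₃] at hSw
  refine sub_eq_zero.mp (h.eq_zero_of_smul_eq_X_smul (y := (algebraMap k A μ + 1) • w + w₁ +
    (algebraMap k A ν * D.X) • v₃ + D.θ' • S w₁ + (D.θ * D.X) • v₁ +
    (algebraMap k A a * D.X) • v₂ - D.X • y₁) ?_)
  rw [map_sub, map_mul]
  linear_combination (norm := (match_scalars <;> grind)) -hy + hSw + hw₁ + algebraMap k A μ • hw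

theorem IsEvenGenerator.mul_add_one_eq_zero (h : D.IsEvenGenerator k m₀) (hN : D.NormVanishes S)
    {l ν : k} {v w w₁ y : M} (hv₀ : D.norm • v ≠ 0) (hw : S v + v = m₀ + D.X • w)
    (hy : D.secondaryClass S v w + D.X ^ (2 * q - 2) • v = algebraMap k A l • m₀ + D.norm • y)
    (hw₁ : w = algebraMap k A l • v + algebraMap k A ν • m₀ + D.X • w₁)
    (hSw : S w = algebraMap k A l • S v + algebraMap k A ν • (m₀ + D.norm • v) + D.X' • S w₁) :
    l * (l + 1) = 0 := by
  have hq4 := four_le q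
  by_contra hne
  refine hv₀ (eq_zero_of_algebraMap_smul_eq_zero (A := A) hne ?_)
  rw [map_mul, map_add, map_one]
  have := CharTwo.two_eq_zero (R := A)
  have hθ := D.θ_eq
  have hX' := D.X'_eq_θ'_mul_X
  have hinv := D.θ_mul_θ'
  have hUy := congrArg (fun m => D.X ^ (2 * q - 2) • m) hy
  have hUX : D.norm = D.X ^ (2 * q - 2) * D.X := by rw [norm, ← pow_succ]; congr 1; omega
  have hUXX : D.X ^ (2 * q - 2) * D.X ^ 2 = 0 := by
    rw [← pow_add, ← D.X_pow_two_mul_q]; congr 1; omega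
  have hUY : D.X ^ (2 * q - 2) * D.X ^ (q - 1) = 0 := by
    rw [← pow_add, show 2 * q - 2 + (q - 1) = 2 * q + (q - 3) by omega, pow_add,
      D.X_pow_two_mul_q, zero_mul]
  have hUU : D.X ^ (2 * q - 2) * D.X ^ (2 * q - 2) = 0 := by
    rw [← pow_add, show 2 * q - 2 + (2 * q - 2) = 2 * q + (2 * q - 4) by omega, pow_add,
      D.X_pow_two_mul_q, zero_mul]
  have hUm₀ : D.X ^ (2 * q - 2) • m₀ = 0 := D.pow_smul_eq_zero (by omega) h.X_smul
  have hUw₁ := hN.norm_smul_apply w₁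
  simp only [hUX, secondaryClass] at *
  generalize D.X ^ (2 * q - 2) = U at *
  generalize D.X ^ (q - 1) = Y at *
  linear_combination (norm := (match_scalars <;> grind)) hUy - U • hSw - U • hw₁ -
    (U * algebraMap k A l) • hw - (U * (algebraMap k A l + 1) * D.X) • hw₁ - D.θ' • hUw₁ +
    (algebraMap k A l * algebraMap k A ν * D.X + algebraMap k A ν * D.X) • hUm₀

theorem IsEvenGenerator.exists_apply_add_self_eq (h : D.IsEvenGenerator k m₀)
    (hconj : ∀ c : k, D.conj (algebraMap k A c) = algebraMap k A c) (hS : D.IsTauOperator S)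
    (hN : D.NormVanishes S) {a : k} {v w : M} (hv : S m₀ = m₀ + D.norm • v)
    (hv₀ : D.norm • v ≠ 0) (hw : S v + v = algebraMap k A a • m₀ + D.X • w) (ha : a ≠ 0) :
    ∃ (l : k) (w₁ : M), l * (l + 1) = 0 ∧
      S v + v = m₀ + (algebraMap k A l * D.X) • v + (D.X * D.X) • w₁ := by
  obtain ⟨l, y, hy, hl⟩ := h.exists_secondaryClass_eq hconj hS hN hv hw
  obtain ⟨μ, ν, w₁, hμ, hw₁⟩ := h.exists_eq_add_add_X_smul ha hl
  have hSw := apply_eq_of_eq_add_add_X_smul hconj hv hw₁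
  obtain rfl : l = μ * a := h.eq_mul_of_eq_add hw hy hw₁ hSw
  obtain rfl : a = 1 := by linear_combination -hμ - h.two_eq_zero
  simp only [map_one, one_smul, one_mul, mul_one] at hw hy
  refine ⟨μ, w₁, h.mul_add_one_eq_zero hN hv₀ hw hy hw₁ hSw, ?_⟩
  linear_combination (norm := (match_scalars <;> grind)) hw + D.X • hw₁ +
    algebraMap k A ν • h.X_smul

theorem NormVanishes.twist (hN : D.NormVanishes S) : D.NormVanishes (D.twist S) := by
  intro m
  rw [InvertedCyclic.twist, LinearMap.smul_apply, hN, D.θ'_eq, add_smul, one_smul,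
    D.X'_eq_θ'_mul_X, mul_smul, ← mul_smul D.X, D.X_mul_norm, zero_smul, smul_zero, zero_add]

theorem IsEvenGenerator.classification (h : D.IsEvenGenerator k m₀) (Q : D.ExoticElements)
    (hconj : ∀ c : k, D.conj (algebraMap k A c) = algebraMap k A c) (hS : D.IsTauOperator S)
    (hN : D.NormVanishes S) :
    S m₀ = m₀ ∨ D.HasSecondaryClass S ∨ Q.HasExoticClass S ∨ Q.HasExoticClass (D.twist S) := by
  obtain ⟨v, hv⟩ := h.exists_apply_eq_add_norm_smul hconj hS hN
  by_cases hv₀ : D.norm • v = 0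
  · left; rw [hv, hv₀, add_zero]
  right
  obtain ⟨a, w, hw⟩ := h.exists_eq_add_X_smul (m := S v + v) (by
    rw [smul_add, hN.norm_smul_apply, add_self_eq_zero A])
  by_cases ha : a = 0
  · exact .inl (h.hasSecondaryClass hconj hS hN hv hw hv₀ ha)
  right
  obtain ⟨l, w₁, hl, hw₁⟩ := h.exists_apply_add_self_eq hconj hS hN hv hv₀ hw ha
  rcases mul_eq_zero.mp hl with hl | hl
  · exact .inl (h.hasExoticClass Q hS hN hv hv₀ (w := w₁) (by simpa [hl] using hw₁))
  · right
    obtain rfl : l = 1 := by linear_combination hl - h.two_eq_zero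
    refine h.hasExoticClass Q hS.twist hN.twist (v := v) (w := D.θ' • w₁) ?_ hv₀ ?_
    · rw [InvertedCyclic.twist, LinearMap.smul_apply, hv, D.θ'_eq, add_smul, one_smul,
        D.X'_eq_θ'_mul_X, mul_smul, smul_add D.X, h.X_smul, ← mul_smul D.X, D.X_mul_norm,
        zero_smul, add_zero, smul_zero, zero_add]
    · have := CharTwo.two_eq_zero (R := A)
      have hθ' := D.θ'_eq
      have hX' := D.X'_eq_θ'_mul_X
      rw [map_one] at hw₁
      rw [InvertedCyclic.twist, LinearMap.smul_apply]
      linear_combination (norm := (match_scalars <;> grind)) D.θ' • hw₁ + D.θ' • h.X_smul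

end Classification

section Exotic

variable {A : Type*} [CommRing A] {q : ℕ} (D : InvertedCyclic A q)

/-- The `conj`-invariant element `1 + X ^ p + (X X') ^ (p - 1) X`, where `q = 2p`, the common part
of the two exotic structure constants. -/
def exoticα : A := 1 + (D.X ^ (q / 2) + (D.X * D.X') ^ (q / 2 - 1) * D.X)

/-- The cofactor of `X` in `exoticα - 1`. -/
def exoticβ : A := D.X ^ (q / 2 - 1) + (D.X * D.X') ^ (q / 2 - 1)

/-- The exotic structure constant whose conjugate is `exoticC'`. -/
def exoticC : A := D.exoticα + (D.X * D.X') ^ (q - 2) * D.X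

/-- The exotic structure constant whose conjugate is `exoticC`. -/
def exoticC' : A := D.exoticα + (D.X * D.X') ^ (q - 2) * D.X'

section

variable [CharP A 2]

theorem exoticC_add_θ_mul_exoticC' : D.exoticC + D.θ * D.exoticC' = D.exoticα * D.X := by
  have hθ := D.θ_eq
  have hX := D.X_eq_θ_mul_X'
  have := CharTwo.two_eq_zero (R := A)
  rw [exoticC, exoticC']
  grind

end

variable [hq : IsQuaternionParameter q]
include hq

theorem exoticα_eq : D.exoticα = 1 + D.X * D.exoticβ := by
  have hq4 := four_le q
  rw [exoticα, exoticβ, mul_add, ← pow_succ', Nat.sub_add_cancel (by omega), mul_comm D.X (_ ^ _)]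

variable [CharP A 2]

theorem conj_exoticα : D.conj D.exoticα = D.exoticα := by
  have hq4 := four_le q
  have hadd := add_pow_half_parameter q D.X D.X'
  have hpow : (D.X * D.X') ^ (q / 2) = (D.X * D.X') ^ (q / 2 - 1) * (D.X + D.X') := by
    rw [D.X_add_X', ← pow_succ, Nat.sub_add_cancel (by omega)]
  rw [D.X_add_X', hpow] at hadd
  simp only [exoticα, map_add, map_one, map_mul, map_pow, D.conj_X, D.conj_X', mul_comm D.X' D.X]
  linear_combination -hadd + ((D.X * D.X') ^ (q / 2 - 1) * D.X' - D.X ^ (q / 2)) *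
    (CharTwo.two_eq_zero (R := A))

theorem conj_exoticC' : D.conj D.exoticC' = D.exoticC := by
  simp only [exoticC, exoticC', map_add, map_mul, map_pow, D.conj_exoticα, D.conj_X, D.conj_X',
    mul_comm D.X' D.X]

theorem norm_mul_exoticβ : D.norm * D.exoticβ = 0 := by
  have hq4 := four_le q
  have hβ : D.exoticβ = D.X * (D.X ^ (q / 2 - 2) + (D.X * D.X') ^ (q / 2 - 2) * D.X') := by
    rw [exoticβ, show q / 2 - 1 = q / 2 - 2 + 1 by omega, pow_succ, pow_succ]
    ring
  rw [hβ, ← mul_assoc, mul_comm D.norm, D.X_mul_norm, zero_mul]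

theorem exoticα_sq : D.exoticα ^ 2 = 1 + D.X ^ q + (D.X * D.X') ^ (q - 2) * D.X ^ 2 := by
  have hhalf := two_mul_half_parameter q
  rw [exoticα, CharTwo.add_sq, CharTwo.add_sq, one_pow, ← pow_mul, mul_pow, ← pow_mul, ← add_assoc]
  congr <;> omega

theorem exoticC_mul_exoticC' : D.exoticC * D.exoticC' = 1 + D.X ^ q + D.norm := by
  have hq4 := four_le q
  have hnorm : (D.X * D.X') ^ (q - 2) * (D.X * D.X') * D.X = D.norm := by
    rw [← D.X_mul_X'_pow_mul_X, ← pow_succ]; congr 3; omega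
  have hzero : (D.X * D.X') ^ (q - 2) * ((D.X * D.X') ^ (q - 2) * (D.X * D.X')) = 0 := by
    rw [← pow_succ, ← pow_add, show q - 2 + (q - 2 + 1) = q + (q - 3) by omega, pow_add,
      D.X_mul_X'_pow_q, zero_mul]
  have hα := D.exoticα_eq
  have hadd := D.X_add_X'
  have hβ := D.norm_mul_exoticβ
  have hsq := D.exoticα_sq
  rw [exoticC, exoticC', ← hnorm] at *
  have := CharTwo.two_eq_zero (R := A)
  generalize D.exoticα = α at *
  generalize (D.X * D.X') ^ (q - 2) = V at *
  grind

/-- The exotic elements built from the square root `X ^ (q / 2)` of `X ^ q = θ ^ q - 1`. -/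
def exoticElements : D.ExoticElements where
  c := D.exoticC
  c' := D.exoticC'
  α := D.exoticα
  β := D.exoticβ
  γ := D.X ^ (q / 2 - 2) * D.θ + (D.X * D.X') ^ (q / 2 - 2) * D.X + (D.X * D.X') ^ (q - 3) * D.X'
  conj_c' := D.conj_exoticC'
  conj_α := D.conj_exoticα
  c_mul_c' := D.exoticC_mul_exoticC'
  c_add_θ_mul_c' := D.exoticC_add_θ_mul_exoticC'
  c'_add_one := by
    have hq4 := four_le q
    have hX := D.X_eq_θ_mul_X'
    rw [exoticC', exoticα, show q - 2 = q - 3 + 1 by omega, pow_succ,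
      show q / 2 - 1 = q / 2 - 2 + 1 by omega, pow_succ (D.X * D.X'),
      show q / 2 = q / 2 - 2 + 2 by omega, pow_add D.X]
    simp only [Nat.add_sub_cancel]
    linear_combination CharTwo.two_eq_zero (R := A) + D.X ^ (q / 2 - 2) * D.X * hX
  α_eq := D.exoticα_eq

end Exotic
end InvertedCyclic

/-! ### The group algebra of the cyclic subgroup -/

instance IsQuaternionParameter.neZero (q : ℕ) [IsQuaternionParameter q] : NeZero q :=
  ⟨by have := four_le q; omega⟩

instance IsQuaternionParameter.neZero_two_mul (q : ℕ) [IsQuaternionParameter q] : NeZero (2 * q) :=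
  ⟨by have := four_le q; omega⟩

/-- The group algebra over `k` of the cyclic group of order `2q`. -/
abbrev CyclicAlgebra (k : Type) [Field k] (q : ℕ) : Type :=
  MonoidAlgebra k (Multiplicative (ZMod (2 * q)))

namespace CyclicAlgebra
open MonoidAlgebra

variable (k : Type) [Field k] (q : ℕ)

theorem single_pow_natCast (i : ℕ) :
    (single (Multiplicative.ofAdd (1 : ZMod (2 * q))) 1 : CyclicAlgebra k q) ^ i =
      single (Multiplicative.ofAdd (i : ZMod (2 * q))) 1 := by
  rw [single_pow, one_pow, ← ofAdd_nsmul, nsmul_one]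

/-- The generator `θ` of the cyclic group, its inverse, and the involution of the group algebra
inverting the group. -/
noncomputable def data : InvertedCyclic (CyclicAlgebra k q) q where
  θ := single (Multiplicative.ofAdd 1) 1
  θ' := single (Multiplicative.ofAdd (-1)) 1
  conj := mapDomainRingHom k invMonoidHom
  θ_mul_θ' := by rw [single_mul_single, ← ofAdd_add]; simp [one_def]
  θ_pow := by rw [single_pow_natCast, ZMod.natCast_self, ofAdd_zero, ← one_def]
  conj_θ := by simp

theorem θ_eq_single : (data k q).θ = single (Multiplicative.ofAdd 1) 1 := rfl

theorem θ_pow_q_eq_single : (data k q).θ ^ q =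
    single (Multiplicative.ofAdd (q : ZMod (2 * q))) 1 :=
  single_pow_natCast k q q

theorem conj_single (g : Multiplicative (ZMod (2 * q))) (c : k) :
    (data k q).conj (single g c) = single g⁻¹ c := by
  simp [data]

theorem conj_algebraMap (c : k) :
    (data k q).conj (algebraMap k (CyclicAlgebra k q) c) = algebraMap k _ c := by
  rw [Algebra.algebraMap_eq_smul_one, one_def, smul_single, conj_single, inv_one]

theorem conj_smul (c : k) (a : CyclicAlgebra k q) :
    (data k q).conj (c • a) = c • (data k q).conj a := by
  rw [Algebra.smul_def, map_mul, conj_algebraMap, Algebra.smul_def]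

theorem conj_conj (a : CyclicAlgebra k q) : (data k q).conj ((data k q).conj a) = a := by
  induction a using MonoidAlgebra.induction_linear with
  | zero => simp
  | add a b ha hb => simp only [map_add, ha, hb]
  | single g c => rw [conj_single, conj_single, inv_inv]

/-- The augmentation of the group algebra. -/
noncomputable def augmentation : CyclicAlgebra k q →ₐ[k] k := MonoidAlgebra.lift k k _ 1

theorem augmentation_single (g : Multiplicative (ZMod (2 * q))) (c : k) :
    augmentation k q (single g c) = c := by
  simp [augmentation]

theorem augmentation_θ : augmentation k q (data k q).θ = 1 := by
  rw [θ_eq_single, augmentation_single]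

theorem augmentation_conj (a : CyclicAlgebra k q) :
    augmentation k q ((data k q).conj a) = augmentation k q a := by
  induction a using MonoidAlgebra.induction_linear with
  | zero => simp
  | add a b ha hb => rw [map_add, map_add, ha, hb, map_add]
  | single g c => rw [conj_single, augmentation_single, augmentation_single]

theorem single_eq_θ_pow [NeZero (2 * q)] (g : Multiplicative (ZMod (2 * q))) :
    (single g 1 : CyclicAlgebra k q) = (data k q).θ ^ g.toAdd.val := by
  rw [θ_eq_single, single_pow_natCast, ZMod.natCast_val, ZMod.cast_id]
  rfl

section CharTwo

variable [CharP k 2]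

instance charP_two : CharP (CyclicAlgebra k q) 2 :=
  charP_of_injective_algebraMap (algebraMap k (CyclicAlgebra k q)).injective 2

theorem augmentation_X : augmentation k q (data k q).X = 0 := by
  rw [InvertedCyclic.X, map_add, augmentation_θ, map_one, CharTwo.add_self_eq_zero]

theorem augmentation_X_pow {j : ℕ} (hj : 1 ≤ j) : augmentation k q ((data k q).X ^ j) = 0 := by
  rw [map_pow, augmentation_X, zero_pow (by omega)]

theorem exists_eq_augmentation_add_X_mul [NeZero (2 * q)] (a : CyclicAlgebra k q) :
    ∃ b, a = algebraMap k _ (augmentation k q a) + (data k q).X * b := by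
  have hker : ∀ g : Multiplicative (ZMod (2 * q)), ∀ c : k,
      ∃ b, single g c = algebraMap k _ c + (data k q).X * b := by
    intro g c
    obtain ⟨b, hb⟩ := sub_one_dvd_pow_sub_one (data k q).θ g.toAdd.val
    have hX : (data k q).X = (data k q).θ - 1 := (CharTwo.sub_eq_add _ _).symm
    refine ⟨c • b, ?_⟩
    rw [mul_smul_comm, hX, ← hb, ← single_eq_θ_pow, smul_sub,
      smul_single, smul_eq_mul, mul_one, Algebra.algebraMap_eq_smul_one, add_sub_cancel]
  induction a using MonoidAlgebra.induction_linear with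
  | zero => exact ⟨0, by simp⟩
  | add a a' ha ha' =>
    obtain ⟨b, hb⟩ := ha
    obtain ⟨b', hb'⟩ := ha'
    refine ⟨b + b', ?_⟩
    conv_lhs => rw [hb, hb']
    rw [map_add, map_add]
    ring
  | single g c => rw [augmentation_single]; exact hker g c

variable [hq : IsQuaternionParameter q]

theorem augmentation_norm : augmentation k q (data k q).norm = 0 :=
  augmentation_X_pow k q (by have := four_le q; omega)

theorem norm_eq_sum_θ_pow :
    (data k q).norm = ∑ i ∈ Finset.range (2 * q), (data k q).θ ^ i := by
  have hpoly : ∑ i ∈ Finset.range (2 * q), (Polynomial.X : Polynomial k) ^ i =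
      (Polynomial.X + 1) ^ (2 * q - 1) := by
    have hne : (Polynomial.X - 1 : Polynomial k) ≠ 0 := Polynomial.X_sub_C_ne_zero 1
    have hq4 := four_le q
    apply mul_right_cancel₀ hne
    rw [geom_sum_mul, CharTwo.sub_eq_add, CharTwo.sub_eq_add, ← pow_succ,
      Nat.sub_add_cancel (by omega), mul_comm, pow_mul, pow_mul, add_pow_parameter, one_pow,
      CharTwo.add_sq, one_pow]
  have h := congrArg (Polynomial.aeval (data k q).θ) hpoly
  simp only [map_sum, map_pow, map_add, map_one, Polynomial.aeval_X] at h
  exact h.symm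

theorem norm_eq_sum_single :
    (data k q).norm = ∑ i : ZMod (2 * q), single (Multiplicative.ofAdd i) 1 := by
  rw [norm_eq_sum_θ_pow]
  refine Finset.sum_nbij' (fun i => (i : ZMod (2 * q))) ZMod.val (fun _ _ => Finset.mem_univ _)
    (fun i _ => Finset.mem_range.mpr (ZMod.val_lt i))
    (fun i hi => ZMod.val_cast_of_lt (Finset.mem_range.mp hi))
    (fun i _ => ZMod.natCast_zmod_val i) (fun i _ => single_pow_natCast k q i)

theorem norm_coeff (g : Multiplicative (ZMod (2 * q))) : (data k q).norm.coeff g = 1 := by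
  classical
  rw [norm_eq_sum_single, coeff_sum, Finsupp.finsetSum_apply, Finset.sum_eq_single g.toAdd]
  · simp
  · intro i _ hi
    rw [coeff_single, Finsupp.single_apply, if_neg]
    rintro rfl
    exact hi rfl
  · simp

theorem norm_ne_zero : (data k q).norm ≠ 0 := by
  intro h
  simpa [h] using norm_coeff k q 1

theorem mul_norm (a : CyclicAlgebra k q) :
    a * (data k q).norm = augmentation k q a • (data k q).norm := by
  obtain ⟨b, hb⟩ := exists_eq_augmentation_add_X_mul k q a
  conv_lhs => rw [hb]
  rw [Algebra.smul_def]
  linear_combination b * (data k q).X_mul_norm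

theorem exists_eq_X_pow_mul {j : ℕ} (hj : j ≤ 2 * q) {a : CyclicAlgebra k q}
    (ha : (data k q).X ^ j * a = 0) : ∃ b, a = (data k q).X ^ (2 * q - j) * b := by
  suffices h : ∀ i, i + j ≤ 2 * q → ∃ b, a = (data k q).X ^ i * b from h _ (by omega)
  intro i
  induction i with
  | zero => exact fun _ => ⟨a, by simp⟩
  | succ i ih =>
    intro hi
    obtain ⟨b, rfl⟩ := ih (by omega)
    obtain ⟨b', hb'⟩ := exists_eq_augmentation_add_X_mul k q b
    have hb : b * (data k q).norm = 0 := by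
      rw [InvertedCyclic.norm, show 2 * q - 1 = 2 * q - 1 - i - j + j + i by omega, pow_add,
        pow_add]
      linear_combination (data k q).X ^ (2 * q - 1 - i - j) * ha
    rw [mul_norm] at hb
    rw [(smul_eq_zero.mp hb).resolve_right (norm_ne_zero k q), map_zero, zero_add] at hb'
    exact ⟨b', by rw [hb', pow_succ, mul_assoc]⟩

/-- The exotic elements of the cyclic group algebra. -/
noncomputable def exotic : (data k q).ExoticElements := (data k q).exoticElements

theorem augmentation_c' : augmentation k q (exotic k q).c' = 1 := by
  have h := congrArg (augmentation k q) (exotic k q).c'_add_one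
  rw [map_add, map_one, map_mul, map_mul, augmentation_X, zero_mul, zero_mul] at h
  exact CharTwo.add_eq_zero.mp h

theorem augmentation_c : augmentation k q (exotic k q).c = 1 := by
  rw [← (exotic k q).conj_c', augmentation_conj, augmentation_c']

end CharTwo

end CyclicAlgebra

/-! ### Representations of the quaternion group -/

section Group
open QuaternionGroup

variable {q : ℕ} {G : Type} [Group G] (e : G ≃* QuaternionGroup q)

/-- The inclusion of the cyclic subgroup of index two, along an identification of `G` with a
quaternion group. -/
def cyclicHom : Multiplicative (ZMod (2 * q)) →* G where
  toFun i := e.symm (a i.toAdd)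
  map_one' := by rw [toAdd_one, ← one_def, map_one]
  map_mul' i j := by rw [← map_mul, a_mul_a, toAdd_mul]

/-- The generator `θ` of the cyclic subgroup. -/
def theta : G := e.symm (a 1)

/-- The generator `τ` outside the cyclic subgroup. -/
def tau : G := e.symm (xa 0)

/-- The central involution `θ ^ q = τ ^ 2`. -/
def centralElement : G := e.symm (a q)

theorem exists_eq_cyclicHom_or (g : G) : ∃ i, g = cyclicHom e i ∨ g = tau e * cyclicHom e i := by
  obtain ⟨x, rfl⟩ := e.symm.surjective g
  cases x with
  | a i => exact ⟨Multiplicative.ofAdd i, Or.inl rfl⟩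
  | xa i => exact ⟨Multiplicative.ofAdd i, Or.inr (by
      change _ = e.symm (xa 0) * e.symm (a i)
      rw [← map_mul, xa_mul_a, zero_add])⟩

theorem tau_mul_cyclicHom (i : Multiplicative (ZMod (2 * q))) :
    tau e * cyclicHom e i = cyclicHom e i⁻¹ * tau e := by
  change e.symm (xa 0) * e.symm (a i.toAdd) = e.symm (a (i⁻¹).toAdd) * e.symm (xa 0)
  rw [← map_mul, ← map_mul, xa_mul_a, a_mul_xa, toAdd_inv]; simp

theorem tau_mul_tau : tau e * tau e = centralElement e := by
  change e.symm (xa 0) * e.symm (xa 0) = e.symm (a q)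
  rw [← map_mul, xa_mul_xa]; simp

theorem natCast_add_self_zmod_two_mul (q : ℕ) : (q : ZMod (2 * q)) + q = 0 := by
  rw [← two_mul]
  exact_mod_cast ZMod.natCast_self (2 * q)

theorem centralElement_mul_self : centralElement e * centralElement e = 1 := by
  change e.symm (a q) * e.symm (a q) = 1
  rw [← map_mul, a_mul_a, natCast_add_self_zmod_two_mul, ← one_def, map_one]

theorem centralElement_mul_comm (g : G) : centralElement e * g = g * centralElement e := by
  obtain ⟨x, rfl⟩ := e.symm.surjective g
  change e.symm (a q) * e.symm x = e.symm x * e.symm (a q)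
  have hneg : -(q : ZMod (2 * q)) = q :=
    neg_eq_iff_add_eq_zero.mpr (natCast_add_self_zmod_two_mul q)
  cases x with
  | a i => rw [← map_mul, ← map_mul, a_mul_a, a_mul_a, add_comm]
  | xa i => rw [← map_mul, ← map_mul, a_mul_xa, xa_mul_a, sub_eq_add_neg, hneg]

/-- The automorphism of the quaternion group that fixes `θ` and sends `τ` to `θ * τ`. -/
def twistAut (q : ℕ) : QuaternionGroup q ≃* QuaternionGroup q where
  toFun x := match x with | a i => a i | xa i => xa (i - 1)
  invFun x := match x with | a i => a i | xa i => xa (i + 1)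
  left_inv x := by cases x <;> simp
  right_inv x := by cases x <;> simp
  map_mul' x y := by
    cases x <;> cases y <;> simp
    all_goals ring

/-- The identification of `G` with a quaternion group in which `θ⁻¹ * τ` takes the role of `τ`. -/
def twistEquiv : G ≃* QuaternionGroup q := e.trans (twistAut q)

theorem centralElement_twistEquiv : centralElement (twistEquiv e) = centralElement e := rfl

theorem tau_twistEquiv : tau (twistEquiv e) = (theta e)⁻¹ * tau e := by
  change e.symm (xa (0 + 1)) = (e.symm (a 1))⁻¹ * e.symm (xa 0)
  rw [eq_inv_mul_iff_mul_eq, ← map_mul, a_mul_xa]; simp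

/-- The representation of the quaternion group in which `θ ^ i` acts by `T i` and `τ` by `S`. -/
def quaternionRepresentation {k V : Type} [Field k] [AddCommGroup V] [Module k V]
    (T : Multiplicative (ZMod (2 * q)) →* Module.End k V) (S : Module.End k V)
    (hTS : ∀ i, T i * S = S * T i⁻¹) (hS : S * S = T (Multiplicative.ofAdd (q : ZMod (2 * q)))) :
    Representation k (QuaternionGroup q) V where
  toFun x := match x with
    | a i => T (Multiplicative.ofAdd i)
    | xa i => S * T (Multiplicative.ofAdd i)
  map_one' := by
    change T (Multiplicative.ofAdd 0) = 1
    rw [ofAdd_zero, map_one]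
  map_mul' x y := by
    cases x with
    | a i => cases y with
      | a j =>
        change T _ = T _ * T _
        rw [ofAdd_add, map_mul]
      | xa j =>
        change S * T _ = T _ * (S * T _)
        rw [← mul_assoc, hTS, mul_assoc, ← map_mul, ← ofAdd_neg, ← ofAdd_add, sub_eq_neg_add]
    | xa i => cases y with
      | a j =>
        change S * T _ = (S * T _) * T _
        rw [ofAdd_add, map_mul, mul_assoc]
      | xa j =>
        change T _ = (S * T _) * (S * T _)
        rw [mul_assoc, ← mul_assoc (T _), hTS, ← mul_assoc, ← mul_assoc, hS, ← map_mul, ← map_mul,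
          ← ofAdd_neg, ← ofAdd_add, ← ofAdd_add]
        congr 2; ring

theorem cyclicHom_eq_theta_pow [NeZero (2 * q)] (i : Multiplicative (ZMod (2 * q))) :
    cyclicHom e i = theta e ^ i.toAdd.val := by
  change _ = cyclicHom e (Multiplicative.ofAdd 1) ^ i.toAdd.val
  rw [← map_pow, ← ofAdd_nsmul, nsmul_one, ZMod.natCast_val, ZMod.cast_id, ofAdd_toAdd]

theorem intertwines_of_theta_of_tau [NeZero (2 * q)] {k V W : Type} [Field k] [AddCommGroup V]
    [Module k V] [AddCommGroup W] [Module k W]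
    (ρ : Representation k G V) (σ : Representation k G W) (f : V →ₗ[k] W)
    (hθ : ∀ v, f (ρ (theta e) v) = σ (theta e) (f v))
    (hτ : ∀ v, f (ρ (tau e) v) = σ (tau e) (f v)) (g : G) (v : V) : f (ρ g v) = σ g (f v) := by
  have hpow : ∀ (i : ℕ) v, f (ρ (theta e ^ i) v) = σ (theta e ^ i) (f v) := by
    intro i
    induction i with
    | zero => simp
    | succ i ih => intro v; simp only [pow_succ, map_mul, Module.End.mul_apply, ih, hθ]
  obtain ⟨i, rfl | rfl⟩ := exists_eq_cyclicHom_or e g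
  · rw [cyclicHom_eq_theta_pow, hpow]
  · simp only [cyclicHom_eq_theta_pow, map_mul, Module.End.mul_apply, hτ, hpow]

end Group

section CyclicAction
open MonoidAlgebra CyclicAlgebra

variable {k : Type} [Field k] {q : ℕ} {G : Type} [Group G] (e : G ≃* QuaternionGroup q)

/-- The action of the group algebra of the cyclic subgroup on a representation. -/
noncomputable def cyclicAction (M : Rep.{0} k G) : CyclicAlgebra k q →ₐ[k] Module.End k M.V :=
  MonoidAlgebra.lift k _ _ (M.ρ.comp (cyclicHom e))

/-- A representation as a module over the group algebra of the cyclic subgroup. -/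
@[reducible] noncomputable def cyclicModule (M : Rep.{0} k G) : Module (CyclicAlgebra k q) M.V :=
  Module.compHom M.V (cyclicAction e M).toRingHom

theorem cyclicAction_single (M : Rep.{0} k G) (g : Multiplicative (ZMod (2 * q))) (c : k) :
    cyclicAction e M (single g c) = c • M.ρ (cyclicHom e g) := by
  simp [cyclicAction]

theorem cyclicAction_algebraMap (M : Rep.{0} k G) (c : k) (m : M.V) :
    cyclicAction e M (algebraMap k (CyclicAlgebra k q) c) m = c • m := by
  rw [AlgHom.commutes]
  rfl

theorem cyclicAction_θ (M : Rep.{0} k G) : cyclicAction e M (data k q).θ = M.ρ (theta e) := by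
  rw [θ_eq_single, cyclicAction_single, one_smul]
  rfl

theorem cyclicAction_θ_pow_q (M : Rep.{0} k G) :
    cyclicAction e M ((data k q).θ ^ q) = M.ρ (centralElement e) := by
  rw [θ_pow_q_eq_single, cyclicAction_single, one_smul]
  rfl

theorem tau_cyclicAction (M : Rep.{0} k G) (a : CyclicAlgebra k q) (m : M.V) :
    M.ρ (tau e) (cyclicAction e M a m) =
      cyclicAction e M ((data k q).conj a) (M.ρ (tau e) m) := by
  induction a using MonoidAlgebra.induction_linear with
  | zero => simp
  | add a b ha hb => simp only [map_add, LinearMap.add_apply, ha, hb]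
  | single g c =>
    rw [conj_single, cyclicAction_single, cyclicAction_single, LinearMap.smul_apply,
      LinearMap.smul_apply, map_smul, ← Module.End.mul_apply, ← map_mul, tau_mul_cyclicHom,
      map_mul, Module.End.mul_apply]

/-- The action of `τ`, as a semilinear map over the group algebra of the cyclic subgroup. -/
noncomputable def tauOperator (M : Rep.{0} k G) :
    letI := cyclicModule e M
    M.V →ₛₗ[(data k q).conj] M.V :=
  letI := cyclicModule e M
  { (M.ρ (tau e)).toAddMonoidHom with map_smul' := tau_cyclicAction e M }

theorem isTauOperator_tauOperator (M : Rep.{0} k G) :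
    letI := cyclicModule e M
    (data k q).IsTauOperator (tauOperator e M) := by
  intro m
  change M.ρ (tau e) (M.ρ (tau e) m) = cyclicAction e M _ m
  rw [cyclicAction_θ_pow_q, ← Module.End.mul_apply, ← map_mul, tau_mul_tau]

theorem hom_cyclicAction {M N : Rep.{0} k G} (f : M ⟶ N) (a : CyclicAlgebra k q) (m : M.V) :
    f.hom (cyclicAction e M a m) = cyclicAction e N a (f.hom m) := by
  induction a using MonoidAlgebra.induction_linear with
  | zero => simp
  | add a b ha hb => simp only [map_add, LinearMap.add_apply, ha, hb]
  | single g c =>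
    rw [cyclicAction_single, cyclicAction_single, LinearMap.smul_apply, LinearMap.smul_apply,
      map_smul, Rep.hom_comm_apply]

end CyclicAction

section Exotic
open MonoidAlgebra QuaternionGroup CyclicAlgebra

variable (k : Type) [Field k] (q : ℕ)

/-- The cyclic subgroup acts on the exotic module `k⟨θ⟩ ⊕ k` by multiplication on the first
summand and trivially on the second. -/
noncomputable def exoticThetaAction :
    Multiplicative (ZMod (2 * q)) →* Module.End k (CyclicAlgebra k q × k) where
  toFun i := (LinearMap.mulLeft k (single i 1 : CyclicAlgebra k q)).prodMap LinearMap.id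
  map_one' := by ext x <;> simp
  map_mul' i j := by
    refine LinearMap.ext fun x => Prod.ext ?_ rfl
    change single (i * j) 1 * x.1 = single i 1 * (single j 1 * x.1)
    rw [← mul_assoc, single_mul_single, one_mul]

theorem exoticThetaAction_apply (i : Multiplicative (ZMod (2 * q))) (x : CyclicAlgebra k q × k) :
    exoticThetaAction k q i x = (single i 1 * x.1, x.2) := rfl

variable [CharP k 2] [IsQuaternionParameter q]

/-- The operator by which `τ` acts on the exotic module. -/
noncomputable def exoticTau : Module.End k (CyclicAlgebra k q × k) where
  toFun x := ((data k q).conj x.1 * (exotic k q).c' + x.2 • (data k q).norm,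
    augmentation k q x.1 + x.2)
  map_add' x y := by
    refine Prod.ext ?_ ?_
    · simp only [Prod.fst_add, Prod.snd_add, map_add, add_smul, add_mul]; abel
    · simp only [Prod.fst_add, Prod.snd_add, map_add]; abel
  map_smul' c x := by
    refine Prod.ext ?_ ?_
    · simp only [Prod.smul_fst, Prod.smul_snd, conj_smul, smul_mul_assoc, RingHom.id_apply,
        smul_add, smul_eq_mul, mul_smul]
    · simp [mul_add]

theorem exoticTau_apply (x : CyclicAlgebra k q × k) : exoticTau k q x =
    ((data k q).conj x.1 * (exotic k q).c' + x.2 • (data k q).norm,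
      augmentation k q x.1 + x.2) := rfl

theorem exoticThetaAction_mul_exoticTau (i : Multiplicative (ZMod (2 * q))) :
    exoticThetaAction k q i * exoticTau k q = exoticTau k q * exoticThetaAction k q i⁻¹ := by
  refine LinearMap.ext fun x => ?_
  rw [Module.End.mul_apply, Module.End.mul_apply, exoticThetaAction_apply, exoticTau_apply,
    exoticThetaAction_apply, exoticTau_apply]
  refine Prod.ext ?_ ?_ <;> dsimp only
  · rw [map_mul, conj_single, inv_inv, mul_add, mul_smul_comm, mul_norm, augmentation_single,
      one_smul, mul_assoc]
  · rw [map_mul, augmentation_single, one_mul]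

theorem exoticTau_mul_exoticTau : exoticTau k q * exoticTau k q =
    exoticThetaAction k q (Multiplicative.ofAdd (q : ZMod (2 * q))) := by
  have hc' : (data k q).norm * (exotic k q).c' = (data k q).norm := by
    rw [mul_comm, mul_norm, augmentation_c', one_smul]
  refine LinearMap.ext fun x => ?_
  rw [Module.End.mul_apply, exoticThetaAction_apply, exoticTau_apply, exoticTau_apply]
  refine Prod.ext ?_ ?_ <;> dsimp only
  · rw [map_add, map_mul, conj_conj, conj_smul, (data k q).conj_norm, (exotic k q).conj_c',
      add_mul, mul_assoc, (exotic k q).c_mul_c', smul_mul_assoc, hc', mul_add, mul_norm, add_smul,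
      ← θ_pow_q_eq_single, (data k q).θ_pow_q]
    linear_combination (x.2 • (data k q).norm + augmentation k q x.1 • (data k q).norm) *
      (CharTwo.two_eq_zero : (2 : CyclicAlgebra k q) = 0)
  · rw [map_add, map_mul, augmentation_conj, augmentation_c', map_smul, augmentation_norm,
      smul_zero]
    linear_combination augmentation k q x.1 * (CharTwo.two_eq_zero : (2 : k) = 0)

/-- The action of the quaternion group on the exotic module. -/
noncomputable def exoticRepresentation :
    Representation k (QuaternionGroup q) (CyclicAlgebra k q × k) :=
  quaternionRepresentation (exoticThetaAction k q) (exoticTau k q)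
    (exoticThetaAction_mul_exoticTau k q) (exoticTau_mul_exoticTau k q)

variable {q} {G : Type} [Group G] (e : G ≃* QuaternionGroup q)

/-- The exotic module `k⟨θ⟩ ⊕ k`, an endotrivial module whose stable class has order two and is
not the class of a syzygy of the trivial module. -/
noncomputable abbrev exoticModule : Rep.{0} k G :=
  Rep.of ((exoticRepresentation k q).comp e.toMonoidHom)

theorem exoticModule_cyclicHom (i : Multiplicative (ZMod (2 * q))) (x : CyclicAlgebra k q × k) :
    (exoticModule k e).ρ (cyclicHom e i) x = (single i 1 * x.1, x.2) := by
  change exoticRepresentation k q (e (e.symm (a i.toAdd))) x = _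
  rw [MulEquiv.apply_symm_apply]
  rfl

theorem cyclicAction_exoticModule (b : CyclicAlgebra k q) (x : CyclicAlgebra k q × k) :
    cyclicAction e (exoticModule k e) b x = (b * x.1, augmentation k q b * x.2) := by
  induction b using MonoidAlgebra.induction_linear with
  | zero => rw [map_zero, map_zero]; simp; rfl
  | add f g hf hg => rw [map_add, LinearMap.add_apply, hf, hg, map_add, add_mul, add_mul]; rfl
  | single g c =>
    rw [cyclicAction_single, LinearMap.smul_apply, exoticModule_cyclicHom, augmentation_single]
    refine Prod.ext ?_ rfl
    change c • (single g 1 * x.1) = single g c * x.1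
    rw [← smul_mul_assoc, smul_single, smul_eq_mul, mul_one]

theorem exoticModule_tau (x : CyclicAlgebra k q × k) :
    (exoticModule k e).ρ (tau e) x = exoticTau k q x := by
  change exoticRepresentation k q (e (e.symm (xa 0))) x = _
  rw [MulEquiv.apply_symm_apply]
  change (exoticTau k q * exoticThetaAction k q 1) x = _
  rw [map_one, mul_one]

end Exotic

/-! ### Short exact sequences and injective representations -/

section Rep
variable {k G : Type} [Field k] [Group G]

/-- The morphism of representations given by an equivariant linear map. -/
abbrev equivariantHom {M N : Rep.{0} k G} (f : M.V →ₗ[k] N.V)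
    (hf : ∀ g m, f (M.ρ g m) = N.ρ g (f m)) : M ⟶ N :=
  Rep.ofHom ⟨f, fun g => LinearMap.ext fun m => hf g m⟩

theorem hom_comp_apply {M N K : Rep.{0} k G} (f : M ⟶ N) (g : N ⟶ K) (m : M.V) :
    (f ≫ g).hom m = g.hom (f.hom m) := rfl

theorem hom_apply_eq_of_comp_eq {M N K : Rep.{0} k G} {f : M ⟶ N} {g : N ⟶ K} {h : M ⟶ K}
    (w : f ≫ g = h) (m : M.V) : g.hom (f.hom m) = h.hom m := by
  rw [← w, hom_comp_apply]

section Biproduct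
variable (M N : Rep.{0} k G)

theorem biprod_fst_inl (x : M.V) :
    (biprod.fst : M ⊞ N ⟶ M).hom ((biprod.inl : M ⟶ M ⊞ N).hom x) = x :=
  hom_apply_eq_of_comp_eq biprod.inl_fst x

theorem biprod_inl_fst_add_inr_snd (x : (M ⊞ N).V) :
    (biprod.inl : M ⟶ M ⊞ N).hom ((biprod.fst : M ⊞ N ⟶ M).hom x) +
      (biprod.inr : N ⟶ M ⊞ N).hom ((biprod.snd : M ⊞ N ⟶ N).hom x) = x :=
  congrArg (fun f => f.hom x) (biprod.total (X := M) (Y := N))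

instance finiteDimensional_biprod [FiniteDimensional k M.V] [FiniteDimensional k N.V] :
    FiniteDimensional k (M ⊞ N).V :=
  Module.Finite.of_surjective
    ((biprod.inl : M ⟶ M ⊞ N).hom.toLinearMap.coprod (biprod.inr : N ⟶ M ⊞ N).hom.toLinearMap)
    fun x => ⟨(_, _), biprod_inl_fst_add_inr_snd M N x⟩

end Biproduct

theorem g_f_apply (S : ShortComplex (Rep.{0} k G)) (a : S.X₁.V) : S.g.hom (S.f.hom a) = 0 :=
  hom_apply_eq_of_comp_eq S.zero a

section ShortExact
variable {S : ShortComplex (Rep.{0} k G)} (hS : S.ShortExact)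
include hS

theorem injective_f : Function.Injective S.f.hom :=
  (Rep.mono_iff_injective S.f).mp hS.mono_f

theorem eq_zero_of_f_apply_eq_zero {a : S.X₁.V} (ha : S.f.hom a = 0) : a = 0 :=
  injective_f hS (by rw [ha, map_zero])

theorem surjective_g : Function.Surjective S.g.hom :=
  (Rep.epi_iff_surjective S.g).mp hS.epi_g

theorem exists_f_apply_eq {b : S.X₂.V} (hb : S.g.hom b = 0) : ∃ a, S.f.hom a = b :=
  (ShortComplex.moduleCat_exact_iff _).mp
    (hS.exact.map (forget₂ (Rep.{0} k G) (ModuleCat k))) b hb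

theorem finiteDimensional_X₁ [FiniteDimensional k S.X₂.V] : FiniteDimensional k S.X₁.V :=
  Module.Finite.of_injective S.f.hom.toLinearMap (injective_f hS)

theorem finiteDimensional_X₃ [FiniteDimensional k S.X₂.V] : FiniteDimensional k S.X₃.V :=
  Module.Finite.of_surjective S.g.hom.toLinearMap (surjective_g hS)

theorem finrank_X₃_lt [FiniteDimensional k S.X₂.V] {a : S.X₁.V} (ha : a ≠ 0) :
    Module.finrank k S.X₃.V < Module.finrank k S.X₂.V := by
  have hker : 0 < Module.finrank k S.g.hom.toLinearMap.ker :=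
    Module.finrank_pos_iff_exists_ne_zero.mpr
      ⟨⟨S.f.hom a, g_f_apply S a⟩, fun h =>
        ha (eq_zero_of_f_apply_eq_zero hS (congrArg Subtype.val h))⟩
  have hsum := S.g.hom.toLinearMap.finrank_range_add_finrank_ker
  rw [LinearMap.range_eq_top.mpr (surjective_g hS), finrank_top] at hsum
  omega

end ShortExact

theorem shortExact_cokernel {M N : Rep.{0} k G} (f : M ⟶ N) (hf : Function.Injective f.hom) :
    (ShortComplex.mk f (cokernel.π f) (cokernel.condition f)).ShortExact :=
  have := (Rep.mono_iff_injective f).mpr hf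
  ⟨ShortComplex.exact_cokernel f⟩

/-- The representation of `G` on functions `G → M` by right translation, that is, the
representation coinduced from the underlying vector space of `M`. -/
abbrev functionRep (M : Rep.{0} k G) : Rep.{0} k G := Rep.of (X := G → M.V)
  { toFun g := LinearMap.funLeft k M.V (· * g)
    map_one' := by ext φ h; simp [LinearMap.funLeft_apply]
    map_mul' a b := by ext φ h; simp [LinearMap.funLeft_apply, mul_assoc] }

instance finiteDimensional_functionRep [Finite G] (M : Rep.{0} k G) [FiniteDimensional k M.V] :
    FiniteDimensional k (functionRep M).V :=
  inferInstanceAs (FiniteDimensional k (G → M.V))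

theorem functionRep_apply (M : Rep.{0} k G) (g : G) (φ : G → M.V) (h : G) :
    ((functionRep M).ρ g φ : G → M.V) h = φ (h * g) := rfl

/-- The morphism into a function representation corresponding to a linear map. -/
def toFunctionRep {L M : Rep.{0} k G} (f : L.V →ₗ[k] M.V) : L ⟶ functionRep M :=
  equivariantHom (N := functionRep M) (LinearMap.pi fun h => f ∘ₗ L.ρ h) fun g m =>
    funext fun h => by
      change f (L.ρ h (L.ρ g m)) = f (L.ρ (h * g) m)
      rw [map_mul, Module.End.mul_apply]

theorem toFunctionRep_apply {L M : Rep.{0} k G} (f : L.V →ₗ[k] M.V) (x : L.V) (h : G) :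
    ((toFunctionRep f).hom x : G → M.V) h = f (L.ρ h x) := rfl

theorem injective_toFunctionRep_id (M : Rep.{0} k G) :
    Function.Injective (toFunctionRep (M := M) (LinearMap.id : M.V →ₗ[k] M.V)).hom := by
  intro x y hxy
  have h := congrFun hxy 1
  rwa [toFunctionRep_apply, toFunctionRep_apply, map_one] at h

theorem hom_functionRep_apply {L M : Rep.{0} k G} (f : L ⟶ functionRep M) (x : L.V) (h : G) :
    (f.hom x : G → M.V) h = (f.hom (L.ρ h x) : G → M.V) 1 := by
  rw [Rep.hom_comm_apply f h x, functionRep_apply, one_mul]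

instance injective_functionRep (M : Rep.{0} k G) : Injective (functionRep M) where
  factors {A B} f i _ := by
    obtain ⟨r, hr⟩ := i.hom.toLinearMap.exists_leftInverse_of_injective
      (LinearMap.ker_eq_bot.mpr ((Rep.mono_iff_injective i).mp inferInstance))
    let evalOne : (functionRep M).V →ₗ[k] M.V := LinearMap.proj (φ := fun _ : G => M.V) 1
    refine ⟨toFunctionRep (evalOne ∘ₗ f.hom.toLinearMap ∘ₗ r), Rep.hom_ext ?_⟩
    ext a h
    have hri : r (i.hom (A.ρ h a)) = A.ρ h a := LinearMap.congr_fun hr _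
    change (f.hom (r (B.ρ h (i.hom a))) : G → M.V) 1 = (f.hom a : G → M.V) h
    rw [← Rep.hom_comm_apply, hri, ← hom_functionRep_apply]

/-- Averaging over the group, from a function representation back to the representation. -/
noncomputable def functionRepSum [Fintype G] (M : Rep.{0} k G) : functionRep M ⟶ M :=
  equivariantHom (M := functionRep M)
    (∑ h : G, M.ρ h⁻¹ ∘ₗ LinearMap.proj (R := k) (φ := fun _ : G => M.V) h) fun g φ => by
      rw [LinearMap.sum_apply, LinearMap.sum_apply, map_sum]
      refine Fintype.sum_equiv (Equiv.mulRight g) _ _ fun h => ?_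
      change M.ρ h⁻¹ (φ (h * g)) = M.ρ g (M.ρ (h * g)⁻¹ (φ (h * g)))
      rw [← Module.End.mul_apply, ← map_mul]; simp

theorem surjective_functionRepSum [Fintype G] (M : Rep.{0} k G) :
    Function.Surjective (functionRepSum M).hom := by
  classical
  intro x
  refine ⟨(Pi.single 1 x : G → M.V), ?_⟩
  change (∑ h : G, M.ρ h⁻¹ ∘ₗ LinearMap.proj (R := k) (φ := fun _ : G => M.V) h)
    (Pi.single 1 x) = x
  rw [LinearMap.sum_apply, Finset.sum_eq_single 1]
  · simp
  · intro b _ hb; simp [Pi.single_eq_of_ne hb]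
  · simp

theorem nonempty_retract_functionRep [Finite G] (P : Rep.{0} k G) [Projective P] :
    Nonempty (Retract P (functionRep P)) := by
  cases nonempty_fintype G
  have := (Rep.epi_iff_surjective _).mpr (surjective_functionRepSum P)
  exact ⟨⟨Projective.factorThru (𝟙 P) (functionRepSum P), functionRepSum P,
    Projective.factorThru_comp _ _⟩⟩

theorem injective_of_projective [Finite G] (P : Rep.{0} k G) [Projective P] : Injective P := by
  obtain ⟨r⟩ := nonempty_retract_functionRep P
  exact r.injective

end Rep

/-! ### Homology of a central involution -/

/-- `z` is a central element of order two. -/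
structure IsCentralInvolution {G : Type} [Group G] (z : G) : Prop where
  mul_self : z * z = 1
  mul_comm : ∀ g, z * g = g * z
  ne_one : z ≠ 1

theorem IsCentralInvolution.exists_map_mul_add_eq_one {G : Type} [Group G] {z : G}
    (hz : IsCentralInvolution z) (k : Type) [Field k] :
    ∃ χ : G → k, ∀ h, χ (h * z) + χ h = 1 := by
  classical
  -- `χ` is the indicator function of the smaller element in each coset of `⟨z⟩`.
  refine ⟨fun h => if WellOrderingRel h (h * z) then 1 else 0, fun h => ?_⟩
  have hzz : h * z * z = h := by rw [mul_assoc, hz.mul_self, mul_one]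
  have hne : h ≠ h * z := fun h' => hz.ne_one (left_eq_mul.mp h')
  simp only [hzz]
  rcases trichotomous_of WellOrderingRel h (h * z) with hlt | heq | hgt
  · simp [hlt, asymm_of WellOrderingRel hlt]
  · exact absurd heq hne
  · simp [hgt, asymm_of WellOrderingRel hgt]

section Homology
variable {k G : Type} [Field k] [Group G]

section Definitions
variable (z : G)

/-- The operator `z - 1` on a representation. In characteristic two, when `z` is a central
involution, it squares to zero, and its homology is a functor to vector spaces which vanishes on
projectives; it computes Tate cohomology of `⟨z⟩`. -/
def differential (M : Rep.{0} k G) : Module.End k M.V := M.ρ z - 1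

theorem differential_apply (M : Rep.{0} k G) (m : M.V) : differential z M m = M.ρ z m - m := rfl

/-- The homology of `differential z M` vanishes. -/
def HasTrivialHomology (M : Rep.{0} k G) : Prop :=
  ∀ m, differential z M m = 0 → ∃ y, m = differential z M y

/-- The class of the cycle `m` is a basis of the homology of `differential z M`. -/
structure IsHomologyGenerator (M : Rep.{0} k G) (m : M.V) : Prop where
  differential_eq_zero : differential z M m = 0
  ne_differential : ∀ y, m ≠ differential z M y
  exists_eq : ∀ m', differential z M m' = 0 → ∃ (c : k) (y : M.V), m' = c • m + differential z M y

/-- The homology of `differential z M` is one-dimensional. -/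
def HasRankOneHomology (M : Rep.{0} k G) : Prop := ∃ m, IsHomologyGenerator z M m

/-- The morphism `f` induces a nonzero map on homology. -/
def NonzeroOnHomology {M N : Rep.{0} k G} (f : M ⟶ N) : Prop :=
  ∃ m, differential z M m = 0 ∧ ∀ y, f.hom m ≠ differential z N y

/-- Some morphism from `M` to `N` induces a nonzero map on homology. Between finite-dimensional
modules with one-dimensional homology this amounts to a stable isomorphism. -/
def HomologySimilar (M N : Rep.{0} k G) : Prop := ∃ f : M ⟶ N, NonzeroOnHomology z f

/-- A central involution of a finite group whose homology detects projectivity of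
finite-dimensional modules. By Chouinard's theorem this happens when `z` is the only involution of
a `2`-group. -/
structure DetectsProjectivity (k : Type) [Field k] : Prop extends IsCentralInvolution z where
  finite : Finite G
  projective : ∀ P : Rep.{0} k G, FiniteDimensional k P.V → HasTrivialHomology z P → Projective P

end Definitions

variable {z : G}

theorem hom_differential {M N : Rep.{0} k G} (f : M ⟶ N) (m : M.V) :
    f.hom (differential z M m) = differential z N (f.hom m) := by
  rw [differential_apply, differential_apply, map_sub, Rep.hom_comm_apply]

theorem IsCentralInvolution.rho_differential (hz : IsCentralInvolution z) (M : Rep.{0} k G) (g : G)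
    (m : M.V) : M.ρ g (differential z M m) = differential z M (M.ρ g m) := by
  rw [differential_apply, differential_apply, map_sub, ← Module.End.mul_apply,
    ← Module.End.mul_apply, ← map_mul, ← map_mul, hz.mul_comm]

theorem IsCentralInvolution.differential_differential [CharP k 2] (hz : IsCentralInvolution z)
    (M : Rep.{0} k G) (m : M.V) : differential z M (differential z M m) = 0 := by
  have hzz : M.ρ z (M.ρ z m) = m := by
    rw [← Module.End.mul_apply, ← map_mul, hz.mul_self, map_one, Module.End.one_apply]
  have htwo := add_self_eq_zero k (m - M.ρ z m)
  rw [differential_apply, differential_apply, map_sub, hzz, ← neg_sub m, sub_neg_eq_add, htwo]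

section Basic
variable {M N : Rep.{0} k G}

theorem IsHomologyGenerator.of_ne_differential {m m' : M.V} (hm : IsHomologyGenerator z M m)
    (hm' : differential z M m' = 0) (hne : ∀ y, m' ≠ differential z M y) :
    IsHomologyGenerator z M m' := by
  refine ⟨hm', hne, fun x hx => ?_⟩
  obtain ⟨c, y, hc⟩ := hm.exists_eq m' hm'
  have hc0 : c ≠ 0 := by
    rintro rfl
    exact hne y (by rw [hc, zero_smul, zero_add])
  obtain ⟨d, y', hd⟩ := hm.exists_eq x hx
  refine ⟨d * c⁻¹, y' - (d * c⁻¹) • y, ?_⟩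
  rw [hd, hc, map_sub, map_smul, smul_add, smul_smul, mul_assoc, inv_mul_cancel₀ hc0, mul_one]
  abel

theorem HasRankOneHomology.isHomologyGenerator {m : M.V} (hM : HasRankOneHomology z M)
    (hm : differential z M m = 0) (hne : ∀ y, m ≠ differential z M y) :
    IsHomologyGenerator z M m :=
  hM.choose_spec.of_ne_differential hm hne

theorem NonzeroOnHomology.isHomologyGenerator {f : M ⟶ N} (hf : NonzeroOnHomology z f)
    (hN : HasRankOneHomology z N) {m : M.V} (hm : IsHomologyGenerator z M m) :
    IsHomologyGenerator z N (f.hom m) := by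
  obtain ⟨m', hm', hne⟩ := hf
  refine hN.isHomologyGenerator
    (by rw [← hom_differential, hm.differential_eq_zero, map_zero]) fun y hy => ?_
  obtain ⟨c, x, hc⟩ := hm.exists_eq m' hm'
  refine hne (c • y + f.hom x) ?_
  rw [hc, map_add, map_smul, hy, hom_differential, map_add, map_smul]

theorem HasRankOneHomology.of_iso (hM : HasRankOneHomology z M) (i : M ≅ N) :
    HasRankOneHomology z N := by
  obtain ⟨m, hm⟩ := hM
  refine ⟨i.hom.hom m, by rw [← hom_differential, hm.differential_eq_zero, map_zero],
    fun y hy => hm.ne_differential (i.inv.hom y) ?_, fun x hx => ?_⟩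
  · rw [← hom_differential, ← hy, Rep.inv_hom_apply]
  · obtain ⟨c, y, hc⟩ := hm.exists_eq (i.inv.hom x) (by rw [← hom_differential, hx, map_zero])
    refine ⟨c, i.hom.hom y, ?_⟩
    rw [← map_smul, ← hom_differential, ← map_add, ← hc, Rep.hom_inv_apply]

theorem HasTrivialHomology.of_retract (hN : HasTrivialHomology z N) (r : Retract M N) :
    HasTrivialHomology z M := by
  intro m hm
  have hrm : r.r.hom (r.i.hom m) = m := hom_apply_eq_of_comp_eq r.retract m
  obtain ⟨y, hy⟩ := hN (r.i.hom m) (by rw [← hom_differential, hm, map_zero])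
  exact ⟨r.r.hom y, by rw [← hom_differential, ← hy, hrm]⟩

end Basic

variable [CharP k 2]

theorem IsCentralInvolution.hasTrivialHomology_functionRep (hz : IsCentralInvolution z)
    (M : Rep.{0} k G) : HasTrivialHomology z (functionRep M) := by
  obtain ⟨χ, hχ⟩ := hz.exists_map_mul_add_eq_one k
  intro φ hφ
  refine ⟨fun h => χ h • φ h, funext fun h => ?_⟩
  have hφh : φ (h * z) = φ h := sub_eq_zero.mp (congrFun hφ h)
  change φ h = χ (h * z) • φ (h * z) - χ h • φ h
  rw [hφh, ← sub_smul, CharTwo.sub_eq_add, hχ, one_smul]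

theorem IsCentralInvolution.hasTrivialHomology_of_projective [Finite G]
    (hz : IsCentralInvolution z) (P : Rep.{0} k G) [Projective P] : HasTrivialHomology z P :=
  (hz.hasTrivialHomology_functionRep P).of_retract (nonempty_retract_functionRep P).some

end Homology

section HomologySequence
variable {k G : Type} [Field k] [Group G] {z : G} {S : ShortComplex (Rep.{0} k G)}

theorem exists_f_apply_eq_differential (hS : S.ShortExact) {b : S.X₂.V}
    (hb : differential z S.X₃ (S.g.hom b) = 0) : ∃ a, S.f.hom a = differential z S.X₂ b :=
  exists_f_apply_eq hS (by rw [hom_differential, hb])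

variable [CharP k 2] (hz : IsCentralInvolution z)
include hz

theorem differential_eq_zero_of_f_apply_eq (hS : S.ShortExact) {a : S.X₁.V} {b : S.X₂.V}
    (hab : S.f.hom a = differential z S.X₂ b) : differential z S.X₁ a = 0 :=
  eq_zero_of_f_apply_eq_zero hS (by rw [hom_differential, hab, hz.differential_differential])

theorem hasTrivialHomology_X₃ (hS : S.ShortExact) (h₁ : HasTrivialHomology z S.X₁)
    (h₂ : HasTrivialHomology z S.X₂) : HasTrivialHomology z S.X₃ := by
  intro c hc
  obtain ⟨b, rfl⟩ := surjective_g hS c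
  obtain ⟨a, ha⟩ := exists_f_apply_eq_differential hS hc
  obtain ⟨a', rfl⟩ := h₁ a (differential_eq_zero_of_f_apply_eq hz hS ha)
  obtain ⟨y, hy⟩ := h₂ (b - S.f.hom a') (by rw [map_sub, ← hom_differential S.f, ha, sub_self])
  refine ⟨S.g.hom y, ?_⟩
  rw [← hom_differential, ← hy, map_sub, g_f_apply, sub_zero]

theorem isHomologyGenerator_X₃ (hS : S.ShortExact) (h₂ : HasTrivialHomology z S.X₂) {a : S.X₁.V}
    {b : S.X₂.V} (ha : IsHomologyGenerator z S.X₁ a) (hab : S.f.hom a = differential z S.X₂ b) :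
    IsHomologyGenerator z S.X₃ (S.g.hom b) := by
  refine ⟨by rw [← hom_differential, ← hab, g_f_apply], fun y hy => ?_, fun c' hc' => ?_⟩
  · obtain ⟨b', rfl⟩ := surjective_g hS y
    obtain ⟨a', ha'⟩ := exists_f_apply_eq hS (b := b - differential z S.X₂ b')
      (by rw [map_sub, hy, hom_differential, sub_self])
    refine ha.ne_differential a' (injective_f hS ?_)
    rw [hom_differential, ha', map_sub, hz.differential_differential, hab, sub_zero]
  · obtain ⟨b', rfl⟩ := surjective_g hS c'
    obtain ⟨a', ha'⟩ := exists_f_apply_eq_differential hS hc'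
    obtain ⟨c, x, rfl⟩ := ha.exists_eq a' (differential_eq_zero_of_f_apply_eq hz hS ha')
    obtain ⟨y, hy⟩ := h₂ (b' - c • b - S.f.hom x) (by
      rw [map_sub, map_sub, map_smul, ← hab, ← hom_differential S.f, ← ha', map_add, map_smul]
      abel)
    refine ⟨c, S.g.hom y, ?_⟩
    rw [← hom_differential, ← hy, map_sub, map_sub, map_smul, g_f_apply]
    abel

theorem isHomologyGenerator_X₁ (hS : S.ShortExact) (h₂ : HasTrivialHomology z S.X₂) {a : S.X₁.V}
    {b : S.X₂.V} (hb : IsHomologyGenerator z S.X₃ (S.g.hom b))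
    (hab : S.f.hom a = differential z S.X₂ b) : IsHomologyGenerator z S.X₁ a := by
  refine ⟨differential_eq_zero_of_f_apply_eq hz hS hab, fun y hy => ?_, fun a' ha' => ?_⟩
  · obtain ⟨w, hw⟩ := h₂ (b - S.f.hom y) (by rw [map_sub, ← hab, hy, hom_differential, sub_self])
    refine hb.ne_differential (S.g.hom w) ?_
    rw [← hom_differential, ← hw, map_sub, g_f_apply, sub_zero]
  · obtain ⟨b', hb'⟩ := h₂ (S.f.hom a') (by rw [← hom_differential, ha', map_zero])
    obtain ⟨c, y, hc⟩ := hb.exists_eq (S.g.hom b') (by rw [← hom_differential, ← hb', g_f_apply])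
    obtain ⟨w, rfl⟩ := surjective_g hS y
    obtain ⟨x, hx⟩ := exists_f_apply_eq hS (b := b' - c • b - differential z S.X₂ w) (by
      rw [map_sub, map_sub, map_smul, hc, hom_differential]
      abel)
    refine ⟨c, x, injective_f hS ?_⟩
    rw [hb', map_add, hom_differential, hx, map_smul, map_sub, map_sub, map_smul,
      hz.differential_differential, hab]
    abel

theorem hasRankOneHomology_X₃ (hS : S.ShortExact) (h₂ : HasTrivialHomology z S.X₂)
    (h₁ : HasRankOneHomology z S.X₁) : HasRankOneHomology z S.X₃ := by
  obtain ⟨a, ha⟩ := h₁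
  obtain ⟨b, hb⟩ := h₂ (S.f.hom a) (by rw [← hom_differential, ha.differential_eq_zero, map_zero])
  exact ⟨_, isHomologyGenerator_X₃ hz hS h₂ ha hb⟩

theorem hasRankOneHomology_X₁ (hS : S.ShortExact) (h₂ : HasTrivialHomology z S.X₂)
    (h₃ : HasRankOneHomology z S.X₃) : HasRankOneHomology z S.X₁ := by
  obtain ⟨c, hc⟩ := h₃
  obtain ⟨b, rfl⟩ := surjective_g hS c
  obtain ⟨a, ha⟩ := exists_f_apply_eq_differential hS hc.differential_eq_zero
  exact ⟨_, isHomologyGenerator_X₁ hz hS h₂ hc ha⟩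

theorem NonzeroOnHomology.hasTrivialHomology_X₃ (hS : S.ShortExact)
    (h₁ : HasRankOneHomology z S.X₁) (h₂ : HasRankOneHomology z S.X₂)
    (hf : NonzeroOnHomology z S.f) : HasTrivialHomology z S.X₃ := by
  obtain ⟨m, hm⟩ := h₁
  have hfm := hf.isHomologyGenerator h₂ hm
  intro c hc
  obtain ⟨b, rfl⟩ := surjective_g hS c
  obtain ⟨a, ha⟩ := exists_f_apply_eq_differential hS hc
  obtain ⟨d, a', rfl⟩ := hm.exists_eq a (differential_eq_zero_of_f_apply_eq hz hS ha)
  have hd : d = 0 := by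
    by_contra hd
    refine hfm.ne_differential (d⁻¹ • (b - S.f.hom a')) ?_
    rw [map_smul, map_sub, ← ha, map_add, map_smul, ← hom_differential S.f, add_sub_cancel_right,
      smul_smul, inv_mul_cancel₀ hd, one_smul]
  rw [hd, zero_smul, zero_add] at ha
  obtain ⟨d', y, hy⟩ := hfm.exists_eq (b - S.f.hom a')
    (by rw [map_sub, ← ha, ← hom_differential S.f, sub_self])
  refine ⟨S.g.hom y, ?_⟩
  have hb : b = S.f.hom (a' + d' • m) + differential z S.X₂ y := by
    rw [map_add, map_smul, add_assoc, ← hy]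
    abel
  rw [hb, map_add, g_f_apply, zero_add, hom_differential]

theorem HomologySimilar.syzygy {T : ShortComplex (Rep.{0} k G)} (hS : S.ShortExact)
    (hT : T.ShortExact) [Projective S.X₂] (hT₂ : HasTrivialHomology z T.X₂)
    (h : HomologySimilar z S.X₃ T.X₃) : HomologySimilar z S.X₁ T.X₁ := by
  have := hT.mono_f
  have := hT.epi_g
  obtain ⟨f, x, hx, hfx⟩ := h
  obtain ⟨b, rfl⟩ := surjective_g hS x
  let F := Projective.factorThru (S.g ≫ f) T.g
  have hF : F ≫ T.g = S.g ≫ f := Projective.factorThru_comp _ _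
  have hFb : T.g.hom (F.hom b) = f.hom (S.g.hom b) := hom_apply_eq_of_comp_eq hF b
  have hSF : (S.f ≫ F) ≫ T.g = 0 := by
    rw [Category.assoc, hF, ← Category.assoc, S.zero, zero_comp]
  let t : S.X₁ ⟶ T.X₁ := hT.exact.lift (S.f ≫ F) hSF
  have ht (a : S.X₁.V) : T.f.hom (t.hom a) = F.hom (S.f.hom a) :=
    hom_apply_eq_of_comp_eq (hT.exact.lift_f _ _) a
  obtain ⟨a, ha⟩ := exists_f_apply_eq_differential hS hx
  refine ⟨t, a, differential_eq_zero_of_f_apply_eq hz hS ha, fun y hy => ?_⟩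
  obtain ⟨w, hw⟩ := hT₂ (F.hom b - T.f.hom y) (by
    rw [map_sub, ← hom_differential T.f, ← hy, ht, ha, hom_differential, sub_self])
  refine hfx (T.g.hom w) ?_
  rw [← hom_differential, ← hw, map_sub, g_f_apply, sub_zero, hFb]

theorem HomologySimilar.cosyzygy {T : ShortComplex (Rep.{0} k G)} (hS : S.ShortExact)
    (hT : T.ShortExact) (hS₂ : HasTrivialHomology z S.X₂) [Injective T.X₂]
    (h : HomologySimilar z S.X₁ T.X₁) : HomologySimilar z S.X₃ T.X₃ := by
  have := hS.mono_f
  have := hS.epi_g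
  obtain ⟨f, a, ha, hfa⟩ := h
  let F := Injective.factorThru (f ≫ T.f) S.f
  have hF : S.f ≫ F = f ≫ T.f := Injective.comp_factorThru _ _
  have hFa : F.hom (S.f.hom a) = T.f.hom (f.hom a) := hom_apply_eq_of_comp_eq hF a
  have hFT : S.f ≫ F ≫ T.g = 0 := by
    rw [← Category.assoc, hF, Category.assoc, T.zero, comp_zero]
  let t : S.X₃ ⟶ T.X₃ := hS.exact.desc (F ≫ T.g) hFT
  have ht (b : S.X₂.V) : t.hom (S.g.hom b) = T.g.hom (F.hom b) :=
    hom_apply_eq_of_comp_eq (hS.exact.g_desc _ _) b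
  obtain ⟨b, hb⟩ := hS₂ (S.f.hom a) (by rw [← hom_differential, ha, map_zero])
  refine ⟨t, S.g.hom b, by rw [← hom_differential, ← hb, g_f_apply], fun y hy => ?_⟩
  obtain ⟨w, rfl⟩ := surjective_g hT y
  rw [ht, ← hom_differential] at hy
  obtain ⟨v, hv⟩ := exists_f_apply_eq hT (b := F.hom b - differential z T.X₂ w)
    (by rw [map_sub, hy, sub_self])
  refine hfa v (injective_f hT ?_)
  rw [hom_differential, hv, map_sub, hz.differential_differential, sub_zero, ← hom_differential,
    ← hb, hFa]

end HomologySequence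

section StableIsomorphism
variable {k G : Type} [Field k] [Group G] {z : G} {M N : Rep.{0} k G}

theorem hasRankOneHomology_biprod (hM : HasRankOneHomology z M) (hN : HasTrivialHomology z N) :
    HasRankOneHomology z (M ⊞ N) := by
  obtain ⟨m, hm⟩ := hM
  refine ⟨(biprod.inl : M ⟶ M ⊞ N).hom m,
    by rw [← hom_differential, hm.differential_eq_zero, map_zero], fun y hy => ?_, fun x hx => ?_⟩
  · refine hm.ne_differential ((biprod.fst : M ⊞ N ⟶ M).hom y) ?_
    rw [← hom_differential, ← hy, biprod_fst_inl]
  · obtain ⟨c, y, hc⟩ := hm.exists_eq ((biprod.fst : M ⊞ N ⟶ M).hom x)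
      (by rw [← hom_differential, hx, map_zero])
    obtain ⟨w, hw⟩ := hN ((biprod.snd : M ⊞ N ⟶ N).hom x)
      (by rw [← hom_differential, hx, map_zero])
    refine ⟨c, (biprod.inl : M ⟶ M ⊞ N).hom y + (biprod.inr : N ⟶ M ⊞ N).hom w, ?_⟩
    rw [← biprod_inl_fst_add_inr_snd M N x, hc, hw, map_add, map_smul, map_add, hom_differential,
      hom_differential, add_assoc]

variable [CharP k 2]

theorem HomologySimilar.isStablyIso (hz : DetectsProjectivity z k)
    (hM : HasRankOneHomology z M) (hN : HasRankOneHomology z N) [FiniteDimensional k M.V]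
    [FiniteDimensional k N.V] (h : HomologySimilar z M N) : IsStablyIso M N := by
  obtain ⟨f, m, hm, hne⟩ := h
  have := hz.finite
  have hI := hz.hasTrivialHomology_functionRep M
  let F : M ⟶ N ⊞ functionRep M := biprod.lift f (toFunctionRep LinearMap.id)
  have hF : Function.Injective F.hom := fun x y hxy => by
    have hsnd := congrArg (biprod.snd : N ⊞ functionRep M ⟶ _).hom hxy
    rw [hom_apply_eq_of_comp_eq (biprod.lift_snd f (toFunctionRep LinearMap.id)),
      hom_apply_eq_of_comp_eq (biprod.lift_snd f (toFunctionRep LinearMap.id))] at hsnd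
    exact injective_toFunctionRep_id M hsnd
  have hFm : NonzeroOnHomology z F := by
    refine ⟨m, hm, fun y hy => hne ((biprod.fst : N ⊞ functionRep M ⟶ N).hom y) ?_⟩
    rw [← hom_differential, ← hy, hom_apply_eq_of_comp_eq (biprod.lift_fst f _)]
  have hS := shortExact_cokernel F hF
  have := finiteDimensional_X₃ hS
  have hC : Projective (cokernel F) := hz.projective _ this <|
    hFm.hasTrivialHomology_X₃ hz.toIsCentralInvolution hS hM (hasRankOneHomology_biprod hN hI)
  exact ⟨cokernel F, functionRep M, hC, hz.projective _ inferInstance hI,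
    ⟨hS.splittingOfProjective.isoBinaryBiproduct.symm⟩⟩

theorem HomologySimilar.of_isStablyIso [Finite G] (hz : IsCentralInvolution z)
    (hM : HasRankOneHomology z M) (h : IsStablyIso M N) :
    HomologySimilar z M N := by
  obtain ⟨P, Q, _, hQ, ⟨φ⟩⟩ := h
  obtain ⟨m, hm⟩ := hM
  let i : M ⟶ N ⊞ Q := biprod.inl ≫ φ.hom
  have hi : m = (biprod.fst : M ⊞ P ⟶ M).hom (φ.inv.hom (i.hom m)) := by
    rw [hom_comp_apply, Rep.inv_hom_apply, biprod_fst_inl]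
  have hcycle : differential z _ (i.hom m) = 0 := by
    rw [← hom_differential, hm.differential_eq_zero, map_zero]
  refine ⟨i ≫ biprod.fst, m, hm.differential_eq_zero, fun y hy => ?_⟩
  rw [hom_comp_apply] at hy
  obtain ⟨x, hx⟩ := hz.hasTrivialHomology_of_projective Q
    ((biprod.snd : N ⊞ Q ⟶ Q).hom (i.hom m)) (by rw [← hom_differential, hcycle, map_zero])
  obtain ⟨w, hw⟩ : ∃ w, i.hom m = differential z (N ⊞ Q) w := by
    refine ⟨(biprod.inl : N ⟶ N ⊞ Q).hom y + (biprod.inr : Q ⟶ N ⊞ Q).hom x, ?_⟩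
    rw [map_add, ← hom_differential, ← hom_differential, ← hy, ← hx, biprod_inl_fst_add_inr_snd]
  refine hm.ne_differential ((biprod.fst : M ⊞ P ⟶ M).hom (φ.inv.hom w)) ?_
  rw [← hom_differential, ← hom_differential, ← hw, ← hi]

end StableIsomorphism

/-! ### Chouinard's theorem for the quaternion group -/

section Chouinard
open CyclicAlgebra QuaternionGroup

section Group
variable {q : ℕ} {G : Type} [Group G] (e : G ≃* QuaternionGroup q)

/-- The normal form `θ ^ i` or `τ * θ ^ i` of an element of the quaternion group. -/
def normalFormEquiv (q : ℕ) : ZMod (2 * q) ⊕ ZMod (2 * q) ≃ QuaternionGroup q where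
  toFun := Sum.elim a xa
  invFun x := match x with | a i => .inl i | xa i => .inr i
  left_inv x := by cases x <;> rfl
  right_inv x := by cases x <;> rfl

variable [IsQuaternionParameter q]

include e in
theorem finite_of_mulEquiv : Finite G := Finite.of_equiv _ e.symm.toEquiv

theorem isCentralInvolution_centralElement : IsCentralInvolution (centralElement e) where
  mul_self := centralElement_mul_self e
  mul_comm := centralElement_mul_comm e
  ne_one h := by
    have hq : a (q : ZMod (2 * q)) = 1 := by
      rw [← e.apply_symm_apply (a (q : ZMod (2 * q))), ← map_one e]
      exact congrArg e h
    rw [one_def, a.injEq, ZMod.natCast_eq_zero_iff] at hq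
    have := four_le q
    have := Nat.le_of_dvd (by omega) hq
    omega

end Group

variable {k : Type} [Field k] {q : ℕ} {G : Type} [Group G] (e : G ≃* QuaternionGroup q)
  {M : Rep.{0} k G}

theorem rho_apply_eq_self [NeZero (2 * q)] {m : M.V} (hθ : M.ρ (theta e) m = m)
    (hτ : M.ρ (tau e) m = m) (g : G) : M.ρ g m = m := by
  have h := intertwines_of_theta_of_tau e (Representation.trivial k G k) M.ρ
    (LinearMap.toSpanSingleton k M.V m) (fun c => by simp [hθ]) (fun c => by simp [hτ]) g 1
  simpa using h.symm

theorem rho_tau_rho_tau (m : M.V) :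
    M.ρ (tau e) (M.ρ (tau e) m) = differential (centralElement e) M m + m := by
  rw [differential_apply, sub_add_cancel, ← Module.End.mul_apply, ← map_mul, tau_mul_tau]

theorem cyclicAction_X_pow_eq_zero {m : M.V} (hm : cyclicAction e M (data k q).X m = 0) {j : ℕ}
    (hj : 1 ≤ j) : cyclicAction e M ((data k q).X ^ j) m = 0 :=
  letI := cyclicModule e M
  (data k q).pow_smul_eq_zero hj hm

theorem cyclicAction_X_rho_tau {m : M.V} (hm : cyclicAction e M (data k q).X m = 0) :
    cyclicAction e M (data k q).X (M.ρ (tau e) m) = 0 := by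
  rw [← (data k q).conj_X', ← tau_cyclicAction, (data k q).X'_eq_θ'_mul_X, map_mul,
    Module.End.mul_apply, hm, map_zero, map_zero]

variable [CharP k 2]

theorem cyclicAction_eq_augmentation_smul [NeZero (2 * q)] {m : M.V}
    (hm : cyclicAction e M (data k q).X m = 0) (a : CyclicAlgebra k q) :
    cyclicAction e M a m = augmentation k q a • m := by
  obtain ⟨b, hb⟩ := exists_eq_augmentation_add_X_mul k q a
  conv_lhs => rw [hb]
  rw [map_add, LinearMap.add_apply, cyclicAction_algebraMap, mul_comm (data k q).X b, map_mul,
    Module.End.mul_apply, hm, map_zero, add_zero]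

theorem cyclicAction_X_eq_zero_iff {m : M.V} :
    cyclicAction e M (data k q).X m = 0 ↔ M.ρ (theta e) m = m := by
  rw [InvertedCyclic.X, map_add, map_one, cyclicAction_θ, LinearMap.add_apply,
    Module.End.one_apply]
  exact ⟨fun h => add_right_cancel (h.trans (add_self_eq_zero k m).symm),
    fun h => by rw [h, add_self_eq_zero k]⟩

variable [IsQuaternionParameter q] (M)

theorem cyclicAction_X_pow_q (m : M.V) :
    cyclicAction e M ((data k q).X ^ q) m = differential (centralElement e) M m := by
  rw [differential, ← cyclicAction_θ_pow_q, (data k q).θ_pow_q, map_add, map_one,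
    add_sub_cancel_left]

theorem cyclicAction_norm (m : M.V) : cyclicAction e M (data k q).norm m =
    ∑ i : ZMod (2 * q), M.ρ (cyclicHom e (Multiplicative.ofAdd i)) m := by
  rw [norm_eq_sum_single, map_sum, LinearMap.sum_apply]
  exact Finset.sum_congr rfl fun i _ => by rw [cyclicAction_single, one_smul]

theorem sum_rho_apply [Fintype G] (m : M.V) : ∑ g, M.ρ g m =
    cyclicAction e M (data k q).norm m + M.ρ (tau e) (cyclicAction e M (data k q).norm m) := by
  rw [cyclicAction_norm, map_sum,
    ← Fintype.sum_equiv ((normalFormEquiv q).trans e.symm.toEquiv) _ _ fun _ => rfl,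
    Fintype.sum_sum_type]
  refine congrArg₂ _ rfl (Finset.sum_congr rfl fun i _ => ?_)
  rw [← Module.End.mul_apply, ← map_mul]
  change M.ρ (e.symm (xa i)) m = M.ρ (e.symm (xa 0) * e.symm (a i)) m
  rw [← map_mul, xa_mul_a, zero_add]

theorem normVanishes_tauOperator [Fintype G] (h : ∀ m, ∑ g, M.ρ g m = 0) :
    letI := cyclicModule e M
    (data k q).NormVanishes (tauOperator e M) := by
  intro m
  have hm := h m
  rw [sum_rho_apply e] at hm
  exact add_left_cancel (hm.trans (add_self_eq_zero k (cyclicAction e M (data k q).norm m)).symm)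

variable {M}

theorem exists_cyclicAction_X_eq_zero {x : M.V} (hx : x ≠ 0) : ∃ j,
    cyclicAction e M ((data k q).X ^ j) x ≠ 0 ∧
      cyclicAction e M (data k q).X (cyclicAction e M ((data k q).X ^ j) x) = 0 := by
  classical
  have hex : ∃ j, cyclicAction e M ((data k q).X ^ j) x = 0 :=
    ⟨2 * q, by rw [(data k q).X_pow_two_mul_q, map_zero, LinearMap.zero_apply]⟩
  obtain ⟨j, hj⟩ : ∃ j, Nat.find hex = j + 1 :=
    Nat.exists_eq_succ_of_ne_zero fun h0 => hx (by
      have := Nat.find_spec hex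
      rwa [h0, pow_zero, map_one] at this)
  refine ⟨j, Nat.find_min hex (by omega), ?_⟩
  rw [← Module.End.mul_apply, ← map_mul, ← pow_succ', ← hj]
  exact Nat.find_spec hex

include e in
theorem exists_fixed_of_hom_apply_eq_zero {N : Rep.{0} k G} (f : M ⟶ N) {x : M.V} (hx : x ≠ 0)
    (hfx : f.hom x = 0) : ∃ y, y ≠ 0 ∧ f.hom y = 0 ∧ ∀ g, M.ρ g y = y := by
  obtain ⟨j, hy, hXy⟩ := exists_cyclicAction_X_eq_zero e hx
  set y := cyclicAction e M ((data k q).X ^ j) x with hy_def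
  have hfy : f.hom y = 0 := by rw [hy_def, hom_cyclicAction, hfx, map_zero]
  have hθy := (cyclicAction_X_eq_zero_iff e).mp hXy
  by_cases hτ : M.ρ (tau e) y = y
  · exact ⟨y, hy, hfy, rho_apply_eq_self e hθy hτ⟩
  · have hcycle : differential (centralElement e) M y = 0 := by
      rw [← cyclicAction_X_pow_q,
        cyclicAction_X_pow_eq_zero e hXy (by linarith [four_le q])]
    refine ⟨M.ρ (tau e) y + y, fun h => hτ ?_, ?_, rho_apply_eq_self e ?_ ?_⟩
    · exact add_right_cancel (h.trans (add_self_eq_zero k y).symm)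
    · rw [map_add, Rep.hom_comm_apply, hfy, map_zero, add_zero]
    · rw [← cyclicAction_X_eq_zero_iff, map_add, hXy, cyclicAction_X_rho_tau e hXy, add_zero]
    · rw [map_add, rho_tau_rho_tau, hcycle, zero_add, add_comm]

include e in
theorem injective_leftRegularHom [Fintype G] {m : M.V} (hm : ∑ g, M.ρ g m ≠ 0) :
    Function.Injective (Rep.leftRegularHom M m).hom := by
  refine (injective_iff_map_eq_zero _).mpr fun x hx => by_contra fun hx0 => ?_
  obtain ⟨y, hy0, hfy, hfix⟩ := exists_fixed_of_hom_apply_eq_zero e _ hx0 hx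
  have hc (g : G) : y.coeff g = y.coeff 1 := by
    conv_lhs => rw [← hfix g]
    change ((Representation.ofMulAction k G G g) y).coeff g = _
    rw [Representation.coeff_ofMulAction]
    simp
  have hsum : y = ∑ g, MonoidAlgebra.single g (y.coeff 1) := by
    ext h
    simp [hc h]
  have hmap : (Rep.leftRegularHom M m).hom y = y.coeff 1 • ∑ g, M.ρ g m := by
    conv_lhs => rw [hsum]
    rw [map_sum, Finset.smul_sum]
    exact Finset.sum_congr rfl fun g _ => Rep.leftRegularHom_hom_single ..
  have hy1 : y.coeff 1 = 0 := (smul_eq_zero.mp (hmap.symm.trans hfy)).resolve_right hm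
  refine hy0 ?_
  rw [hsum, hy1]
  simp

theorem HasTrivialHomology.projective (P : Rep.{0} k G) [FiniteDimensional k P.V]
    (hP : HasTrivialHomology (centralElement e) P) : Projective P := by
  have := finite_of_mulEquiv e
  cases nonempty_fintype G
  have hz := isCentralInvolution_centralElement e
  induction hn : Module.finrank k P.V using Nat.strong_induction_on generalizing P with
  | _ n ih =>
  by_cases h : ∀ m, ∑ g, P.ρ g m = 0
  · let _ := cyclicModule e P
    have hacyclic : (data k q).IsAcyclic P.V := fun m hm => by
      obtain ⟨y, hy⟩ := hP m ((cyclicAction_X_pow_q e P m).symm.trans hm)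
      exact ⟨y, hy.trans (cyclicAction_X_pow_q e P y).symm⟩
    have hzero := hacyclic.eq_zero (isTauOperator_tauOperator e P)
      (normVanishes_tauOperator e P h)
    have : IsZero P := (Rep.isZero_iff k G P).mpr ⟨fun a b => (hzero a).trans (hzero b).symm⟩
    exact Projective.of_iso this.isoZero.symm inferInstance
  · push Not at h
    obtain ⟨m, hm⟩ := h
    have hS := shortExact_cokernel _ (injective_leftRegularHom e hm)
    have := finiteDimensional_X₃ hS
    have hlt : Module.finrank k (cokernel (Rep.leftRegularHom P m)).V < n :=
      hn ▸ finrank_X₃_lt hS (a := (MonoidAlgebra.single 1 1 : MonoidAlgebra k G)) (by simp)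
    have : Projective (cokernel (Rep.leftRegularHom P m)) := ih _ hlt _
      (hasTrivialHomology_X₃ hz hS (hz.hasTrivialHomology_of_projective _) hP) rfl
    exact Projective.of_iso hS.splittingOfProjective.isoBinaryBiproduct.symm inferInstance

variable (k)

theorem detectsProjectivity_centralElement : DetectsProjectivity (centralElement e) k where
  toIsCentralInvolution := isCentralInvolution_centralElement e
  finite := finite_of_mulEquiv e
  projective P _ hP := hP.projective e P

end Chouinard

/-! ### Tensor products and endomorphism modules -/

section Contraction
variable {k V : Type} [Field k] [AddCommGroup V] [Module k V]

theorem exists_generalizedInverse (u : Module.End k V) : ∃ g : Module.End k V, u * g * u = u := by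
  obtain ⟨s, hs⟩ := u.rangeRestrict.exists_rightInverse_of_surjective u.range_rangeRestrict
  obtain ⟨p, hp⟩ := u.range.subtype.exists_leftInverse_of_injective u.range.ker_subtype
  refine ⟨s ∘ₗ p, LinearMap.ext fun x => ?_⟩
  have hpx : p (u x) = u.rangeRestrict x := LinearMap.congr_fun hp (u.rangeRestrict x)
  have hsx := congrArg Subtype.val (LinearMap.congr_fun hs (u.rangeRestrict x))
  change u (s (p (u x))) = u x
  rw [hpx]
  exact hsx

/-- A contraction of the complex `(V, d)` onto its homology: `E` is a projection onto a complement
of the boundaries in the cycles, and `h` is a homotopy from `E` to the identity. -/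
structure IsContraction (d h E : Module.End k V) : Prop where
  differential_mul : d * E = 0
  mul_differential : E * d = 0
  mul_self : E * E = E
  homotopy : h * d + d * h + E = 1

theorem exists_isContraction {d : Module.End k V} (hdd : d * d = 0) :
    ∃ h E, IsContraction d h E := by
  obtain ⟨g, hg⟩ := exists_generalizedInverse d
  -- `E₀ = 1 - d g - g d` has the first two properties, and `1 - d g` makes it idempotent.
  obtain ⟨E₀, hE₀⟩ : ∃ E₀, E₀ = 1 - d * g - g * d := ⟨_, rfl⟩
  have hE₀d : E₀ * d = 0 := by
    rw [hE₀, sub_mul, sub_mul, one_mul, hg, mul_assoc, hdd, mul_zero, sub_zero, sub_self]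
  have hdE₀ : d * E₀ = 0 := by
    rw [hE₀, mul_sub, mul_sub, mul_one, ← mul_assoc, ← mul_assoc, hdd, hg, zero_mul, sub_zero,
      sub_self]
  have hE₀E₀ : E₀ * E₀ = (1 - d * g) * E₀ := by
    nth_rw 1 [hE₀]
    rw [sub_mul, mul_assoc g, hdE₀, mul_zero, sub_zero]
  have hproj : (1 - d * g) * (1 - d * g) = 1 - d * g := by
    rw [mul_sub, mul_one, sub_mul, one_mul, ← mul_assoc, hg, sub_self, sub_zero]
  have hE₀proj : E₀ * (1 - d * g) = E₀ := by
    rw [mul_sub, mul_one, ← mul_assoc, hE₀d, zero_mul, sub_zero]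
  refine ⟨g + g * E₀, (1 - d * g) * E₀, ⟨?_, ?_, ?_, ?_⟩⟩
  · rw [sub_mul, one_mul, mul_sub, hdE₀, mul_assoc, ← mul_assoc, hdd, zero_mul, sub_zero]
  · rw [mul_assoc, hE₀d, mul_zero]
  · rw [mul_assoc, ← mul_assoc E₀, hE₀proj, hE₀E₀, ← mul_assoc, hproj]
  · rw [add_mul, mul_assoc g, hE₀d, mul_zero, add_zero, mul_add, sub_mul, one_mul, hE₀]
    noncomm_ring

namespace IsContraction
variable {d h E : Module.End k V} (H : IsContraction d h E)
include H

theorem differential_apply_eq_zero (x : V) : d (E x) = 0 :=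
  LinearMap.congr_fun H.differential_mul x

theorem apply_differential (x : V) : E (d x) = 0 :=
  LinearMap.congr_fun H.mul_differential x

theorem apply_apply (x : V) : E (E x) = E x :=
  LinearMap.congr_fun H.mul_self x

theorem eq_differential_add {x : V} (hx : d x = 0) : x = d (h x) + E x := by
  have hhx := LinearMap.congr_fun H.homotopy x
  rw [LinearMap.add_apply, LinearMap.add_apply, Module.End.mul_apply, hx, map_zero, zero_add] at hhx
  exact hhx.symm

open TensorProduct in
/-- The tensor product of two complexes with differentials `d` and `d'` carries the differential
of `ρ ⊗ ρ'`, where `ρ = 1 + d` and `ρ' = 1 + d'`. -/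
theorem tensor [CharP k 2] {W : Type} [AddCommGroup W] [Module k W] {d' h' E' ρ' : Module.End k W}
    (H' : IsContraction d' h' E') (hρ : ρ' * ρ' = 1) (hdρ : ρ' * d' = d' * ρ') :
    IsContraction (map d ρ' + map 1 d') (map h ρ' + map E h') (map E E') := by
  constructor
  · rw [add_mul, ← TensorProduct.map_mul, ← TensorProduct.map_mul, H.differential_mul,
      H'.differential_mul, map_zero_left, map_zero_right, add_zero]
  · rw [mul_add, ← TensorProduct.map_mul, ← TensorProduct.map_mul, H.mul_differential,
      H'.mul_differential, map_zero_left, map_zero_right, add_zero]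
  · rw [← TensorProduct.map_mul, H.mul_self, H'.mul_self]
  · have htwo := add_self_eq_zero k (map h (d' * ρ'))
    simp only [add_mul, mul_add, ← TensorProduct.map_mul, hρ, hdρ, H.mul_differential,
      H.differential_mul, one_mul, mul_one, map_zero_left, add_zero]
    calc _ = map (h * d + d * h) 1 + map E (h' * d' + d' * h' + E') +
          (map h (d' * ρ') + map h (d' * ρ')) := by
          simp only [map_add_left, map_add_right]; abel
      _ = map (h * d + d * h + E) 1 := by
          rw [H'.homotopy, htwo, add_zero, ← map_add_left]
      _ = 1 := by rw [H.homotopy, TensorProduct.map_one]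

end IsContraction
end Contraction

section Homology
variable {k G : Type} [Field k] [Group G] {z : G} {M : Rep.{0} k G} {h E : Module.End k M.V}

theorem IsContraction.hasTrivialHomology_iff (H : IsContraction (differential z M) h E) :
    HasTrivialHomology z M ↔ E = 0 := by
  refine ⟨fun hM => LinearMap.ext fun x => ?_, fun hE x hx => ⟨h x, ?_⟩⟩
  · obtain ⟨y, hy⟩ := hM (E x) (H.differential_apply_eq_zero x)
    rw [← H.apply_apply, hy, H.apply_differential, LinearMap.zero_apply]
  · conv_lhs => rw [H.eq_differential_add hx, hE, LinearMap.zero_apply, add_zero]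

theorem IsContraction.isHomologyGenerator_iff (H : IsContraction (differential z M) h E) {m : M.V} :
    IsHomologyGenerator z M m ↔
      differential z M m = 0 ∧ E m ≠ 0 ∧ ∀ x, ∃ c : k, E x = c • E m := by
  refine ⟨fun hm => ⟨hm.differential_eq_zero, fun hEm => ?_, fun x => ?_⟩,
    fun ⟨hm, hEm, hE⟩ => ⟨hm, ?_, fun x hx => ?_⟩⟩
  · refine hm.ne_differential (h m) ?_
    conv_lhs => rw [H.eq_differential_add hm.differential_eq_zero, hEm, add_zero]
  · obtain ⟨c, y, hc⟩ := hm.exists_eq (E x) (H.differential_apply_eq_zero x)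
    exact ⟨c, by rw [← H.apply_apply, hc, map_add, map_smul, H.apply_differential, add_zero]⟩
  · rintro y rfl
    exact hEm (H.apply_differential y)
  · obtain ⟨c, hc⟩ := hE x
    refine ⟨c, h x - c • h m, ?_⟩
    have hcm : c • m = c • differential z M (h m) + E x := by
      rw [hc, ← smul_add, ← H.eq_differential_add hm]
    conv_lhs => rw [H.eq_differential_add hx]
    rw [hcm, map_sub, map_smul]
    abel

/-- The endomorphism module of `M`, with the conjugation action. -/
abbrev endRep (M : Rep.{0} k G) : Rep.{0} k G := Rep.of (M.ρ.linHom M.ρ)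

open scoped TensorProduct in
theorem differential_tensor (M N : Rep.{0} k G) : differential z (M ⊗ N) =
    TensorProduct.map (differential z M) (N.ρ z) + TensorProduct.map 1 (differential z N) := by
  refine TensorProduct.ext' fun x y => ?_
  rw [LinearMap.add_apply, TensorProduct.map_tmul, TensorProduct.map_tmul,
    differential_apply, differential_apply, differential_apply, TensorProduct.sub_tmul,
    Module.End.one_apply, TensorProduct.tmul_sub]
  exact (sub_add_sub_cancel _ _ _).symm

variable (hz : IsCentralInvolution z)
include hz

theorem IsCentralInvolution.rho_mul_rho (M : Rep.{0} k G) : M.ρ z * M.ρ z = 1 := by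
  rw [← map_mul, hz.mul_self, map_one]

theorem IsCentralInvolution.differential_endRep (φ : Module.End k M.V) :
    differential z (endRep M) φ = M.ρ z * φ * M.ρ z - φ := by
  refine LinearMap.ext fun x => ?_
  change M.ρ z (φ (M.ρ z⁻¹ x)) - φ x = _
  rw [inv_eq_of_mul_eq_one_left hz.mul_self]
  rfl

variable [CharP k 2]

theorem IsCentralInvolution.exists_isContraction (M : Rep.{0} k G) :
    ∃ h E, IsContraction (differential z M) h E :=
  EndotrivialQuaternion.exists_isContraction (LinearMap.ext (hz.differential_differential M))

theorem IsContraction.linHom (H : IsContraction (differential z M) h E) :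
    IsContraction (differential z (endRep M))
      (LinearMap.mulLeft k h ∘ₗ LinearMap.mulRight k (M.ρ z) +
        LinearMap.mulLeft k E ∘ₗ LinearMap.mulRight k h)
      (LinearMap.mulLeft k E ∘ₗ LinearMap.mulRight k E) := by
  have hρE : M.ρ z * E = E := sub_eq_zero.mp ((sub_one_mul _ _).symm.trans H.differential_mul)
  have hEρ : E * M.ρ z = E := sub_eq_zero.mp ((mul_sub_one _ _).symm.trans H.mul_differential)
  have htwo (φ : Module.End k M.V) : φ + φ = 0 := add_self_eq_zero k φ
  have hhρ : h * M.ρ z + M.ρ z * h = 1 - E := by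
    rw [← H.homotopy, differential, add_sub_cancel_right, mul_sub_one, sub_one_mul,
      ← sub_eq_zero, ← htwo h]
    abel
  have hρρ := hz.rho_mul_rho M
  refine ⟨LinearMap.ext fun φ => ?_, LinearMap.ext fun φ => ?_, LinearMap.ext fun φ => ?_,
    LinearMap.ext fun (φ : Module.End k M.V) => ?_⟩
  · refine (hz.differential_endRep _).trans (sub_eq_zero.mpr ?_)
    change M.ρ z * (E * (φ * E)) * M.ρ z = E * (φ * E)
    rw [← mul_assoc, hρE, mul_assoc, mul_assoc, hEρ]
  · change E * (differential z (endRep M) φ * E) = 0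
    rw [hz.differential_endRep, sub_mul, mul_sub, mul_assoc _ (M.ρ z), hρE, mul_assoc (M.ρ z),
      ← mul_assoc E, hEρ, sub_self]
  · change E * (E * (φ * E) * E) = E * (φ * E)
    rw [mul_assoc E, ← mul_assoc, H.mul_self, mul_assoc φ, H.mul_self]
  · change h * (differential z (endRep M) φ * M.ρ z) + E * (differential z (endRep M) φ * h) +
      differential z (endRep M) (h * (φ * M.ρ z) + E * (φ * h)) + E * (φ * E) = φ
    rw [hz.differential_endRep, hz.differential_endRep]
    calc _ = (h * M.ρ z) * φ * (M.ρ z * M.ρ z) + (E * M.ρ z) * φ * (M.ρ z * h) +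
            (M.ρ z * h) * φ * (M.ρ z * M.ρ z) + (M.ρ z * E) * φ * (h * M.ρ z) + E * φ * E -
            (h * φ * M.ρ z + h * φ * M.ρ z) - (E * φ * h + E * φ * h) := by noncomm_ring
      _ = (h * M.ρ z + M.ρ z * h) * φ + E * φ * (h * M.ρ z + M.ρ z * h) + E * φ * E := by
            rw [hρρ, hEρ, hρE, htwo, htwo]; noncomm_ring
      _ = φ := by rw [hhρ]; noncomm_ring

variable {N : Rep.{0} k G}

theorem IsContraction.tensorRep {h' E' : Module.End k N.V}
    (H : IsContraction (differential z M) h E) (H' : IsContraction (differential z N) h' E') :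
    IsContraction (differential z (M ⊗ N)) (TensorProduct.map h (N.ρ z) + TensorProduct.map E h')
      (TensorProduct.map E E') := by
  rw [differential_tensor]
  exact H.tensor H' (hz.rho_mul_rho N) (LinearMap.ext (hz.rho_differential N z))

theorem HasTrivialHomology.tensor (hM : HasTrivialHomology z M) (N : Rep.{0} k G) :
    HasTrivialHomology z (M ⊗ N) := by
  obtain ⟨h, E, H⟩ := hz.exists_isContraction M
  obtain ⟨h', E', H'⟩ := hz.exists_isContraction N
  rw [(H.tensorRep hz H').hasTrivialHomology_iff, H.hasTrivialHomology_iff.mp hM]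
  exact TensorProduct.map_zero_left _

open scoped TensorProduct in
theorem IsHomologyGenerator.tensor {m : M.V} {n : N.V} (hm : IsHomologyGenerator z M m)
    (hn : IsHomologyGenerator z N n) : IsHomologyGenerator z (M ⊗ N) (m ⊗ₜ[k] n) := by
  obtain ⟨h, E, H⟩ := hz.exists_isContraction M
  obtain ⟨h', E', H'⟩ := hz.exists_isContraction N
  obtain ⟨hdm, hEm, hE⟩ := H.isHomologyGenerator_iff.mp hm
  obtain ⟨hdn, hEn, hE'⟩ := H'.isHomologyGenerator_iff.mp hn
  refine (H.tensorRep hz H').isHomologyGenerator_iff.mpr ⟨?_, fun h0 => ?_, fun w => ?_⟩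
  · rw [differential_tensor]
    simp [hdm, hdn]
  · obtain ⟨f, hf⟩ := Module.Projective.exists_dual_eq_one k hEm
    obtain ⟨g, hg⟩ := Module.Projective.exists_dual_eq_one k hEn
    have hfg := congrArg (LinearMap.mul' k k ∘ₗ TensorProduct.map f g) h0
    simp [hf, hg] at hfg
  · induction w using TensorProduct.induction_on with
    | zero => exact ⟨0, by rw [map_zero, zero_smul]⟩
    | add a b ha hb =>
      obtain ⟨c, hc⟩ := ha
      obtain ⟨c', hc'⟩ := hb
      exact ⟨c + c', by rw [map_add, hc, hc', add_smul]⟩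
    | tmul x y =>
      obtain ⟨c, hc⟩ := hE x
      obtain ⟨c', hc'⟩ := hE' y
      exact ⟨c * c', by
        rw [TensorProduct.map_tmul, TensorProduct.map_tmul, hc, hc', TensorProduct.smul_tmul_smul]⟩

theorem HasRankOneHomology.tensor (hM : HasRankOneHomology z M) (hN : HasRankOneHomology z N) :
    HasRankOneHomology z (M ⊗ N) := by
  obtain ⟨m, hm⟩ := hM
  obtain ⟨n, hn⟩ := hN
  exact ⟨_, hm.tensor hz hn⟩

theorem HomologySimilar.tensor {M' : Rep.{0} k G} (hM : HasRankOneHomology z M)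
    (hM' : HasRankOneHomology z M') (hN : HasRankOneHomology z N) (hMM' : HomologySimilar z M M') :
    HomologySimilar z (M ⊗ N) (M' ⊗ N) := by
  obtain ⟨f, hf⟩ := hMM'
  obtain ⟨m, hm⟩ := hM
  obtain ⟨n, hn⟩ := hN
  exact ⟨f ▷ N, _, (hm.tensor hz hn).differential_eq_zero,
    ((hf.isHomologyGenerator hM' hm).tensor hz hn).ne_differential⟩

end Homology

section ShortExact
variable {k G : Type} [Field k] [Group G]

theorem shortExact_tensor {S : ShortComplex (Rep.{0} k G)} (hS : S.ShortExact)
    (N : Rep.{0} k G) :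
    (ShortComplex.mk (S.f ▷ N) (S.g ▷ N) (by
      rw [← comp_whiskerRight, S.zero, MonoidalPreadditive.zero_whiskerRight])).ShortExact where
  exact := by
    have hex : Function.Exact S.f.hom.toLinearMap S.g.hom.toLinearMap := fun b =>
      ⟨fun hb => exists_f_apply_eq hS hb, fun ⟨a, ha⟩ => ha ▸ g_f_apply S a⟩
    rw [← ShortComplex.exact_map_iff_of_faithful _ (forget₂ (Rep.{0} k G) (ModuleCat k)),
      ShortComplex.moduleCat_exact_iff]
    exact fun b hb => (rTensor_exact N.V hex (surjective_g hS) b).mp hb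
  mono_f := (Rep.mono_iff_injective _).mpr
    (Module.Flat.rTensor_preserves_injective_linearMap S.f.hom.toLinearMap (injective_f hS))
  epi_g := (Rep.epi_iff_surjective _).mpr
    (LinearMap.rTensor_surjective (g := S.g.hom.toLinearMap) N.V (surjective_g hS))

end ShortExact

section Endotrivial
variable {k G : Type} [Field k] [Group G]

theorem differential_trivial (z : G) : differential z (Rep.trivial k G k) = 0 :=
  sub_self (1 : Module.End k k)

theorem isHomologyGenerator_trivial (z : G) :
    IsHomologyGenerator z (Rep.trivial k G k) (1 : k) := by
  refine ⟨?_, fun y => ?_, fun c _ => ⟨c, 0, ?_⟩⟩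
  · rw [differential_trivial, LinearMap.zero_apply]
  · rw [differential_trivial]
    exact one_ne_zero
  · rw [map_zero, add_zero]
    exact (mul_one (c : k)).symm

theorem hasRankOneHomology_trivial (z : G) : HasRankOneHomology z (Rep.trivial k G k) :=
  ⟨_, isHomologyGenerator_trivial z⟩

/-- The morphism from the trivial representation to `endRep M` with value the identity at `1`. -/
def scalarHom (M : Rep.{0} k G) : Rep.trivial k G k ⟶ endRep M :=
  equivariantHom (M := Rep.trivial k G k) (N := endRep M)
    (LinearMap.toSpanSingleton k (Module.End k M.V) 1) fun g c => LinearMap.ext fun x => by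
      change c • x = M.ρ g (c • M.ρ g⁻¹ x)
      rw [map_smul, ← Module.End.mul_apply, ← map_mul, mul_inv_cancel, map_one,
        Module.End.one_apply]

theorem scalarHom_apply (M : Rep.{0} k G) (c : k) :
    (scalarHom M).hom c = c • (1 : Module.End k M.V) := rfl

section CentralInvolution
variable [CharP k 2] {z : G} (hz : IsCentralInvolution z) {M : Rep.{0} k G}
include hz

theorem HasRankOneHomology.isHomologyGenerator_one (hM : HasRankOneHomology z M) :
    IsHomologyGenerator z (endRep M) (1 : Module.End k M.V) := by
  obtain ⟨h, E, H⟩ := hz.exists_isContraction M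
  obtain ⟨m, hm⟩ := hM
  obtain ⟨-, hEm, hE⟩ := H.isHomologyGenerator_iff.mp hm
  refine (H.linHom hz).isHomologyGenerator_iff.mpr ⟨?_, fun h0 => ?_, fun φ => ?_⟩
  · rw [hz.differential_endRep, mul_one, hz.rho_mul_rho, sub_self]
  · have hEE : E * (1 * E) = 0 := h0
    rw [one_mul, H.mul_self] at hEE
    exact hEm (LinearMap.congr_fun hEE m)
  · obtain ⟨c, hc⟩ := hE (φ (E m))
    refine ⟨c, LinearMap.ext fun x => ?_⟩
    change E (φ (E x)) = c • E (E x)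
    obtain ⟨c', hc'⟩ := hE x
    rw [H.apply_apply, hc', map_smul, map_smul, hc, smul_comm]

theorem HasRankOneHomology.of_isEndotrivial [Finite G] (hM : IsEndotrivial M) :
    HasRankOneHomology z M := by
  obtain ⟨-, P, _, ⟨φ⟩⟩ := hM
  obtain ⟨w, hw⟩ : HasRankOneHomology z (endRep M) :=
    (hasRankOneHomology_biprod (hasRankOneHomology_trivial z)
      (hz.hasTrivialHomology_of_projective P)).of_iso φ.symm
  obtain ⟨h, E, H⟩ := hz.exists_isContraction M
  obtain ⟨-, hEw, hE⟩ := (H.linHom hz).isHomologyGenerator_iff.mp hw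
  obtain ⟨x, hx⟩ := DFunLike.ne_iff.mp hEw
  have hEx : E x ≠ 0 := fun h0 => hx (by
    change E (w (E x)) = 0
    rw [h0, map_zero, map_zero])
  obtain ⟨ψ, hψ⟩ := Module.Projective.exists_dual_eq_one k hEx
  -- Test the one-dimensional space of the `E * φ * E` on rank-one operators `ψ(·) y`.
  have hrank (y : M.V) : ∃ c : k, E y = c • E (w (E x)) := by
    obtain ⟨c, hc⟩ := hE (ψ.smulRight y : Module.End k M.V)
    have hcx : E (ψ (E x) • y) = c • E (w (E x)) := LinearMap.congr_fun hc x
    exact ⟨c, by rwa [hψ, one_smul] at hcx⟩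
  refine ⟨E (w (E x)), H.isHomologyGenerator_iff.mpr
    ⟨H.differential_apply_eq_zero _, ?_, fun y => ?_⟩⟩
  · rw [H.apply_apply]
    exact hx
  · rw [H.apply_apply]
    exact hrank y

end CentralInvolution

theorem HasRankOneHomology.isEndotrivial [CharP k 2] {z : G} {M : Rep.{0} k G}
    (hz : DetectsProjectivity z k) [FiniteDimensional k M.V] (hM : HasRankOneHomology z M) :
    IsEndotrivial M := by
  have hone := hM.isHomologyGenerator_one hz.toIsCentralInvolution
  have hscalar : NonzeroOnHomology z (scalarHom M) :=
    ⟨(1 : k), (isHomologyGenerator_trivial z).differential_eq_zero, fun y => by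
      rw [scalarHom_apply, one_smul]
      exact hone.ne_differential y⟩
  have hinjective : Function.Injective (scalarHom M).hom :=
    smul_left_injective k fun h => hone.ne_differential 0 (by rw [h, map_zero])
  have hS := shortExact_cokernel _ hinjective
  have : FiniteDimensional k (endRep M).V :=
    inferInstanceAs (FiniteDimensional k (Module.End k M.V))
  have hcokernel : Projective (cokernel (scalarHom M)) :=
    hz.projective _ (finiteDimensional_X₃ hS) <|
      hscalar.hasTrivialHomology_X₃ hz.toIsCentralInvolution hS (hasRankOneHomology_trivial z)
        ⟨_, hone⟩
  exact ⟨inferInstance, _, hcokernel, ⟨hS.splittingOfProjective.isoBinaryBiproduct⟩⟩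

end Endotrivial

/-! ### Syzygies of endotrivial modules -/

section StableCategory
variable {k G : Type} [Field k] [Group G]

open scoped ZeroObject in
theorem _root_.IsStablyIso.of_iso {M N : Rep.{0} k G} (i : M ≅ N) : IsStablyIso M N :=
  ⟨0, 0, inferInstance, inferInstance, ⟨biprod.mapIso i (Iso.refl 0)⟩⟩

theorem _root_.IsStablyIso.symm {M N : Rep.{0} k G} (h : IsStablyIso M N) : IsStablyIso N M := by
  obtain ⟨P, Q, hP, hQ, ⟨φ⟩⟩ := h
  exact ⟨Q, P, hQ, hP, ⟨φ.symm⟩⟩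

theorem _root_.IsStablyIso.trans {K M N : Rep.{0} k G} (h : IsStablyIso K M)
    (h' : IsStablyIso M N) : IsStablyIso K N := by
  obtain ⟨P, Q, _, _, ⟨φ⟩⟩ := h
  obtain ⟨P', Q', _, _, ⟨ψ⟩⟩ := h'
  let swap : (M ⊞ Q) ⊞ P' ≅ (M ⊞ P') ⊞ Q :=
    biprod.associator M Q P' ≪≫ biprod.mapIso (Iso.refl M) (biprod.braiding Q P') ≪≫
      (biprod.associator M P' Q).symm
  exact ⟨P ⊞ P', Q' ⊞ Q, inferInstance, inferInstance,
    ⟨(biprod.associator K P P').symm ≪≫ biprod.mapIso φ (Iso.refl P') ≪≫ swap ≪≫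
      biprod.mapIso ψ (Iso.refl Q) ≪≫ biprod.associator N Q' Q⟩⟩

theorem _root_.IsEndotrivial.of_iso {M N : Rep.{0} k G} (hM : IsEndotrivial M) (i : M ≅ N) :
    IsEndotrivial N := by
  obtain ⟨_, P, hP, ⟨j⟩⟩ := hM
  let φ := Representation.equivOfIso i
  have hφ (g : G) : φ.toLinearEquiv.conj.toLinearMap ∘ₗ M.ρ.linHom M.ρ g =
      N.ρ.linHom N.ρ g ∘ₗ φ.toLinearEquiv.conj.toLinearMap := by
    ext f n
    exact (Rep.hom_comm_apply i.hom g _).trans (congrArg (fun m => N.ρ g (i.hom.hom (f m)))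
      (Rep.hom_comm_apply i.inv g⁻¹ n).symm)
  exact ⟨.equiv φ.toLinearEquiv, P, hP, ⟨(Rep.mkIso (.mk φ.toLinearEquiv.conj hφ)).symm ≪≫ j⟩⟩

/-- `N` is a syzygy `Ω M` of `M`: the kernel of a surjection onto `M` from a finite-dimensional
projective module, which need not be a projective cover. -/
def IsSyzygy (N M : Rep.{0} k G) : Prop :=
  ∃ (P : Rep.{0} k G) (_ : Projective P) (_ : FiniteDimensional k P.V)
    (f : N ⟶ P) (g : P ⟶ M) (w : f ≫ g = 0), (ShortComplex.mk f g w).ShortExact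

variable [CharP k 2] {z : G} (hz : DetectsProjectivity z k) {M N : Rep.{0} k G}
include hz

theorem DetectsProjectivity.isEndotrivial_iff :
    IsEndotrivial M ↔ FiniteDimensional k M.V ∧ HasRankOneHomology z M := by
  have := hz.finite
  exact ⟨fun h => ⟨h.1, .of_isEndotrivial hz.toIsCentralInvolution h⟩,
    fun ⟨_, h⟩ => h.isEndotrivial hz⟩

theorem DetectsProjectivity.isEndotrivial_trivial : IsEndotrivial (Rep.trivial k G k) :=
  hz.isEndotrivial_iff.mpr
    ⟨inferInstanceAs (FiniteDimensional k k), hasRankOneHomology_trivial z⟩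

theorem _root_.IsEndotrivial.tensor (hM : IsEndotrivial M) (hN : IsEndotrivial N) :
    IsEndotrivial (M ⊗ N) := by
  rw [hz.isEndotrivial_iff] at *
  have := hM.1
  have := hN.1
  exact ⟨inferInstanceAs (FiniteDimensional k (TensorProduct k M.V N.V)),
    hM.2.tensor hz.toIsCentralInvolution hN.2⟩

theorem _root_.IsEndotrivial.isStablyIso_iff (hM : IsEndotrivial M) (hN : IsEndotrivial N) :
    IsStablyIso M N ↔ HomologySimilar z M N := by
  rw [hz.isEndotrivial_iff] at hM hN
  have := hz.finite
  have := hM.1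
  have := hN.1
  exact ⟨.of_isStablyIso hz.toIsCentralInvolution hM.2, fun h => h.isStablyIso hz hM.2 hN.2⟩

theorem _root_.IsStablyIso.tensor (h : IsStablyIso M N) (hM : IsEndotrivial M)
    (hN : IsEndotrivial N) {K : Rep.{0} k G} (hK : IsEndotrivial K) :
    IsStablyIso (M ⊗ K) (N ⊗ K) := by
  rw [hM.isStablyIso_iff hz hN] at h
  rw [(hM.tensor hz hK).isStablyIso_iff hz (hN.tensor hz hK)]
  rw [hz.isEndotrivial_iff] at hM hN hK
  exact h.tensor hz.toIsCentralInvolution hM.2 hN.2 hK.2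

theorem IsSyzygy.isEndotrivial_iff (h : IsSyzygy N M) : IsEndotrivial N ↔ IsEndotrivial M := by
  obtain ⟨P, _, _, f, g, w, hS⟩ := h
  have := hz.finite
  have hP := hz.hasTrivialHomology_of_projective P
  rw [hz.isEndotrivial_iff, hz.isEndotrivial_iff]
  exact ⟨fun hN => ⟨finiteDimensional_X₃ hS,
      hasRankOneHomology_X₃ hz.toIsCentralInvolution hS hP hN.2⟩,
    fun hM => ⟨finiteDimensional_X₁ hS,
      hasRankOneHomology_X₁ hz.toIsCentralInvolution hS hP hM.2⟩⟩

theorem IsSyzygy.isStablyIso_iff {M' N' : Rep.{0} k G} (h : IsSyzygy N M) (h' : IsSyzygy N' M')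
    (hM : IsEndotrivial M) (hM' : IsEndotrivial M') : IsStablyIso N N' ↔ IsStablyIso M M' := by
  rw [hM.isStablyIso_iff hz hM', ((h.isEndotrivial_iff hz).mpr hM).isStablyIso_iff hz
    ((h'.isEndotrivial_iff hz).mpr hM')]
  obtain ⟨P, _, _, f, g, w, hS⟩ := h
  obtain ⟨P', _, _, f', g', w', hS'⟩ := h'
  have := hz.finite
  have hP := hz.hasTrivialHomology_of_projective P
  have hP' := hz.hasTrivialHomology_of_projective P'
  have := injective_of_projective P'
  exact ⟨.cosyzygy hz.toIsCentralInvolution hS hS' hP,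
    .syzygy hz.toIsCentralInvolution hS hS' hP'⟩

theorem IsSyzygy.tensor (h : IsSyzygy N M) (K : Rep.{0} k G) [FiniteDimensional k K.V] :
    IsSyzygy (N ⊗ K) (M ⊗ K) := by
  obtain ⟨P, _, _, f, g, w, hS⟩ := h
  have := hz.finite
  have hfinite : FiniteDimensional k (P ⊗ K).V :=
    inferInstanceAs (FiniteDimensional k (TensorProduct k P.V K.V))
  have hP := (hz.hasTrivialHomology_of_projective P).tensor hz.toIsCentralInvolution K
  exact ⟨P ⊗ K, hz.projective _ hfinite hP, hfinite, _, _, _, shortExact_tensor hS K⟩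

variable (M) in
theorem DetectsProjectivity.exists_isSyzygy [FiniteDimensional k M.V] :
    ∃ N, IsSyzygy N M := by
  have := hz.finite
  cases nonempty_fintype G
  have := (Rep.epi_iff_surjective _).mpr (surjective_functionRepSum M)
  exact ⟨_, functionRep M, hz.projective _ inferInstance (hz.hasTrivialHomology_functionRep M),
    inferInstance, kernel.ι (functionRepSum M), functionRepSum M, kernel.condition _,
    ⟨ShortComplex.exact_kernel _⟩⟩

variable (N) in
theorem DetectsProjectivity.exists_isSyzygy_of [FiniteDimensional k N.V] :
    ∃ M, IsSyzygy N M := by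
  have := hz.finite
  exact ⟨_, functionRep N, hz.projective _ inferInstance (hz.hasTrivialHomology_functionRep N),
    inferInstance, toFunctionRep LinearMap.id, _, _,
    shortExact_cokernel _ (injective_toFunctionRep_id N)⟩

end StableCategory

/-! ### Parity and the four classes of syzygies of the trivial module -/

namespace InvertedCyclic

section Classes

variable {A : Type*} [CommRing A] {q : ℕ} (D : InvertedCyclic A q)
  {M : Type*} [AddCommGroup M] [Module A M]

variable (M) in
/-- Some element annihilated by `X` has a nonzero class in the homology of `X ^ q`. -/
def IsEven : Prop := ∃ m : M, D.X • m = 0 ∧ ∀ y, m ≠ D.X ^ q • y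

variable (M) in
/-- Some multiple of `X ^ (q - 1)` has a nonzero class in the homology of `X ^ q`. -/
def IsOdd : Prop := ∃ w : M, D.norm • w = 0 ∧ ∀ y, D.X ^ (q - 1) • w ≠ D.X ^ q • y

/-- Some element fixed by `θ` and `τ` has a nonzero class in the homology of `X ^ q`; the trivial
module has this property. -/
def HasInvariantClass (S : M →ₛₗ[D.conj] M) : Prop :=
  ∃ x, D.X • x = 0 ∧ S x = x ∧ ∀ y, x ≠ D.X ^ q • y

/-- The property that the first syzygy of a module inherits from `HasInvariantClass`. -/
def HasFirstSyzygyClass (S : M →ₛₗ[D.conj] M) : Prop :=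
  ∃ a b, D.X • a + D.θ • S b + b = 0 ∧
    D.θ' • S a + a + (D.θ' * D.X ^ (q - 1) + D.θ') • b + S b = 0 ∧
    ∀ y, D.X ^ (q - 1) • S b ≠ D.X ^ q • y

/-- The property that the first syzygy of a module inherits from `HasSecondaryClass`. -/
def HasThirdSyzygyClass (S : M →ₛₗ[D.conj] M) : Prop :=
  ∃ n, D.norm • (n + S n) = 0 ∧ ∀ y, D.X ^ (q - 1) • (n + S n) ≠ D.X ^ q • y

end Classes

section Parity

variable {A : Type*} [CommRing A] {q : ℕ} {D : InvertedCyclic A q} [hq : IsQuaternionParameter q]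
  {M : Type*} [AddCommGroup M] [Module A M]
include hq

variable (D) in
theorem X_pow_smul_X_pow_smul (m : M) :
    D.X ^ q • D.X ^ (q - 1) • m = D.norm • m := by
  rw [← mul_smul, ← D.X_mul_X_pow, D.X_mul_X_pow_mul_X_pow]

variable (D) in
theorem X_pow_smul_X_smul (m : M) : D.X ^ (q - 1) • D.X • m = D.X ^ q • m := by
  rw [smul_comm, ← mul_smul, D.X_mul_X_pow]

theorem isEven_or_isOdd {m₀ : M} (hm₀ : D.X ^ q • m₀ = 0) (hne : ∀ y, m₀ ≠ D.X ^ q • y) :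
    D.IsEven M ∨ D.IsOdd M := by
  classical
  have hex : ∃ j, ∃ y, D.X ^ j • m₀ = D.X ^ q • y := ⟨q, 0, by rw [hm₀, smul_zero]⟩
  obtain ⟨j, hj⟩ : ∃ j, Nat.find hex = j + 1 := Nat.exists_eq_succ_of_ne_zero fun h₀ => by
    obtain ⟨y, hy⟩ := Nat.find_spec hex
    rw [h₀, pow_zero, one_smul] at hy
    exact hne y hy
  obtain ⟨y, hy⟩ := Nat.find_spec hex
  have hm := Nat.find_min hex (m := j) (by omega)
  push Not at hm
  rw [hj, pow_succ', mul_smul] at hy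
  set m := D.X ^ j • m₀
  have hXm : D.X ^ q • m = 0 := by rw [smul_comm, hm₀, smul_zero]
  by_cases hbdry : ∃ x, D.X ^ (q - 1) • y = D.X ^ q • x
  · obtain ⟨x, hx⟩ := hbdry
    refine Or.inl ⟨m - D.X ^ (q - 1) • y, ?_, fun x' hx' => hm (x' + x) ?_⟩
    · rw [smul_sub, hy, ← mul_smul, D.X_mul_X_pow, sub_self]
    · rw [smul_add, ← hx', ← hx, sub_add_cancel]
  · push Not at hbdry
    refine Or.inr ⟨y, ?_, hbdry⟩
    rw [← D.X_pow_smul_X_pow_smul, smul_comm, ← hy, D.X_pow_smul_X_smul, hXm]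

theorem IsEvenGenerator.not_isOdd {k : Type*} [Field k] [Algebra k A] {m₀ : M}
    (h : D.IsEvenGenerator k m₀) : ¬ D.IsOdd M := by
  rintro ⟨w, hw, hne⟩
  have hq4 := four_le q
  obtain ⟨c, y, hy⟩ := h.exists_eq (D.X ^ (q - 1) • w) (by rwa [D.X_pow_smul_X_pow_smul])
  have hc : c ≠ 0 := by
    rintro rfl
    exact hne y (by rw [hy, map_zero, zero_smul, zero_add])
  obtain ⟨w', hw'⟩ : ∃ w' : M, m₀ = D.X ^ (q - 1) • w' := by
    refine ⟨algebraMap k A c⁻¹ • (w - D.X • y), ?_⟩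
    rw [smul_comm, smul_sub, D.X_pow_smul_X_smul, hy, add_sub_cancel_right, ← mul_smul, ← map_mul,
      inv_mul_cancel₀ hc, map_one, one_smul]
  obtain ⟨d, y', hd⟩ := h.exists_eq w' (by
    rw [← D.X_mul_X_pow, mul_smul, ← hw', h.X_smul])
  apply h.ne_pow_smul (D.X ^ (q - 1) • y')
  rw [← smul_comm, hw', hd, smul_add, smul_comm, D.pow_smul_eq_zero (by omega) h.X_smul, smul_zero,
    zero_add]

end Parity

/-- A short exact sequence of `A`-modules, compatible with the semilinear operators, whose middle
term is acyclic. -/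
structure AcyclicExtension {A : Type*} [CommRing A] {q : ℕ} (D : InvertedCyclic A q)
    {M₁ M₂ M₃ : Type*} [AddCommGroup M₁] [AddCommGroup M₂] [AddCommGroup M₃] [Module A M₁]
    [Module A M₂] [Module A M₃] (S₁ : M₁ →ₛₗ[D.conj] M₁) (S₂ : M₂ →ₛₗ[D.conj] M₂)
    (S₃ : M₃ →ₛₗ[D.conj] M₃) (f : M₁ →ₗ[A] M₂) (g : M₂ →ₗ[A] M₃) : Prop where
  injective : Function.Injective f
  exact : Function.Exact f g
  surjective : Function.Surjective g
  isAcyclic : D.IsAcyclic M₂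
  f_S : ∀ m, f (S₁ m) = S₂ (f m)
  g_S : ∀ m, g (S₂ m) = S₃ (g m)

namespace AcyclicExtension

variable {A : Type*} [CommRing A] {q : ℕ} {D : InvertedCyclic A q}
  {M₁ M₂ M₃ : Type*} [AddCommGroup M₁] [AddCommGroup M₂] [AddCommGroup M₃] [Module A M₁]
  [Module A M₂] [Module A M₃] {S₁ : M₁ →ₛₗ[D.conj] M₁} {S₂ : M₂ →ₛₗ[D.conj] M₂}
  {S₃ : M₃ →ₛₗ[D.conj] M₃} {f : M₁ →ₗ[A] M₂} {g : M₂ →ₗ[A] M₃}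
  (h : D.AcyclicExtension S₁ S₂ S₃ f g)
include h

theorem exists_f_eq {b : M₂} (hb : g b = 0) : ∃ a, f a = b := (h.exact b).1 hb

theorem eq_of_f_eq {a a' : M₁} (haa' : f a = f a') : a = a' := h.injective haa'

theorem eq_zero_of_f_eq_zero {a : M₁} (ha : f a = 0) : a = 0 :=
  h.injective (ha.trans (map_zero f).symm)

theorem ne_pow_smul {a : M₁} {b : M₂} (hab : f a = D.X ^ q • b)
    (hb : ∀ y, g b ≠ D.X ^ q • y) (y : M₁) : a ≠ D.X ^ q • y := by
  rintro rfl
  obtain ⟨z, hz⟩ := h.isAcyclic (b - f y) (by rw [smul_sub, ← hab, map_smul, sub_self])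
  apply hb (g z)
  rw [← map_smul, ← hz, map_sub, h.exact.apply_apply_eq_zero, sub_zero]

variable [CharP A 2] [hq : IsQuaternionParameter q]
include hq

theorem isOdd_of_isEven (hM₃ : D.IsEven M₃) : D.IsOdd M₁ := by
  obtain ⟨c, hc, hne⟩ := hM₃
  obtain ⟨b, rfl⟩ := h.surjective c
  obtain ⟨a, ha⟩ := h.exists_f_eq (b := D.X • b) (by rw [map_smul, hc])
  refine ⟨a, h.eq_zero_of_f_eq_zero ?_, h.ne_pow_smul ?_ hne⟩
  · rw [map_smul, ha, smul_comm, ← mul_smul, D.X_mul_norm, zero_smul]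
  · rw [map_smul, ha, D.X_pow_smul_X_smul]

theorem isEven_of_isOdd (hM₃ : D.IsOdd M₃) : D.IsEven M₁ := by
  obtain ⟨c, hc, hne⟩ := hM₃
  obtain ⟨b, rfl⟩ := h.surjective c
  obtain ⟨a, ha⟩ := h.exists_f_eq (b := D.norm • b) (by rw [map_smul, hc])
  refine ⟨a, h.eq_zero_of_f_eq_zero ?_, h.ne_pow_smul (b := D.X ^ (q - 1) • b) ?_ ?_⟩
  · rw [map_smul, ha, ← mul_smul, D.X_mul_norm, zero_smul]
  · rw [ha, D.X_pow_smul_X_pow_smul]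
  · simpa only [map_smul] using hne

end AcyclicExtension

section Identities

variable {A : Type*} [CommRing A] {q : ℕ} {D : InvertedCyclic A q}
  {M : Type*} [AddCommGroup M] [Module A M] {S : M →ₛₗ[D.conj] M}

theorem eq_pow_smul_of_θ'_smul_eq {x y : M} (hxy : D.θ' • x = D.X ^ q • y) :
    x = D.X ^ q • D.θ • y := by
  rw [smul_comm, ← hxy, ← mul_smul, D.θ_mul_θ', one_smul]

theorem X_pow_smul_tau_X_smul [IsQuaternionParameter q] (p : M) :
    D.X ^ (q - 1) • S (D.X • p) = D.X ^ q • D.θ' • S p := by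
  rw [map_smulₛₗ, D.conj_X, D.X'_eq_θ'_mul_X, ← mul_smul, ← mul_smul, ← D.X_mul_X_pow]
  congr 1; ring

variable [CharP A 2]

theorem X_smul_tau_add_self (p : M) :
    D.X • (S p + p) + D.θ • S (D.X • p) + D.X • p = 0 := by
  have := CharTwo.two_eq_zero (R := A); have := D.θ_mul_θ'; have := D.X'_eq_θ'_mul_X
  rw [map_smulₛₗ, D.conj_X]
  linear_combination (norm := (match_scalars <;> grind)) (0 : A) • (rfl : p = p)

variable [hq : IsQuaternionParameter q]
include hq

theorem IsTauOperator.firstSyzygy_identity (hS : D.IsTauOperator S) (p : M) :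
    D.θ' • S (S p + p) + (S p + p) + (D.θ' * D.X ^ (q - 1) + D.θ') • D.X • p + S (D.X • p) = 0 := by
  have := CharTwo.two_eq_zero (R := A); have := D.θ_mul_θ'; have := D.X'_eq_θ'_mul_X
  have : D.X' = D.θ' + 1 := rfl
  have : D.X = D.θ + 1 := rfl
  rw [map_add, map_smulₛₗ, D.conj_X, hS.apply_apply, ← D.X_mul_X_pow]
  generalize D.X ^ (q - 1) = Y at *
  linear_combination (norm := (match_scalars <;> grind)) (0 : A) • (rfl : p = p)

theorem IsTauOperator.secondSyzygy_identity (hS : D.IsTauOperator S) (a b : M) :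
    S (D.X • a + D.θ • S b + b) + (D.X • a + D.θ • S b + b) =
      D.X • (D.θ' • S a + a + (D.θ' * D.X ^ (q - 1) + D.θ') • b + S b) := by
  have := CharTwo.two_eq_zero (R := A); have := D.θ_mul_θ'; have := D.X'_eq_θ'_mul_X
  have : D.X' = D.θ' + 1 := rfl
  have : D.X = D.θ + 1 := rfl
  simp only [map_add, map_smulₛₗ, hS.apply_apply, D.conj_X, D.conj_θ, ← D.X_mul_X_pow]
  generalize D.X ^ (q - 1) = Y at *
  linear_combination (norm := (match_scalars <;> grind)) (0 : A) • (rfl : a = a)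

theorem IsTauOperator.secondaryClass_secondSyzygy (hS : D.IsTauOperator S) (a b : M) :
    D.secondaryClass S (D.X • a + D.θ • S b + b)
      (D.θ' • S a + a + (D.θ' * D.X ^ (q - 1) + D.θ') • b + S b) = D.norm • S b := by
  have := CharTwo.two_eq_zero (R := A); have := D.θ_mul_θ'; have := D.X_sq_mul_X_pow_mul_X_pow
  have : D.X = D.θ + 1 := rfl
  simp only [secondaryClass, map_add, map_mul, map_smulₛₗ, hS.apply_apply, D.conj_θ', D.conj_X_pow,
    ← D.X_mul_X_pow_mul_X_pow, ← D.X_mul_X_pow]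
  generalize D.X ^ (q - 1) = Y at *
  linear_combination (norm := (match_scalars <;> grind)) (0 : A) • (rfl : a = a)

theorem IsTauOperator.X_pow_smul_thirdSyzygy (hS : D.IsTauOperator S) (v w : M) :
    D.X ^ (q - 1) • (S v + v + D.X • w + S (S v + v + D.X • w)) =
      D.X ^ q • D.θ' • D.secondaryClass S v w := by
  have := CharTwo.two_eq_zero (R := A); have := D.θ_mul_θ'; have := D.X'_eq_θ'_mul_X
  simp only [secondaryClass, map_add, map_smulₛₗ, hS.apply_apply, D.conj_X, ← D.X_mul_X_pow]
  generalize D.X ^ (q - 1) = Y at *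
  linear_combination (norm := (match_scalars <;> grind)) (0 : A) • (rfl : v = v)

end Identities

namespace AcyclicExtension

variable {A : Type*} [CommRing A] {q : ℕ} {D : InvertedCyclic A q}
  {M₁ M₂ M₃ : Type*} [AddCommGroup M₁] [AddCommGroup M₂] [AddCommGroup M₃] [Module A M₁]
  [Module A M₂] [Module A M₃] {S₁ : M₁ →ₛₗ[D.conj] M₁} {S₂ : M₂ →ₛₗ[D.conj] M₂}
  {S₃ : M₃ →ₛₗ[D.conj] M₃} {f : M₁ →ₗ[A] M₂} {g : M₂ →ₗ[A] M₃}
  (h : D.AcyclicExtension S₁ S₂ S₃ f g) [CharP A 2] [hq : IsQuaternionParameter q]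
include h hq

theorem hasFirstSyzygyClass (hS₂ : D.IsTauOperator S₂) (hM₃ : D.HasInvariantClass S₃) :
    D.HasFirstSyzygyClass S₁ := by
  obtain ⟨x, hX, hSx, hne⟩ := hM₃
  obtain ⟨p, rfl⟩ := h.surjective x
  obtain ⟨a, ha⟩ := h.exists_f_eq (b := S₂ p + p) (by
    rw [map_add, h.g_S, hSx, add_self_eq_zero A])
  obtain ⟨b, hb⟩ := h.exists_f_eq (b := D.X • p) (by rw [map_smul, hX])
  refine ⟨a, b, h.eq_zero_of_f_eq_zero ?_, h.eq_zero_of_f_eq_zero ?_,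
    h.ne_pow_smul (b := D.θ' • S₂ p) ?_ fun y hy => ?_⟩
  · simp only [map_add, map_smul, h.f_S, ha, hb, X_smul_tau_add_self]
  · rw [← hS₂.firstSyzygy_identity p, ← ha, ← hb]
    simp only [map_add, map_smul, h.f_S]
  · rw [map_smul, h.f_S, hb, X_pow_smul_tau_X_smul]
  · rw [map_smul, h.g_S, hSx] at hy
    exact hne _ (eq_pow_smul_of_θ'_smul_eq hy)

theorem hasSecondaryClass (hS₂ : D.IsTauOperator S₂) (hM₃ : D.HasFirstSyzygyClass S₃) :
    D.HasSecondaryClass S₁ := by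
  obtain ⟨a, b, hv, hw, hne⟩ := hM₃
  obtain ⟨a, rfl⟩ := h.surjective a
  obtain ⟨b, rfl⟩ := h.surjective b
  obtain ⟨v, hv⟩ := h.exists_f_eq (b := D.X • a + D.θ • S₂ b + b) (by
    simpa only [map_add, map_smul, h.g_S] using hv)
  obtain ⟨w, hw⟩ := h.exists_f_eq
    (b := D.θ' • S₂ a + a + (D.θ' * D.X ^ (q - 1) + D.θ') • b + S₂ b) (by
      simpa only [map_add, map_smul, h.g_S] using hw)
  refine ⟨v, w, h.eq_of_f_eq ?_, h.ne_pow_smul (b := D.X ^ (q - 1) • S₂ b) ?_ ?_⟩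
  · rw [map_add, h.f_S, map_smul, hv, hw, hS₂.secondSyzygy_identity]
  · rw [D.X_pow_smul_X_pow_smul, ← hS₂.secondaryClass_secondSyzygy a b, ← hv, ← hw]
    simp only [secondaryClass, map_add, map_smul, h.f_S]
  · simpa only [map_smul, h.g_S] using hne

theorem hasThirdSyzygyClass (hS₂ : D.IsTauOperator S₂) (hM₃ : D.HasSecondaryClass S₃) :
    D.HasThirdSyzygyClass S₁ := by
  obtain ⟨v, w, hvw, hne⟩ := hM₃
  obtain ⟨v, rfl⟩ := h.surjective v
  obtain ⟨w, rfl⟩ := h.surjective w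
  obtain ⟨n, hn⟩ := h.exists_f_eq (b := S₂ v + v + D.X • w) (by
    rw [map_add, map_add, h.g_S, map_smul, hvw, add_self_eq_zero A])
  have hpow : f (D.X ^ (q - 1) • (n + S₁ n)) = D.X ^ q • D.θ' • D.secondaryClass S₂ v w := by
    rw [map_smul, map_add, h.f_S, hn, hS₂.X_pow_smul_thirdSyzygy]
  refine ⟨n, h.eq_zero_of_f_eq_zero ?_, h.ne_pow_smul hpow fun y hy => hne (D.θ • y) ?_⟩
  · rw [← D.X_pow_smul_X_pow_smul, map_smul, hpow, ← mul_smul, ← pow_add, ← two_mul,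
      D.X_pow_two_mul_q, zero_smul]
  · rw [← eq_pow_smul_of_θ'_smul_eq ((map_smul g _ _).symm.trans hy)]
    simp only [secondaryClass, map_add, map_smul, h.g_S]

theorem hasInvariantClass (hS₂ : D.IsTauOperator S₂) (hM₃ : D.HasThirdSyzygyClass S₃) :
    D.HasInvariantClass S₁ := by
  obtain ⟨n, hn, hne⟩ := hM₃
  obtain ⟨n, rfl⟩ := h.surjective n
  obtain ⟨m, hm⟩ := h.exists_f_eq (b := D.norm • (n + S₂ n)) (by
    rw [map_smul, map_add, h.g_S, hn])
  refine ⟨m, h.eq_zero_of_f_eq_zero ?_, h.eq_of_f_eq ?_,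
    h.ne_pow_smul (b := D.X ^ (q - 1) • (n + S₂ n)) ?_ ?_⟩
  · rw [map_smul, hm, ← mul_smul, D.X_mul_norm, zero_smul]
  · have hXq : D.X ^ q • D.norm • n = 0 := by
      rw [← D.X_mul_X_pow, mul_comm, mul_smul, ← mul_smul D.X, D.X_mul_norm, zero_smul, smul_zero]
    rw [h.f_S, hm, map_smulₛₗ, D.conj_norm, map_add, hS₂.apply_apply, add_smul, one_smul, smul_add,
      smul_add, smul_comm D.norm, hXq, add_zero, smul_add, add_comm]
  · rw [hm, D.X_pow_smul_X_pow_smul]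
  · simpa only [map_smul, map_add, h.g_S] using hne

end AcyclicExtension
end InvertedCyclic

section Transfer
open CyclicAlgebra

variable {k : Type} [Field k] [CharP k 2] {q : ℕ} [IsQuaternionParameter q] {G : Type} [Group G]
  (e : G ≃* QuaternionGroup q)

/-- A morphism of representations, as a linear map over the group algebra of the cyclic
subgroup. -/
noncomputable def cyclicLinearMap {M N : Rep.{0} k G} (f : M ⟶ N) :
    letI := cyclicModule e M
    letI := cyclicModule e N
    M.V →ₗ[CyclicAlgebra k q] N.V :=
  letI := cyclicModule e M
  letI := cyclicModule e N
  { f.hom.toLinearMap.toAddMonoidHom with map_smul' := hom_cyclicAction e f }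

theorem IsSyzygy.exists_acyclicExtension {M N : Rep.{0} k G} (h : IsSyzygy N M) :
    ∃ (P : Rep.{0} k G) (f : N ⟶ P) (g : P ⟶ M),
      letI := cyclicModule e N
      letI := cyclicModule e P
      letI := cyclicModule e M
      (data k q).AcyclicExtension (tauOperator e N) (tauOperator e P) (tauOperator e M)
        (cyclicLinearMap e f) (cyclicLinearMap e g) := by
  obtain ⟨P, _, -, f, g, w, hS⟩ := h
  have := finite_of_mulEquiv e
  have hP := (isCentralInvolution_centralElement e).hasTrivialHomology_of_projective P
  let _ := cyclicModule e N
  let _ := cyclicModule e P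
  let _ := cyclicModule e M
  refine ⟨P, f, g, injective_f hS, fun b => ⟨exists_f_apply_eq hS, ?_⟩, surjective_g hS,
    fun m hm => ?_, Rep.hom_comm_apply f _, Rep.hom_comm_apply g _⟩
  · rintro ⟨a, rfl⟩
    exact g_f_apply (ShortComplex.mk f g w) a
  · obtain ⟨y, hy⟩ := hP m ((cyclicAction_X_pow_q e P m).symm.trans hm)
    exact ⟨y, hy.trans (cyclicAction_X_pow_q e P y).symm⟩

variable (M : Rep.{0} k G)

/-- `InvertedCyclic.IsEven` for a representation. -/
def IsEven : Prop :=
  letI := cyclicModule e M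
  (data k q).IsEven M.V

/-- `InvertedCyclic.IsOdd` for a representation. -/
def IsOdd : Prop :=
  letI := cyclicModule e M
  (data k q).IsOdd M.V

/-- `InvertedCyclic.HasInvariantClass` for a representation. -/
def HasInvariantClass : Prop :=
  letI := cyclicModule e M
  (data k q).HasInvariantClass (tauOperator e M)

/-- `InvertedCyclic.HasFirstSyzygyClass` for a representation. -/
def HasFirstSyzygyClass : Prop :=
  letI := cyclicModule e M
  (data k q).HasFirstSyzygyClass (tauOperator e M)

/-- `InvertedCyclic.HasSecondaryClass` for a representation. -/
def HasSecondaryClass : Prop :=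
  letI := cyclicModule e M
  (data k q).HasSecondaryClass (tauOperator e M)

/-- `InvertedCyclic.HasThirdSyzygyClass` for a representation. -/
def HasThirdSyzygyClass : Prop :=
  letI := cyclicModule e M
  (data k q).HasThirdSyzygyClass (tauOperator e M)

variable {M}

theorem isEven_iff : IsEven e M ↔ ∃ m, cyclicAction e M (data k q).X m = 0 ∧
    ∀ y, m ≠ differential (centralElement e) M y := by
  simp only [← cyclicAction_X_pow_q]
  rfl

theorem hasInvariantClass_iff : HasInvariantClass e M ↔ ∃ m,
    cyclicAction e M (data k q).X m = 0 ∧ M.ρ (tau e) m = m ∧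
      ∀ y, m ≠ differential (centralElement e) M y := by
  simp only [← cyclicAction_X_pow_q]
  rfl

theorem hasSecondaryClass_iff : HasSecondaryClass e M ↔ ∃ v w,
    M.ρ (tau e) v + v = cyclicAction e M (data k q).X w ∧
      ∀ y, M.ρ (tau e) w + cyclicAction e M (data k q).θ w +
        cyclicAction e M ((data k q).θ * (data k q).X ^ (q - 1)) v ≠
          differential (centralElement e) M y := by
  simp only [← cyclicAction_X_pow_q]
  rfl

section Syzygy

variable {N : Rep.{0} k G} (h : IsSyzygy N M)
include h

theorem IsSyzygy.isOdd (hM : IsEven e M) : IsOdd e N := by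
  obtain ⟨P, f, g, hE⟩ := h.exists_acyclicExtension e
  let _ := cyclicModule e N
  let _ := cyclicModule e P
  let _ := cyclicModule e M
  exact hE.isOdd_of_isEven hM

theorem IsSyzygy.isEven (hM : IsOdd e M) : IsEven e N := by
  obtain ⟨P, f, g, hE⟩ := h.exists_acyclicExtension e
  let _ := cyclicModule e N
  let _ := cyclicModule e P
  let _ := cyclicModule e M
  exact hE.isEven_of_isOdd hM

theorem IsSyzygy.hasFirstSyzygyClass (hM : HasInvariantClass e M) : HasFirstSyzygyClass e N := by
  obtain ⟨P, f, g, hE⟩ := h.exists_acyclicExtension e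
  let _ := cyclicModule e N
  let _ := cyclicModule e P
  let _ := cyclicModule e M
  exact hE.hasFirstSyzygyClass (isTauOperator_tauOperator e P) hM

theorem IsSyzygy.hasSecondaryClass (hM : HasFirstSyzygyClass e M) : HasSecondaryClass e N := by
  obtain ⟨P, f, g, hE⟩ := h.exists_acyclicExtension e
  let _ := cyclicModule e N
  let _ := cyclicModule e P
  let _ := cyclicModule e M
  exact hE.hasSecondaryClass (isTauOperator_tauOperator e P) hM

theorem IsSyzygy.hasThirdSyzygyClass (hM : HasSecondaryClass e M) : HasThirdSyzygyClass e N := by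
  obtain ⟨P, f, g, hE⟩ := h.exists_acyclicExtension e
  let _ := cyclicModule e N
  let _ := cyclicModule e P
  let _ := cyclicModule e M
  exact hE.hasThirdSyzygyClass (isTauOperator_tauOperator e P) hM

theorem IsSyzygy.hasInvariantClass (hM : HasThirdSyzygyClass e M) : HasInvariantClass e N := by
  obtain ⟨P, f, g, hE⟩ := h.exists_acyclicExtension e
  let _ := cyclicModule e N
  let _ := cyclicModule e P
  let _ := cyclicModule e M
  exact hE.hasInvariantClass (isTauOperator_tauOperator e P) hM

end Syzygy

section Endotrivial

variable {N : Rep.{0} k G}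

theorem isHomologyGenerator_of_cyclicAction_X_eq_zero (hM : IsEndotrivial M) {m : M.V}
    (hm : cyclicAction e M (data k q).X m = 0)
    (hne : ∀ y, m ≠ differential (centralElement e) M y) :
    IsHomologyGenerator (centralElement e) M m := by
  have hq4 := four_le q
  refine (((detectsProjectivity_centralElement k e).isEndotrivial_iff).mp
    hM).2.isHomologyGenerator ?_ hne
  rw [← cyclicAction_X_pow_q, cyclicAction_X_pow_eq_zero e hm (by omega)]

theorem IsHomologyGenerator.isEvenGenerator {m : M.V}
    (h : IsHomologyGenerator (centralElement e) M m)
    (hm : cyclicAction e M (data k q).X m = 0) :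
    letI := cyclicModule e M
    (data k q).IsEvenGenerator k m := by
  let _ := cyclicModule e M
  refine ⟨hm, fun y hy => h.ne_differential y (hy.trans (cyclicAction_X_pow_q e M y)),
    fun m' hm' => ?_⟩
  obtain ⟨c, y, rfl⟩ := h.exists_eq m' ((cyclicAction_X_pow_q e M m').symm.trans hm')
  exact ⟨c, y, congrArg₂ (· + ·) (cyclicAction_algebraMap e M c m).symm
    (cyclicAction_X_pow_q e M y).symm⟩

theorem _root_.IsEndotrivial.isEven_or_isOdd (hM : IsEndotrivial M) : IsEven e M ∨ IsOdd e M := by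
  obtain ⟨m, hm⟩ := ((detectsProjectivity_centralElement k e).isEndotrivial_iff.mp hM).2
  let _ := cyclicModule e M
  exact (data k q).isEven_or_isOdd
    ((cyclicAction_X_pow_q e M m).trans hm.differential_eq_zero)
    fun y hy => hm.ne_differential y (hy.trans (cyclicAction_X_pow_q e M y))

theorem IsEven.not_isOdd (hM : IsEndotrivial M) (h : IsEven e M) : ¬ IsOdd e M := by
  obtain ⟨m, hm, hne⟩ := (isEven_iff e).mp h
  let _ := cyclicModule e M
  exact ((isHomologyGenerator_of_cyclicAction_X_eq_zero e hM hm hne).isEvenGenerator e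
    hm).not_isOdd

theorem IsEven.of_isStablyIso (hM : IsEndotrivial M) (hN : IsEndotrivial N)
    (hMN : IsStablyIso M N) (h : IsEven e M) : IsEven e N := by
  have hz := detectsProjectivity_centralElement k e
  obtain ⟨f, hf⟩ := (hM.isStablyIso_iff hz hN).mp hMN
  obtain ⟨m, hm, hne⟩ := (isEven_iff e).mp h
  have hfm := hf.isHomologyGenerator (hz.isEndotrivial_iff.mp hN).2
    (isHomologyGenerator_of_cyclicAction_X_eq_zero e hM hm hne)
  exact (isEven_iff e).mpr ⟨f.hom m, by rw [← hom_cyclicAction, hm, map_zero], hfm.ne_differential⟩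

theorem HasInvariantClass.isEven (h : HasInvariantClass e M) : IsEven e M := by
  obtain ⟨m, hm, -, hne⟩ := (hasInvariantClass_iff e).mp h
  exact (isEven_iff e).mpr ⟨m, hm, hne⟩

theorem hasInvariantClass_iff_isStablyIso (hM : IsEndotrivial M) :
    HasInvariantClass e M ↔ IsStablyIso (Rep.trivial k G k) M := by
  have hz := detectsProjectivity_centralElement k e
  rw [hz.isEndotrivial_trivial.isStablyIso_iff hz hM, hasInvariantClass_iff]
  constructor
  · rintro ⟨m, hX, hτ, hne⟩
    have hθ := (cyclicAction_X_eq_zero_iff e).mp hX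
    let f : Rep.trivial k G k ⟶ M := equivariantHom (LinearMap.toSpanSingleton k M.V m)
      fun g c => by
        change c • m = M.ρ g (c • m)
        rw [map_smul, rho_apply_eq_self e hθ hτ]
    refine ⟨f, (1 : k), (isHomologyGenerator_trivial _).differential_eq_zero, fun y => ?_⟩
    change (1 : k) • m ≠ _
    rw [one_smul]
    exact hne y
  · rintro ⟨f, hf⟩
    have hfixed (g : G) : M.ρ g (f.hom (1 : k)) = f.hom (1 : k) :=
      (Rep.hom_comm_apply f g (1 : k)).symm
    exact ⟨f.hom (1 : k), (cyclicAction_X_eq_zero_iff e).mpr (hfixed _), hfixed _,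
      (hf.isHomologyGenerator (hz.isEndotrivial_iff.mp hM).2
        (isHomologyGenerator_trivial _)).ne_differential⟩

theorem cyclicAction_X_secondaryClass {v w : M.V}
    (h : M.ρ (tau e) v + v = cyclicAction e M (data k q).X w) :
    cyclicAction e M (data k q).X (M.ρ (tau e) w + cyclicAction e M (data k q).θ w +
        cyclicAction e M ((data k q).θ * (data k q).X ^ (q - 1)) v) = 0 ∧
      M.ρ (tau e) (M.ρ (tau e) w + cyclicAction e M (data k q).θ w +
        cyclicAction e M ((data k q).θ * (data k q).X ^ (q - 1)) v) +
      (M.ρ (tau e) w + cyclicAction e M (data k q).θ w +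
        cyclicAction e M ((data k q).θ * (data k q).X ^ (q - 1)) v) =
      cyclicAction e M (data k q).norm v := by
  let _ := cyclicModule e M
  obtain ⟨hX, hSκ⟩ := (isTauOperator_tauOperator e M).secondaryClass_identities (m₀ := 0) (a := 0)
    (v := v) (w := w) (map_zero _) (smul_zero _) (by rw [map_zero, zero_smul, zero_smul])
    rfl (by rw [zero_smul, zero_add]; exact h)
  rw [zero_mul, zero_smul, add_zero] at hX hSκ
  rw [add_zero, one_smul, zero_mul, zero_smul, add_zero] at hSκ
  exact ⟨hX, hSκ⟩

theorem HasSecondaryClass.isEven (h : HasSecondaryClass e M) : IsEven e M := by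
  obtain ⟨v, w, hvw, hne⟩ := (hasSecondaryClass_iff e).mp h
  exact (isEven_iff e).mpr ⟨_, (cyclicAction_X_secondaryClass e hvw).1, hne⟩

open scoped TensorProduct in
theorem IsEven.tensor (hM : IsEndotrivial M) (hN : IsEndotrivial N) (h : IsEven e M)
    (h' : IsEven e N) : IsEven e (M ⊗ N) := by
  obtain ⟨m, hm, hne⟩ := (isEven_iff e).mp h
  obtain ⟨n, hn, hne'⟩ := (isEven_iff e).mp h'
  have hmn := (isHomologyGenerator_of_cyclicAction_X_eq_zero e hM hm hne).tensor
    (isCentralInvolution_centralElement e)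
    (isHomologyGenerator_of_cyclicAction_X_eq_zero e hN hn hne')
  rw [cyclicAction_X_eq_zero_iff] at hm hn
  refine (isEven_iff e).mpr ⟨m ⊗ₜ[k] n, (cyclicAction_X_eq_zero_iff e).mpr ?_,
    hmn.ne_differential⟩
  change (M.ρ (theta e) m) ⊗ₜ[k] (N.ρ (theta e) n) = _
  rw [hm, hn]

theorem HasSecondaryClass.of_isStablyIso (hM : IsEndotrivial M) (hN : IsEndotrivial N)
    (hMN : IsStablyIso M N) (h : HasSecondaryClass e M) : HasSecondaryClass e N := by
  have hz := detectsProjectivity_centralElement k e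
  obtain ⟨f, hf⟩ := (hM.isStablyIso_iff hz hN).mp hMN
  obtain ⟨v, w, hvw, hne⟩ := (hasSecondaryClass_iff e).mp h
  have hκ := hf.isHomologyGenerator (hz.isEndotrivial_iff.mp hN).2
    (isHomologyGenerator_of_cyclicAction_X_eq_zero e hM
      (cyclicAction_X_secondaryClass e hvw).1 hne)
  refine (hasSecondaryClass_iff e).mpr ⟨f.hom v, f.hom w, ?_, fun y => ?_⟩
  · rw [← hom_cyclicAction, ← hvw, map_add, Rep.hom_comm_apply]
  · rw [← hom_cyclicAction, ← hom_cyclicAction, ← Rep.hom_comm_apply, ← map_add, ← map_add]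
    exact hκ.ne_differential y

theorem not_hasSecondaryClass_trivial : ¬ HasSecondaryClass e (Rep.trivial k G k) := by
  have hq4 := four_le q
  rintro h
  obtain ⟨v, w, -, hne⟩ := (hasSecondaryClass_iff e).mp h
  have hX (m : k) : cyclicAction e (Rep.trivial k G k) (data k q).X m = 0 :=
    (cyclicAction_X_eq_zero_iff e).mpr rfl
  refine hne 0 ?_
  rw [map_mul, Module.End.mul_apply, cyclicAction_X_pow_eq_zero e (hX v) (by omega), map_zero,
    map_zero, add_zero, cyclicAction_θ, Rep.trivial_ρ_apply, Rep.trivial_ρ_apply]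
  exact add_self_eq_zero k _

theorem HasSecondaryClass.exists_isSyzygy_isSyzygy (hM : IsEndotrivial M)
    (h : HasSecondaryClass e M) : ∃ M₁ M₂, IsSyzygy M₁ M ∧ IsSyzygy M₂ M₁ ∧ IsEndotrivial M₁ ∧
      IsStablyIso (Rep.trivial k G k) M₂ := by
  have hz := detectsProjectivity_centralElement k e
  have := hM.1
  obtain ⟨M₁, h₁⟩ := hz.exists_isSyzygy M
  have hM₁ := (h₁.isEndotrivial_iff hz).mpr hM
  have := hM₁.1
  obtain ⟨M₂, h₂⟩ := hz.exists_isSyzygy M₁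
  have hM₂ := h₂.hasInvariantClass e (h₁.hasThirdSyzygyClass e h)
  exact ⟨M₁, M₂, h₁, h₂, hM₁,
    (hasInvariantClass_iff_isStablyIso e ((h₂.isEndotrivial_iff hz).mpr hM₁)).mp hM₂⟩

theorem HasSecondaryClass.isStablyIso (hM : IsEndotrivial M) (hN : IsEndotrivial N)
    (h : HasSecondaryClass e M) (h' : HasSecondaryClass e N) : IsStablyIso M N := by
  have hz := detectsProjectivity_centralElement k e
  obtain ⟨M₁, M₂, h₁, h₂, hM₁, hM₂⟩ := h.exists_isSyzygy_isSyzygy e hM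
  obtain ⟨N₁, N₂, h₁', h₂', hN₁, hN₂⟩ := h'.exists_isSyzygy_isSyzygy e hN
  exact (h₁.isStablyIso_iff hz h₁' hM hN).mp
    ((h₂.isStablyIso_iff hz h₂' hM₁ hN₁).mp (hM₂.symm.trans hN₂))

end Endotrivial

end Transfer

/-! ### The exotic endotrivial module -/

section ExoticModule
open CyclicAlgebra

variable {k : Type} [Field k] {q : ℕ} {G : Type} [Group G] (e : G ≃* QuaternionGroup q)

/-- The linear map from the exotic module which sends `(1, 0)` to `v` and `(0, 1)` to `n`. -/
noncomputable def exoticLift {M : Rep.{0} k G} (v n : M.V) : CyclicAlgebra k q × k →ₗ[k] M.V :=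
  ((cyclicAction e M).toLinearMap.flip v).coprod (LinearMap.toSpanSingleton k M.V n)

theorem exoticLift_apply {M : Rep.{0} k G} (v n : M.V) (x : CyclicAlgebra k q × k) :
    exoticLift e v n x = cyclicAction e M x.1 v + x.2 • n := rfl

variable [CharP k 2] [IsQuaternionParameter q]

theorem differential_exoticModule (x : CyclicAlgebra k q × k) :
    differential (centralElement e) (exoticModule k e) x = ((data k q).X ^ q * x.1, 0) := by
  have := four_le q
  rw [← cyclicAction_X_pow_q, cyclicAction_exoticModule, augmentation_X_pow k q (by omega),
    zero_mul]

theorem cyclicAction_X_exoticModule_zero_one :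
    cyclicAction e (exoticModule k e) (data k q).X ((0, 1) : CyclicAlgebra k q × k) = 0 := by
  rw [cyclicAction_exoticModule, augmentation_X, mul_zero, zero_mul]
  rfl

theorem isHomologyGenerator_exoticModule : IsHomologyGenerator (centralElement e)
    (exoticModule k e) ((0, 1) : CyclicAlgebra k q × k) := by
  refine ⟨?_, fun y hy => ?_, fun x hx => ?_⟩
  · rw [differential_exoticModule, mul_zero]
    rfl
  · rw [differential_exoticModule] at hy
    exact one_ne_zero (congrArg Prod.snd hy)
  · rw [differential_exoticModule] at hx
    obtain ⟨b, hb⟩ := exists_eq_X_pow_mul k q (show q ≤ 2 * q by omega) (congrArg Prod.fst hx)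
    rw [show 2 * q - q = q by omega] at hb
    refine ⟨x.2, ((b, 0) : CyclicAlgebra k q × k), ?_⟩
    rw [differential_exoticModule, ← hb]
    change x = x.2 • ((0, 1) : CyclicAlgebra k q × k) + (x.1, 0)
    ext1 <;> simp

theorem isEndotrivial_exoticModule : IsEndotrivial (exoticModule k e) :=
  (detectsProjectivity_centralElement k e).isEndotrivial_iff.mpr
    ⟨inferInstanceAs (FiniteDimensional k (CyclicAlgebra k q × k)),
      _, isHomologyGenerator_exoticModule e⟩

theorem isEven_exoticModule : IsEven e (exoticModule k e) :=
  (isEven_iff e).mpr ⟨_, cyclicAction_X_exoticModule_zero_one e,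
    (isHomologyGenerator_exoticModule e).ne_differential⟩

theorem exoticModule_tau_one_zero :
    (exoticModule k e).ρ (tau e) ((1, 0) : CyclicAlgebra k q × k) +
      cyclicAction e (exoticModule k e) (exotic k q).c' ((1, 0) : CyclicAlgebra k q × k) =
        ((0, 1) : CyclicAlgebra k q × k) := by
  rw [exoticModule_tau, exoticTau_apply, cyclicAction_exoticModule]
  dsimp only
  rw [map_one, map_one, one_mul, mul_one, mul_zero, zero_smul, add_zero, add_zero]
  change ((exotic k q).c' + (exotic k q).c', (1 : k) + 0) = _
  rw [CharTwo.add_self_eq_zero, add_zero]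

/-- `InvertedCyclic.ExoticElements.HasExoticClass` for a representation. -/
def HasExoticClass (M : Rep.{0} k G) : Prop :=
  letI := cyclicModule e M
  (exotic k q).HasExoticClass (tauOperator e M)

theorem hasExoticClass_iff {M : Rep.{0} k G} : HasExoticClass e M ↔ ∃ v,
    cyclicAction e M (data k q).X (M.ρ (tau e) v + cyclicAction e M (exotic k q).c' v) = 0 ∧
      ∀ y, M.ρ (tau e) v + cyclicAction e M (exotic k q).c' v ≠
        differential (centralElement e) M y := by
  simp only [← cyclicAction_X_pow_q]
  rfl

theorem exists_hom_exoticModule {M : Rep.{0} k G} {v n : M.V}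
    (hn : M.ρ (tau e) v + cyclicAction e M (exotic k q).c' v = n)
    (hX : cyclicAction e M (data k q).X n = 0) :
    ∃ f : exoticModule k e ⟶ M, f.hom ((0, 1) : CyclicAlgebra k q × k) = n := by
  have hτv : M.ρ (tau e) v = cyclicAction e M (exotic k q).c' v + n := by
    rw [← hn, add_comm, add_assoc, add_self_eq_zero k, add_zero]
  have hτn : M.ρ (tau e) n = cyclicAction e M (data k q).norm v + n := by
    let _ := cyclicModule e M
    have h := (exotic k q).apply_add_c_smul (isTauOperator_tauOperator e M) v
    change M.ρ (tau e) (M.ρ (tau e) v + cyclicAction e M (exotic k q).c' v) +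
      (exotic k q).c • (M.ρ (tau e) v + cyclicAction e M (exotic k q).c' v) =
        cyclicAction e M (data k q).norm v at h
    rw [hn, (exotic k q).c_smul hX] at h
    rw [← h, add_assoc, add_self_eq_zero k, add_zero]
  have hθ (x : CyclicAlgebra k q × k) : exoticLift e v n ((exoticModule k e).ρ (theta e) x) =
      M.ρ (theta e) (exoticLift e v n x) := by
    rw [← cyclicAction_θ, ← cyclicAction_θ, cyclicAction_exoticModule, exoticLift_apply,
      exoticLift_apply, map_mul, Module.End.mul_apply, map_add, map_smul,
      cyclicAction_eq_augmentation_smul e hX, mul_smul, smul_comm]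
  have hτ (x : CyclicAlgebra k q × k) : exoticLift e v n ((exoticModule k e).ρ (tau e) x) =
      M.ρ (tau e) (exoticLift e v n x) := by
    rw [exoticModule_tau, exoticTau_apply, exoticLift_apply, exoticLift_apply,
      map_add (M.ρ (tau e)), map_smul (M.ρ (tau e)), hτn, tau_cyclicAction, hτv,
      map_add (cyclicAction e M _), cyclicAction_eq_augmentation_smul e hX,
      augmentation_conj, map_add, map_smul, map_mul]
    simp only [LinearMap.add_apply, LinearMap.smul_apply, Module.End.mul_apply, add_smul, smul_add]
    abel
  refine ⟨equivariantHom (M := exoticModule k e) (exoticLift e v n)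
    (intertwines_of_theta_of_tau e (exoticModule k e).ρ M.ρ _ hθ hτ), ?_⟩
  change exoticLift e v n (0, 1) = n
  rw [exoticLift_apply, map_zero, LinearMap.zero_apply, zero_add, one_smul]

theorem HasExoticClass.isStablyIso {M : Rep.{0} k G} (hM : IsEndotrivial M)
    (h : HasExoticClass e M) : IsStablyIso (exoticModule k e) M := by
  obtain ⟨v, hX, hne⟩ := (hasExoticClass_iff e).mp h
  obtain ⟨f, hf⟩ := exists_hom_exoticModule e rfl hX
  exact ((isEndotrivial_exoticModule e).isStablyIso_iff
    (detectsProjectivity_centralElement k e) hM).mpr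
      ⟨f, _, (isHomologyGenerator_exoticModule e).differential_eq_zero, by rwa [hf]⟩

theorem not_isStablyIso_exoticModule_trivial :
    ¬ IsStablyIso (exoticModule k e) (Rep.trivial k G k) := by
  have hz := detectsProjectivity_centralElement k e
  rw [(isEndotrivial_exoticModule e).isStablyIso_iff hz hz.isEndotrivial_trivial]
  rintro ⟨f, hf⟩
  refine (hf.isHomologyGenerator (hasRankOneHomology_trivial _)
    (isHomologyGenerator_exoticModule e)).ne_differential 0 ?_
  have hX (m : k) : cyclicAction e (Rep.trivial k G k) (data k q).X m = 0 :=
    (cyclicAction_X_eq_zero_iff e).mpr rfl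
  rw [map_zero, ← exoticModule_tau_one_zero e, map_add, Rep.hom_comm_apply, hom_cyclicAction,
    Rep.trivial_ρ_apply, cyclicAction_eq_augmentation_smul e (hX _), augmentation_c', one_smul,
    add_self_eq_zero k]

theorem not_hasSecondaryClass_exoticModule : ¬ HasSecondaryClass e (exoticModule k e) := by
  have hq4 := four_le q
  intro h
  obtain ⟨v, w, hvw, hne⟩ := (hasSecondaryClass_iff e).mp h
  obtain ⟨hX, hτ⟩ := cyclicAction_X_secondaryClass e hvw
  generalize (exoticModule k e).ρ (tau e) w + _ + _ = κ at hX hτ hne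
  rw [exoticModule_tau, exoticTau_apply, cyclicAction_exoticModule] at hvw hτ
  rw [cyclicAction_exoticModule] at hX
  have hv : augmentation k q v.1 = 0 := by
    have h := congrArg Prod.snd hvw
    change augmentation k q v.1 + v.2 + v.2 = augmentation k q (data k q).X * w.2 at h
    rwa [augmentation_X, zero_mul, add_assoc, CharTwo.add_self_eq_zero, add_zero] at h
  obtain ⟨b, hb⟩ := exists_eq_X_pow_mul k q (show 1 ≤ 2 * q by omega)
    ((congrArg (· * κ.1) (pow_one _)).trans (congrArg Prod.fst hX))
  have hκ₁ : κ.1 = augmentation k q b • (data k q).norm := by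
    rw [hb, ← mul_norm, mul_comm, InvertedCyclic.norm]
  have hκ₂ : κ.2 • (data k q).norm = 0 := by
    have h := congrArg Prod.fst hτ
    change (data k q).conj κ.1 * (exotic k q).c' + κ.2 • (data k q).norm + κ.1 =
      (data k q).norm * v.1 at h
    rwa [hκ₁, conj_smul, (data k q).conj_norm, smul_mul_assoc, mul_comm (data k q).norm,
      mul_norm, augmentation_c', one_smul, add_right_comm, add_self_eq_zero k, zero_add,
      mul_comm _ v.1, mul_norm, hv, zero_smul] at h
  refine hne (((data k q).X ^ (q - 1) * b, 0) : CyclicAlgebra k q × k) ?_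
  rw [differential_exoticModule]
  refine Prod.ext ?_ ((smul_eq_zero.mp hκ₂).resolve_right (norm_ne_zero k q))
  rw [hb, ← mul_assoc, ← pow_add]
  congr 2
  omega

end ExoticModule

/-! ### The invariant form on the exotic module -/

section InvariantForm
open CyclicAlgebra

/-- The element `θ ^ (q / 2)` of the cyclic subgroup. -/
def sqrtCentral (q : ℕ) : Multiplicative (ZMod (2 * q)) :=
  Multiplicative.ofAdd ((q / 2 : ℕ) : ZMod (2 * q))

theorem sqrtCentral_mul_self (q : ℕ) [IsQuaternionParameter q] :
    sqrtCentral q * sqrtCentral q = Multiplicative.ofAdd (q : ZMod (2 * q)) := by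
  rw [sqrtCentral, ← ofAdd_add, ← Nat.cast_add, ← two_mul, two_mul_half_parameter]

variable (k : Type) [Field k] (q : ℕ)

/-- The coefficient of `θ ^ (q / 2)` in an element of the group algebra of `⟨θ⟩`. -/
noncomputable def middleCoeff : CyclicAlgebra k q →ₗ[k] k :=
  Finsupp.lapply (sqrtCentral q) ∘ₗ (MonoidAlgebra.coeffLinearEquiv k).toLinearMap

theorem middleCoeff_apply (a : CyclicAlgebra k q) :
    middleCoeff k q a = a.coeff (sqrtCentral q) := rfl

/-- The invariant form on the exotic module by which it is stably self-dual. The coefficient is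
taken at `θ ^ (q / 2)` because `g ↦ g⁻¹ * θ ^ q` fixes this element. -/
noncomputable def exoticForm :
    CyclicAlgebra k q × k →ₗ[k] CyclicAlgebra k q × k →ₗ[k] k :=
  LinearMap.mk₂ k (fun x y => middleCoeff k q (x.1 * (data k q).conj y.1) + x.2 * y.2)
    (fun x x' y => by simp only [Prod.fst_add, Prod.snd_add, add_mul, map_add]; ring)
    (fun c x y => by
      simp only [Prod.smul_fst, Prod.smul_snd, smul_mul_assoc, map_smul, smul_eq_mul]; ring)
    (fun x y y' => by simp only [Prod.fst_add, Prod.snd_add, mul_add, map_add]; ring)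
    (fun c x y => by
      simp only [Prod.smul_fst, Prod.smul_snd, conj_smul, mul_smul_comm, map_smul, smul_eq_mul]
      ring)

theorem exoticForm_apply (x y : CyclicAlgebra k q × k) :
    exoticForm k q x y = middleCoeff k q (x.1 * (data k q).conj y.1) + x.2 * y.2 := rfl

variable [CharP k 2] [IsQuaternionParameter q]

theorem middleCoeff_conj_mul_one_add_X_pow_q (a : CyclicAlgebra k q) :
    middleCoeff k q ((data k q).conj a * (1 + (data k q).X ^ q)) = middleCoeff k q a := by
  rw [← (data k q).θ_pow_q, θ_pow_q_eq_single]
  induction a using MonoidAlgebra.induction_linear with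
  | zero => simp
  | add a b ha hb => rw [map_add, add_mul, map_add, map_add, ha, hb]
  | single g c =>
    classical
    rw [conj_single, MonoidAlgebra.single_mul_single, mul_one, middleCoeff_apply,
      middleCoeff_apply, MonoidAlgebra.coeff_single, MonoidAlgebra.coeff_single,
      Finsupp.single_apply, Finsupp.single_apply, ← sqrtCentral_mul_self]
    congr 1
    rw [eq_iff_iff, inv_mul_eq_iff_eq_mul, mul_left_inj, eq_comm]

theorem exoticTau_fst_mul_conj (x y : CyclicAlgebra k q × k) :
    (exoticTau k q x).1 * (data k q).conj (exoticTau k q y).1 =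
      (data k q).conj (x.1 * (data k q).conj y.1) * (1 + (data k q).X ^ q) +
        (augmentation k q x.1 * augmentation k q y.1 + y.2 * augmentation k q x.1 +
          x.2 * augmentation k q y.1) • (data k q).norm := by
  have hxc' : (data k q).conj x.1 * (exotic k q).c' * (data k q).norm =
      augmentation k q x.1 • (data k q).norm := by
    rw [mul_norm, map_mul, augmentation_conj, augmentation_c', mul_one]
  have hyc : y.1 * (exotic k q).c * (data k q).norm =
      augmentation k q y.1 • (data k q).norm := by
    rw [mul_norm, map_mul, augmentation_c, mul_one]
  have hxy : (data k q).conj x.1 * y.1 * (data k q).norm =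
      (augmentation k q x.1 * augmentation k q y.1) • (data k q).norm := by
    rw [mul_norm, map_mul, augmentation_conj]
  have hnorm : (data k q).norm * (data k q).norm = 0 := by
    rw [mul_norm, augmentation_norm, zero_smul]
  rw [exoticTau_apply, exoticTau_apply]
  dsimp only
  rw [map_add, map_mul, map_mul, conj_smul, conj_conj, (exotic k q).conj_c',
    (data k q).conj_norm]
  calc _ = (data k q).conj x.1 * y.1 * ((exotic k q).c * (exotic k q).c') +
        y.2 • ((data k q).conj x.1 * (exotic k q).c' * (data k q).norm) +
        x.2 • (y.1 * (exotic k q).c * (data k q).norm) +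
        (x.2 * y.2) • ((data k q).norm * (data k q).norm) := by
        simp only [Algebra.smul_def, map_mul]
        ring
    _ = _ := by
        rw [(exotic k q).c_mul_c', mul_add _ _ (data k q).norm, hxc', hyc, hxy, hnorm, smul_zero,
          add_zero, smul_smul, smul_smul, add_smul, add_smul]
        abel

variable {q} {G : Type} [Group G] (e : G ≃* QuaternionGroup q)

theorem exoticForm_theta (x y : CyclicAlgebra k q × k) :
    exoticForm k q ((exoticModule k e).ρ (theta e) x) ((exoticModule k e).ρ (theta e) y) =
      exoticForm k q x y := by
  rw [← cyclicAction_θ, cyclicAction_exoticModule, cyclicAction_exoticModule, exoticForm_apply,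
    exoticForm_apply]
  dsimp only
  rw [map_mul (data k q).conj, (data k q).conj_θ, augmentation_θ, one_mul, one_mul,
    mul_mul_mul_comm, (data k q).θ_mul_θ', one_mul]

theorem exoticForm_tau (x y : CyclicAlgebra k q × k) :
    exoticForm k q ((exoticModule k e).ρ (tau e) x) ((exoticModule k e).ρ (tau e) y) =
      exoticForm k q x y := by
  rw [exoticModule_tau, exoticModule_tau, exoticForm_apply, exoticTau_fst_mul_conj, map_add,
    middleCoeff_conj_mul_one_add_X_pow_q, map_smul, middleCoeff_apply k q (data k q).norm,
    norm_coeff, exoticTau_apply, exoticTau_apply, exoticForm_apply, smul_eq_mul]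
  linear_combination (augmentation k q x.1 * augmentation k q y.1 +
    y.2 * augmentation k q x.1 + x.2 * augmentation k q y.1) * CharTwo.two_eq_zero (R := k)

open scoped TensorProduct in
theorem isStablyIso_exoticModule_tensor_self :
    IsStablyIso (exoticModule k e ⊗ exoticModule k e) (Rep.trivial k G k) := by
  have hz := detectsProjectivity_centralElement k e
  have hL := isEndotrivial_exoticModule (k := k) e
  let B : (CyclicAlgebra k q × k) ⊗[k] (CyclicAlgebra k q × k) →ₗ[k] k :=
    TensorProduct.lift (exoticForm k q)
  have hB (g : G) (hg : ∀ x y : CyclicAlgebra k q × k,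
      exoticForm k q ((exoticModule k e).ρ g x) ((exoticModule k e).ρ g y) = exoticForm k q x y)
      (t : (CyclicAlgebra k q × k) ⊗[k] (CyclicAlgebra k q × k)) :
      B ((exoticModule k e ⊗ exoticModule k e).ρ g t) = (Rep.trivial k G k).ρ g (B t) := by
    rw [Rep.trivial_ρ_apply]
    induction t using TensorProduct.induction_on with
    | zero => rw [map_zero]
    | add a b ha hb => rw [map_add, map_add, ha, hb, map_add]
    | tmul x y => exact hg x y
  let f : exoticModule k e ⊗ exoticModule k e ⟶ Rep.trivial k G k :=
    equivariantHom (M := exoticModule k e ⊗ exoticModule k e) B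
      (intertwines_of_theta_of_tau e (exoticModule k e ⊗ exoticModule k e).ρ
        (Rep.trivial k G k).ρ B (hB _ (exoticForm_theta k e)) (hB _ (exoticForm_tau k e)))
  have hgen := (isHomologyGenerator_exoticModule (k := k) e).tensor hz.toIsCentralInvolution
    (isHomologyGenerator_exoticModule e)
  refine ((hL.tensor hz hL).isStablyIso_iff hz hz.isEndotrivial_trivial).mpr
    ⟨f, _, hgen.differential_eq_zero, fun y hy => ?_⟩
  rw [differential_trivial, LinearMap.zero_apply] at hy
  change exoticForm k q (0, 1) (0, 1) = 0 at hy
  rw [exoticForm_apply, zero_mul, map_zero, zero_add, one_mul] at hy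
  exact one_ne_zero hy

end InvariantForm

/-! ### Classification of endotrivial modules -/

section ProjectiveSubmodule

variable {k : Type} [Field k] [CharP k 2] {G : Type} [Group G] {z : G}
  {S : ShortComplex (Rep.{0} k G)}

theorem IsHomologyGenerator.of_hasTrivialHomology_X₁ (hz : IsCentralInvolution z)
    (hS : S.ShortExact) (h₁ : HasTrivialHomology z S.X₁) {b : S.X₂.V}
    (hb : IsHomologyGenerator z S.X₂ b) : IsHomologyGenerator z S.X₃ (S.g.hom b) := by
  refine ⟨by rw [← hom_differential, hb.differential_eq_zero, map_zero], fun y hy => ?_,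
    fun c hc => ?_⟩
  · obtain ⟨b', rfl⟩ := surjective_g hS y
    obtain ⟨a, ha⟩ := exists_f_apply_eq hS (b := b - differential z S.X₂ b')
      (by rw [map_sub, hy, hom_differential, sub_self])
    obtain ⟨a', rfl⟩ := h₁ a (eq_zero_of_f_apply_eq_zero hS (by
      rw [hom_differential, ha, map_sub, hb.differential_eq_zero, hz.differential_differential,
        sub_zero]))
    refine hb.ne_differential (S.f.hom a' + b') ?_
    rw [map_add, ← hom_differential, ha, sub_add_cancel]
  · obtain ⟨b', rfl⟩ := surjective_g hS c
    obtain ⟨a, ha⟩ := exists_f_apply_eq_differential hS hc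
    obtain ⟨a', rfl⟩ := h₁ a (differential_eq_zero_of_f_apply_eq hz hS ha)
    obtain ⟨c, y, hy⟩ := hb.exists_eq (b' - S.f.hom a')
      (by rw [map_sub, ← hom_differential S.f, ha, sub_self])
    refine ⟨c, S.g.hom y, ?_⟩
    rw [← map_smul, ← hom_differential, ← map_add, ← hy, map_sub, g_f_apply, sub_zero]

theorem _root_.IsEndotrivial.of_projective_X₁ (hz : DetectsProjectivity z k) (hS : S.ShortExact)
    [Projective S.X₁] (h : IsEndotrivial S.X₂) :
    IsEndotrivial S.X₃ ∧ IsStablyIso S.X₂ S.X₃ := by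
  have := hz.finite
  have := h.1
  obtain ⟨b, hb⟩ := (hz.isEndotrivial_iff.mp h).2
  have hgb := hb.of_hasTrivialHomology_X₁ hz.toIsCentralInvolution hS
    (hz.hasTrivialHomology_of_projective _)
  have h₃ : IsEndotrivial S.X₃ := hz.isEndotrivial_iff.mpr ⟨finiteDimensional_X₃ hS, _, hgb⟩
  exact ⟨h₃, (h.isStablyIso_iff hz h₃).mpr
    ⟨S.g, b, hb.differential_eq_zero, hgb.ne_differential⟩⟩

end ProjectiveSubmodule

section Even
open CyclicAlgebra

variable {k : Type} [Field k] {q : ℕ} {G : Type} [Group G] (e : G ≃* QuaternionGroup q)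
  {N : Rep.{0} k G}

theorem rho_tau_twistEquiv (v : N.V) :
    N.ρ (tau (twistEquiv e)) v = cyclicAction e N (data k q).θ' (N.ρ (tau e) v) := by
  have hθ (m : N.V) : cyclicAction e N (data k q).θ' (N.ρ (theta e) m) = m := by
    rw [← cyclicAction_θ, ← Module.End.mul_apply, ← map_mul, mul_comm (data k q).θ',
      (data k q).θ_mul_θ', map_one, Module.End.one_apply]
  rw [← hθ (N.ρ (tau (twistEquiv e)) v), ← Module.End.mul_apply (N.ρ _), ← map_mul,
    tau_twistEquiv, mul_inv_cancel_left]

variable [CharP k 2] [IsQuaternionParameter q]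

theorem hasExoticClass_twistEquiv_iff : HasExoticClass (twistEquiv e) N ↔
    letI := cyclicModule e N
    (exotic k q).HasExoticClass ((data k q).twist (tauOperator e N)) := by
  simp only [hasExoticClass_iff, rho_tau_twistEquiv, centralElement_twistEquiv,
    ← cyclicAction_X_pow_q]
  rfl

theorem IsEven.classification_of_sum_rho_apply_eq_zero [Fintype G] (hN : IsEndotrivial N)
    (h : IsEven e N) (hsum : ∀ m, ∑ g, N.ρ g m = 0) :
    IsStablyIso N (Rep.trivial k G k) ∨ HasSecondaryClass e N ∨
      IsStablyIso N (exoticModule k e) ∨ IsStablyIso N (exoticModule k (twistEquiv e)) := by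
  obtain ⟨m, hm, hne⟩ := (isEven_iff e).mp h
  have hgen := isHomologyGenerator_of_cyclicAction_X_eq_zero e hN hm hne
  let _ := cyclicModule e N
  refine ((hgen.isEvenGenerator e hm).classification (exotic k q) (conj_algebraMap k q)
    (isTauOperator_tauOperator e N) (normVanishes_tauOperator e N hsum)).imp (fun hτ => ?_)
    (Or.imp_right (Or.imp (fun hE => ?_) fun hE => ?_))
  · exact ((hasInvariantClass_iff_isStablyIso e hN).mp
      ((hasInvariantClass_iff e).mpr ⟨m, hm, hτ, hne⟩)).symm
  · exact (HasExoticClass.isStablyIso e hN hE).symm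
  · exact (((hasExoticClass_twistEquiv_iff e).mpr hE).isStablyIso (twistEquiv e) hN).symm

theorem IsEven.classification (hN : IsEndotrivial N) (h : IsEven e N) :
    IsStablyIso N (Rep.trivial k G k) ∨ HasSecondaryClass e N ∨
      IsStablyIso N (exoticModule k e) ∨ IsStablyIso N (exoticModule k (twistEquiv e)) := by
  have hz := detectsProjectivity_centralElement k e
  have := hz.finite
  cases nonempty_fintype G
  induction hn : Module.finrank k N.V using Nat.strong_induction_on generalizing N with
  | _ n ih =>
  by_cases hsum : ∀ m, ∑ g, N.ρ g m = 0
  · exact h.classification_of_sum_rho_apply_eq_zero e hN hsum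
  push Not at hsum
  obtain ⟨m, hm⟩ := hsum
  have hS := shortExact_cokernel _ (injective_leftRegularHom e hm)
  have := hN.1
  have hlt : Module.finrank k (cokernel (Rep.leftRegularHom N m)).V < n :=
    hn ▸ finrank_X₃_lt hS (a := (MonoidAlgebra.single 1 1 : MonoidAlgebra k G)) (by simp)
  obtain ⟨hC, hNC⟩ := hN.of_projective_X₁ hz hS
  exact (ih _ hlt hC (h.of_isStablyIso e hN hC hNC) rfl).imp hNC.trans
    (Or.imp (HasSecondaryClass.of_isStablyIso e hC hN hNC.symm) (Or.imp hNC.trans hNC.trans))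

end Even

theorem isStablyIso_trivial_tensor {k G : Type} [Field k] [Group G] (N : Rep.{0} k G) :
    IsStablyIso (Rep.trivial k G k ⊗ N) N :=
  .of_iso (λ_ N)

section TensorExotic

variable {k : Type} [Field k] [CharP k 2] {q : ℕ} [IsQuaternionParameter q] {G : Type} [Group G]
  (e : G ≃* QuaternionGroup q) {M : Rep.{0} k G}

theorem isStablyIso_tensor_exoticModule_tensor_exoticModule (hM : IsEndotrivial M) :
    IsStablyIso ((M ⊗ exoticModule k e) ⊗ exoticModule k e) M := by
  have hz := detectsProjectivity_centralElement k e
  have hL := isEndotrivial_exoticModule (k := k) e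
  have hLL := (isStablyIso_exoticModule_tensor_self k e).tensor hz (hL.tensor hz hL)
    hz.isEndotrivial_trivial hM
  exact ((IsStablyIso.of_iso (α_ M _ _ ≪≫ β_ M _)).trans hLL).trans (isStablyIso_trivial_tensor M)

theorem HasSecondaryClass.not_hasSecondaryClass_tensor_exoticModule (hM : IsEndotrivial M)
    (h : HasSecondaryClass e M) : ¬ HasSecondaryClass e (M ⊗ exoticModule k e) := by
  intro hML
  have hz := detectsProjectivity_centralElement k e
  have hL := isEndotrivial_exoticModule (k := k) e
  have := hL.1
  obtain ⟨M₁, M₂, h₁, h₂, hM₁, hM₂⟩ := h.exists_isSyzygy_isSyzygy e hM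
  have hshift : IsStablyIso (M₂ ⊗ exoticModule k e) M₂ :=
    ((h₂.tensor hz _).isStablyIso_iff hz h₂ (hM₁.tensor hz hL) hM₁).mpr
      (((h₁.tensor hz _).isStablyIso_iff hz h₁ (hM.tensor hz hL) hM).mpr
        (hML.isStablyIso e (hM.tensor hz hL) hM h))
  have hM₂L := hM₂.tensor hz hz.isEndotrivial_trivial ((h₂.isEndotrivial_iff hz).mpr hM₁) hL
  exact not_isStablyIso_exoticModule_trivial e
    ((((isStablyIso_trivial_tensor _).symm.trans hM₂L).trans hshift).trans hM₂.symm)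

theorem HasSecondaryClass.isStablyIso_tensor_exoticModule (hM : IsEndotrivial M)
    (h : HasSecondaryClass e M) :
    IsStablyIso (M ⊗ exoticModule k e) (exoticModule k (twistEquiv e)) := by
  have hz := detectsProjectivity_centralElement k e
  have hL := isEndotrivial_exoticModule (k := k) e
  have hML := hM.tensor hz hL
  have hcancel := (isStablyIso_tensor_exoticModule_tensor_exoticModule e hM).symm
  have heven := (h.isEven e).tensor e hM hL (isEven_exoticModule e)
  rcases heven.classification e hML with h₀ | h₂ | hE | hE'
  · have hML' : IsStablyIso M (exoticModule k e) :=
      (hcancel.trans (h₀.tensor hz hML hz.isEndotrivial_trivial hL)).trans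
        (isStablyIso_trivial_tensor _)
    exact absurd (h.of_isStablyIso e hM hL hML') (not_hasSecondaryClass_exoticModule e)
  · exact absurd h₂ (h.not_hasSecondaryClass_tensor_exoticModule e hM)
  · have hM₀ : IsStablyIso M (Rep.trivial k G k) :=
      (hcancel.trans (hE.tensor hz hML hL hL)).trans (isStablyIso_exoticModule_tensor_self k e)
    exact absurd (h.of_isStablyIso e hM hz.isEndotrivial_trivial hM₀)
      (not_hasSecondaryClass_trivial e)
  · exact hE'

end TensorExotic

/-- `M` is the start `k`, `Ω k`, `Ω² k`, `Ω³ k` of a sequence of iterated syzygies of the trivial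
module. -/
structure IsSyzygySequence {k G : Type} [Field k] [Group G] (M : Fin 4 → Rep.{0} k G) : Prop where
  nonempty_iso_trivial : Nonempty (M 0 ≅ Rep.trivial k G k)
  isSyzygy (i : Fin 3) : IsSyzygy (M i.succ) (M i.castSucc)

namespace IsSyzygySequence

variable {k : Type} [Field k] [CharP k 2] {q : ℕ} [IsQuaternionParameter q] {G : Type} [Group G]
  (e : G ≃* QuaternionGroup q) {M : Fin 4 → Rep.{0} k G} (hM : IsSyzygySequence M)
include e hM

theorem isEndotrivial (i : Fin 4) : IsEndotrivial (M i) := by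
  have hz := detectsProjectivity_centralElement k e
  induction i using Fin.induction with
  | zero =>
    obtain ⟨i⟩ := hM.nonempty_iso_trivial
    exact hz.isEndotrivial_trivial.of_iso i.symm
  | succ i hi => exact ((hM.isSyzygy i).isEndotrivial_iff hz).mpr hi

theorem hasInvariantClass_zero : HasInvariantClass e (M 0) :=
  hM.nonempty_iso_trivial.elim fun i =>
    (hasInvariantClass_iff_isStablyIso e (hM.isEndotrivial e 0)).mpr (.of_iso i.symm)

theorem hasSecondaryClass_two : HasSecondaryClass e (M 2) :=
  (hM.isSyzygy 1).hasSecondaryClass e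
    ((hM.isSyzygy 0).hasFirstSyzygyClass e (hM.hasInvariantClass_zero e))

theorem isOdd_one : IsOdd e (M 1) :=
  (hM.isSyzygy 0).isOdd e ((hM.hasInvariantClass_zero e).isEven e)

theorem isOdd_three : IsOdd e (M 3) :=
  (hM.isSyzygy 2).isOdd e ((hM.hasSecondaryClass_two e).isEven e)

theorem not_isStablyIso_of_isEven {N : Rep.{0} k G} (hN : IsEndotrivial N) (h : IsEven e N)
    {i : Fin 4} (hi : IsOdd e (M i)) : ¬ IsStablyIso N (M i) := fun hNi =>
  (h.of_isStablyIso e hN (hM.isEndotrivial e i) hNi).not_isOdd e (hM.isEndotrivial e i) hi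

theorem not_isStablyIso_zero_two : ¬ IsStablyIso (M 0) (M 2) := fun h =>
  not_hasSecondaryClass_trivial (k := k) e <| hM.nonempty_iso_trivial.elim fun i =>
    (hM.hasSecondaryClass_two e).of_isStablyIso e (hM.isEndotrivial e 2)
      (detectsProjectivity_centralElement k e).isEndotrivial_trivial (h.symm.trans (.of_iso i))

theorem not_isStablyIso_one_three : ¬ IsStablyIso (M 1) (M 3) := fun h =>
  hM.not_isStablyIso_zero_two e <| ((hM.isSyzygy 0).isStablyIso_iff
    (detectsProjectivity_centralElement k e) (hM.isSyzygy 2) (hM.isEndotrivial e 0)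
    (hM.isEndotrivial e 2)).mp h

theorem not_isStablyIso {i j : Fin 4} (hij : i ≠ j) : ¬ IsStablyIso (M i) (M j) := by
  have h₀ {j} := hM.not_isStablyIso_of_isEven e (i := j) (hM.isEndotrivial e 0)
    ((hM.hasInvariantClass_zero e).isEven e)
  have h₂ {j} := hM.not_isStablyIso_of_isEven e (i := j) (hM.isEndotrivial e 2)
    ((hM.hasSecondaryClass_two e).isEven e)
  wlog hlt : i < j generalizing i j
  · exact fun h => this hij.symm (hij.lt_or_gt.resolve_left hlt) h.symm
  match i, j, hlt with
  | 0, 1, _ => exact h₀ (hM.isOdd_one e)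
  | 0, 2, _ => exact hM.not_isStablyIso_zero_two e
  | 0, 3, _ => exact h₀ (hM.isOdd_three e)
  | 1, 2, _ => exact fun h => h₂ (hM.isOdd_one e) h.symm
  | 1, 3, _ => exact hM.not_isStablyIso_one_three e
  | 2, 3, _ => exact h₂ (hM.isOdd_three e)
  | 3, j, hlt => exact absurd hlt (Fin.le_last j).not_gt

theorem not_isStablyIso_exoticModule : ∀ i : Fin 4, ¬ IsStablyIso (exoticModule k e) (M i)
  | 0 => fun h => hM.nonempty_iso_trivial.elim fun i =>
      not_isStablyIso_exoticModule_trivial e (h.trans (.of_iso i))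
  | 1 => hM.not_isStablyIso_of_isEven e (isEndotrivial_exoticModule e) (isEven_exoticModule e)
      (hM.isOdd_one e)
  | 2 => fun h => not_hasSecondaryClass_exoticModule (k := k) e
      ((hM.hasSecondaryClass_two e).of_isStablyIso e (hM.isEndotrivial e 2)
        (isEndotrivial_exoticModule e) h.symm)
  | 3 => hM.not_isStablyIso_of_isEven e (isEndotrivial_exoticModule e) (isEven_exoticModule e)
      (hM.isOdd_three e)

variable {N : Rep.{0} k G} (hN : IsEndotrivial N)
include hN

theorem exists_isStablyIso_of_isEven (h : IsEven e N) : ∃ i : Fin 3,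
    IsStablyIso N (M i.castSucc) ∨ IsStablyIso N (M i.castSucc ⊗ exoticModule k e) := by
  have hM₂ := hM.isEndotrivial e 2
  obtain ⟨i⟩ := hM.nonempty_iso_trivial
  have hM₀L : IsStablyIso (M 0 ⊗ exoticModule k e) (exoticModule k e) :=
    .of_iso (whiskerRightIso i _ ≪≫ λ_ _)
  rcases h.classification e hN with h₀ | h₂ | hE | hE'
  · exact ⟨0, .inl (h₀.trans (.of_iso i.symm))⟩
  · exact ⟨2, .inl (h₂.isStablyIso e hN hM₂ (hM.hasSecondaryClass_two e))⟩
  · exact ⟨0, .inr (hE.trans hM₀L.symm)⟩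
  · exact ⟨2, .inr (hE'.trans
      ((hM.hasSecondaryClass_two e).isStablyIso_tensor_exoticModule e hM₂).symm)⟩

theorem exists_isStablyIso : ∃ i : Fin 4,
    IsStablyIso N (M i) ∨ IsStablyIso N (M i ⊗ exoticModule k e) := by
  have hz := detectsProjectivity_centralElement k e
  have hL := isEndotrivial_exoticModule (k := k) e
  rcases hN.isEven_or_isOdd e with heven | hodd
  · exact (hM.exists_isStablyIso_of_isEven e hN heven).imp' _ fun _ h => h
  have := hN.1
  have := hL.1
  obtain ⟨K, hNK⟩ := hz.exists_isSyzygy_of N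
  have hK := (hNK.isEndotrivial_iff hz).mp hN
  have hKeven := (hK.isEven_or_isOdd e).resolve_right fun h =>
    (hNK.isEven e h).not_isOdd e hN hodd
  obtain ⟨i, hi⟩ := hM.exists_isStablyIso_of_isEven e hK hKeven
  have hMi := hM.isEndotrivial e i.castSucc
  exact ⟨i.succ, hi.imp (hNK.isStablyIso_iff hz (hM.isSyzygy i) hK hMi).mpr
    (hNK.isStablyIso_iff hz ((hM.isSyzygy i).tensor hz _) hK (hMi.tensor hz hL)).mpr⟩

end IsSyzygySequence

end EndotrivialQuaternion

open EndotrivialQuaternion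

/-- Let `k` be any field of characteristic `2`, `n ≥ 4`, and `G = Q_{2^n}` the generalized
quaternion group of order `2^n` (`QuaternionGroup (2^(n-2))`, of order `4 * 2^(n-2) = 2^n`).
If `M 0` is the trivial module and each `M (i+1)` is a syzygy of `M i`, then the `M i` are
pairwise non-stably-isomorphic endotrivial modules, and there is a finite-dimensional
endotrivial module `L` with `L ⊗ L` stably trivial, `L` not stably isomorphic to any `M i`,
such that every endotrivial module is stably isomorphic to some `M i` or some `M i ⊗ L`;
hence `T(Q_{2^n}) = Pic(StMod(kQ_{2^n})) ≅ C_2 ⊕ C_4`. -/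
theorem endotrivial_group_of_generalized_quaternion
    (k : Type) [Field k] [CharP k 2] (n : ℕ) (hn : 4 ≤ n)
    (G : Type) [Group G] (e : G ≃* QuaternionGroup (2 ^ (n - 2)))
    (M : Fin 4 → Rep k G)
    (hM0 : Nonempty (M 0 ≅ Rep.trivial k G k))
    (hseq : ∀ i : Fin 3, ∃ (P : Rep k G) (_ : Projective P) (_ : FiniteDimensional k P.V)
      (f : M i.succ ⟶ P) (g : P ⟶ M i.castSucc) (w : f ≫ g = 0),
      (ShortComplex.mk f g w).ShortExact) :
    (∀ i : Fin 4, IsEndotrivial (M i)) ∧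
      (∀ i j : Fin 4, i ≠ j → ¬ IsStablyIso (M i) (M j)) ∧
      ∃ L : Rep k G, IsEndotrivial L ∧
        IsStablyIso (L ⊗ L) (Rep.trivial k G k) ∧
        (∀ i : Fin 4, ¬ IsStablyIso L (M i)) ∧
        (∀ N : Rep k G, IsEndotrivial N →
          ∃ i : Fin 4, IsStablyIso N (M i) ∨ IsStablyIso N (M i ⊗ L)) := by
  have : IsQuaternionParameter (2 ^ (n - 2)) := ⟨n - 4, by congr; omega⟩
  have hM : IsSyzygySequence M := ⟨hM0, hseq⟩
  exact ⟨hM.isEndotrivial e, fun i j => hM.not_isStablyIso e, exoticModule k e,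
    isEndotrivial_exoticModule e, isStablyIso_exoticModule_tensor_self k e,
    hM.not_isStablyIso_exoticModule e, fun N => hM.exists_isStablyIso e⟩
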